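/- arXiv:1510.06964 — 2 statements merged into one kernel-verified Lean document; each statement's English description precedes it below -/
import Mathlib

section
/- For every integer k ≥ 4, if G is a connected non-complete k-regular simple graph, then any two proper k-colourings of G are Kempe equivalent, i.e., the set of k-colourings of G forms a single Kempe class. -/
open SimpleGraph
open scoped Classical

variable {V : Type*}

/-- A proper `k`-colouring of `G`. -/
def IsProperColoring (G : SimpleGraph V) (k : ℕ) (c : V → Fin k) : Prop :=
  ∀ ⦃u v : V⦄, G.Adj u v → c u ≠ c v

/-- `c'` is obtained from `c` by a single Kempe change: the colours `a` and `b` are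
swapped on the connected component (of the subgraph induced by the vertices coloured
`a` or `b`) containing `v0`, and all other vertices keep their colour. -/

def KempeStep (G : SimpleGraph V) (k : ℕ) (c c' : V → Fin k) : Prop :=
  ∃ a b : Fin k, ∃ v0 : {x : V | c x = a ∨ c x = b},
    ∀ v : V, c' v =
      if h : c v = a ∨ c v = b then
        if (G.induce {x : V | c x = a ∨ c x = b}).Reachable v0 ⟨v, h⟩
          then Equiv.swap a b (c v) else c v
      else c v

/-- Two colourings are Kempe equivalent if one is obtained from the other by a finite
sequence of Kempe changes. -/
def KempeEquiv (G : SimpleGraph V) (k : ℕ) (c c' : V → Fin k) : Prop :=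
  Relation.ReflTransGen (KempeStep G k) c c'

/-- The set of all proper `k`-colourings of `G` forms a single Kempe class. -/
def KempeClass (G : SimpleGraph V) (k : ℕ) : Prop :=
  ∀ c c' : V → Fin k, IsProperColoring G k c → IsProperColoring G k c' →
    KempeEquiv G k c c'

/-- `G` is `d`-degenerate: every nonempty set of vertices contains a vertex with at
most `d` neighbours inside the set. -/
def Degenerate (G : SimpleGraph V) (d : ℕ) : Prop :=
  ∀ S : Set V, S.Nonempty → ∃ v ∈ S, (S ∩ G.neighborSet v).ncard ≤ d

/-- `G` is 3-connected: more than 3 vertices, and deleting any at most 2 vertices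
leaves it connected. -/
def ThreeConnected [Fintype V] (G : SimpleGraph V) : Prop :=
  3 < Fintype.card V ∧ ∀ S : Set V, S.ncard ≤ 2 → (G.induce Sᶜ).Connected

/-- Swapping colours on a closed set. -/
noncomputable def swp {k : ℕ} (c : V → Fin k) (a b : Fin k) (S : Set V) : V → Fin k :=
  fun v => if v ∈ S then Equiv.swap a b (c v) else c v

/-- A swap of two colours on a set of vertices avoiding `F`, closed in the two-coloured subgraph. -/
def Stp (G : SimpleGraph V) {k : ℕ} (F : Finset V) (c c' : V → Fin k) : Prop :=
  ∃ a b : Fin k, ∃ S : Set V, (∀ v ∈ S, v ∉ F) ∧ (∀ v ∈ S, c v = a ∨ c v = b) ∧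
    (∀ v ∈ S, ∀ u, G.Adj v u → (c u = a ∨ c u = b) → u ∈ S) ∧
    ∀ v, c' v = swp c a b S v

def KE (G : SimpleGraph V) {k : ℕ} (F : Finset V) (c c' : V → Fin k) : Prop :=
  Relation.ReflTransGen (Stp G F) c c'

theorem swap_mem {k : ℕ} {a b x : Fin k} :
    (Equiv.swap a b x = a ∨ Equiv.swap a b x = b) ↔ (x = a ∨ x = b) := by
  rw [Equiv.swap_apply_def]; split_ifs <;> simp_all

theorem Stp.iff_mem {k : ℕ} {c c' : V → Fin k} {a b : Fin k} {S : Set V}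
    (h : ∀ v, c' v = swp c a b S v) (v : V) :
    (c' v = a ∨ c' v = b) ↔ (c v = a ∨ c v = b) := by
  rw [h]; unfold swp; split_ifs
  · exact swap_mem
  · rfl

theorem Stp.symm {G : SimpleGraph V} {k : ℕ} {F : Finset V} {c c' : V → Fin k}
    (h : Stp G F c c') : Stp G F c' c := by
  obtain ⟨a, b, S, h1, h2, h3, h4⟩ := h
  have key := Stp.iff_mem h4
  refine ⟨a, b, S, h1, fun v hv => (key v).2 (h2 v hv), fun v hv u hu hc => h3 v hv u hu ((key u).1 hc), ?_⟩
  intro v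
  unfold swp; rw [h4]; unfold swp; split_ifs <;> simp

theorem Stp.proper {G : SimpleGraph V} {k : ℕ} {F : Finset V} {c c' : V → Fin k}
    (h : Stp G F c c') (hp : IsProperColoring G k c) : IsProperColoring G k c' := by
  obtain ⟨a, b, S, h1, h2, h3, h4⟩ := h
  intro u v huv
  have hne := hp huv
  have e1 := h3 u
  have e2 := h3 v
  have s1 := h2 u
  have s2 := h2 v
  rw [h4, h4]; unfold swp
  by_cases hu : u ∈ S <;> by_cases hv : v ∈ S
  · simpa [hu, hv] using hne
  · have := fun h => hv (e1 hu v huv h)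
    simp only [hu, hv, if_true, if_false]
    intro h
    have := (swap_mem (a := a) (b := b)).2 (s1 hu)
    rw [h] at this; tauto
  · have := fun h => hu (e2 hv u huv.symm h)
    simp only [hu, hv, if_true, if_false]
    intro h
    have := (swap_mem (a := a) (b := b)).2 (s2 hv)
    rw [← h] at this; tauto
  · simpa [hu, hv] using hne

theorem Stp.eqOn {G : SimpleGraph V} {k : ℕ} {F : Finset V} {c c' : V → Fin k}
    (h : Stp G F c c') : ∀ v ∈ F, c' v = c v := by
  obtain ⟨a, b, S, h1, h2, h3, h4⟩ := h
  intro v hv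
  rw [h4, swp, if_neg (fun h => h1 v h hv)]

theorem Stp.mono {G : SimpleGraph V} {k : ℕ} {F F' : Finset V} {c c' : V → Fin k}
    (h : Stp G F c c') (hF : F' ⊆ F) : Stp G F' c c' := by
  obtain ⟨a, b, S, h1, h2, h3, h4⟩ := h
  exact ⟨a, b, S, fun v hv h => h1 v hv (hF h), h2, h3, h4⟩

theorem KE.symm {G : SimpleGraph V} {k : ℕ} {F : Finset V} {c c' : V → Fin k}
    (h : KE G F c c') : KE G F c' c := by
  induction h with
  | refl => exact .refl
  | tail _ h ih => exact Relation.ReflTransGen.head h.symm ih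

theorem KE.trans {G : SimpleGraph V} {k : ℕ} {F : Finset V} {c c' c'' : V → Fin k}
    (h : KE G F c c') (h' : KE G F c' c'') : KE G F c c'' := Relation.ReflTransGen.trans h h'

protected theorem KE.rfl {G : SimpleGraph V} {k : ℕ} {F : Finset V} {c : V → Fin k} :
    KE G F c c := Relation.ReflTransGen.refl

theorem Stp.ke {G : SimpleGraph V} {k : ℕ} {F : Finset V} {c c' : V → Fin k}
    (h : Stp G F c c') : KE G F c c' := Relation.ReflTransGen.single h

theorem KE.proper {G : SimpleGraph V} {k : ℕ} {F : Finset V} {c c' : V → Fin k}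
    (h : KE G F c c') (hp : IsProperColoring G k c) : IsProperColoring G k c' := by
  induction h with
  | refl => exact hp
  | tail _ h ih => exact h.proper ih

theorem KE.eqOn {G : SimpleGraph V} {k : ℕ} {F : Finset V} {c c' : V → Fin k}
    (h : KE G F c c') : ∀ v ∈ F, c' v = c v := by
  induction h with
  | refl => exact fun _ _ => Eq.refl _
  | tail _ h ih => exact fun v hv => (h.eqOn v hv).trans (ih v hv)

theorem KE.mono {G : SimpleGraph V} {k : ℕ} {F F' : Finset V} {c c' : V → Fin k}
    (h : KE G F c c') (hF : F' ⊆ F) : KE G F' c c' := by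
  induction h with
  | refl => exact KE.rfl
  | tail _ h ih => exact ih.trans (h.mono hF).ke

theorem KE.zero {G : SimpleGraph V} {k : ℕ} {F : Finset V} {c c' : V → Fin k}
    (h : KE G F c c') : KE G ∅ c c' := h.mono (by simp)

theorem swapset_kempe [Finite V] {G : SimpleGraph V} {k : ℕ} (a b : Fin k) (n : ℕ) :
    ∀ (S : Set V) (c c' : V → Fin k), S.ncard = n → (∀ v ∈ S, c v = a ∨ c v = b) →
    (∀ v ∈ S, ∀ u, G.Adj v u → (c u = a ∨ c u = b) → u ∈ S) →
    (∀ v, c' v = swp c a b S v) → KempeEquiv G k c c' := by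
  induction n using Nat.strong_induction_on with
  | _ n ih =>
  intro S c c' hn h2 h3 h4
  rcases S.eq_empty_or_nonempty with rfl | ⟨v0, hv0⟩
  · have : c' = c := by funext v; simp [h4, swp]
    subst this; exact .refl
  let H := G.induce {x : V | c x = a ∨ c x = b}
  let K : Set V := {u | ∃ h : c u = a ∨ c u = b, H.Reachable ⟨v0, h2 v0 hv0⟩ ⟨u, h⟩}
  have hKS : K ⊆ S := by
    rintro u ⟨h, hr⟩
    obtain ⟨p⟩ := hr
    have : ∀ (x y : {x : V | c x = a ∨ c x = b}) (p : H.Walk x y), x.1 ∈ S → y.1 ∈ S := by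
      intro x y p
      induction p with
      | nil => exact id
      | @cons x y z h p ih => exact fun hx => ih (h3 _ hx _ h y.2)
    exact this _ _ p hv0
  have hv0K : v0 ∈ K := ⟨h2 v0 hv0, .refl _⟩
  let c1 : V → Fin k := swp c a b K
  have hc1 : ∀ v, c1 v = swp c a b K v := fun _ => Eq.refl _
  have key := Stp.iff_mem hc1
  have hstep : KempeStep G k c c1 := by
    refine ⟨a, b, ⟨v0, h2 v0 hv0⟩, fun v => ?_⟩
    rw [hc1, swp]
    by_cases h : c v = a ∨ c v = b
    · rw [dif_pos h]
      congr 1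
      simp [K, h, H]
    · rw [dif_neg h, if_neg]
      rintro ⟨h', _⟩; exact h h'
  refine Relation.ReflTransGen.head hstep ?_
  refine ih (S \ K).ncard ?_ (S \ K) c1 c' rfl ?_ ?_ ?_
  · rw [← hn]
    exact Set.ncard_lt_ncard ⟨Set.sdiff_subset, fun h => (h hv0).2 hv0K⟩ (Set.toFinite _)
  · intro v hv; exact (key v).2 (h2 v hv.1)
  · intro v hv u huv hu
    refine ⟨h3 v hv.1 u huv ((key u).1 hu), fun hK => hv.2 ?_⟩
    obtain ⟨h, hr⟩ := hK
    refine ⟨h2 v hv.1, hr.trans (SimpleGraph.Adj.reachable ?_)⟩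
    exact huv.symm
  · intro v
    rw [h4, swp, swp, hc1, swp]
    by_cases hS : v ∈ S <;> by_cases hK : v ∈ K
    · simp [hS, hK]
    · simp [hS, hK]
    · exact absurd (hKS hK) hS
    · simp [hS, hK]

theorem KE.kempe [Finite V] {G : SimpleGraph V} {k : ℕ} {F : Finset V} {c c' : V → Fin k}
    (h : KE G F c c') : KempeEquiv G k c c' := by
  induction h with
  | refl => exact .refl
  | tail _ h ih =>
    obtain ⟨a, b, S, h1, h2, h3, h4⟩ := h
    exact ih.trans (swapset_kempe a b _ S _ _ (Eq.refl _) h2 h3 h4)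

/-- Recolouring a single vertex. -/
theorem Stp.single {G : SimpleGraph V} {k : ℕ} {F : Finset V} {c : V → Fin k}
    (hp : IsProperColoring G k c) (r : V) (hr : r ∉ F) (f : Fin k) (hf : ∀ u, G.Adj r u → c u ≠ f) :
    Stp G F c (Function.update c r f) := by
  refine ⟨c r, f, {r}, by simpa using hr, by simp, ?_, ?_⟩
  · rintro v rfl u huv (h | h)
    · exact absurd h.symm (hp huv)
    · exact absurd h (hf u huv)
  · intro v
    by_cases h : v = r
    · subst h; simp [swp]
    · simp [h, swp]

theorem Stp.swp {G : SimpleGraph V} {k : ℕ} {F : Finset V} {c : V → Fin k} (a b : Fin k) (S : Set V)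
    (h1 : ∀ v ∈ S, v ∉ F) (h2 : ∀ v ∈ S, c v = a ∨ c v = b)
    (h3 : ∀ v ∈ S, ∀ u, G.Adj v u → (c u = a ∨ c u = b) → u ∈ S) : Stp G F c (swp c a b S) :=
  ⟨a, b, S, h1, h2, h3, fun _ => Eq.refl _⟩

/-- Global permutations. -/
theorem KE.perm {G : SimpleGraph V} {k : ℕ} (σ : Equiv.Perm (Fin k)) (c : V → Fin k) :
    KE G ∅ c (fun v => σ (c v)) := by
  induction σ using Equiv.Perm.swap_induction_on with
  | one => exact KE.rfl
  | swap_mul f x y _ ih =>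
    refine ih.trans (Stp.ke ⟨x, y, {v | f (c v) = x ∨ f (c v) = y}, by simp, fun v h => h,
      fun v _ u _ h => h, fun v => ?_⟩)
    by_cases h : f (c v) = x ∨ f (c v) = y
    · simp [h, swp]
    · simp only [swp, Set.mem_ofPred_eq, h, if_false, Equiv.Perm.mul_apply]
      push Not at h
      rw [Equiv.swap_apply_of_ne_of_ne h.1 h.2]

noncomputable def nb [Fintype V] (G : SimpleGraph V) (v : V) : Finset V :=
  Finset.univ.filter (fun u => G.Adj v u)

@[simp] theorem mem_nb [Fintype V] {G : SimpleGraph V} {v u : V} : u ∈ nb G v ↔ G.Adj v u := by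
  simp [nb]

noncomputable def wt [Fintype V] (G : SimpleGraph V) {k : ℕ} (F : Finset V) (α : V → Fin k) (v : V) : ℕ :=
  ((nb G v ∩ F).image α).card + (nb G v \ F).card

def iso (G : SimpleGraph V) (r : V) : SimpleGraph V where
  Adj u v := G.Adj u v ∧ u ≠ r ∧ v ≠ r
  symm := ⟨fun _ _ h => ⟨h.1.symm, h.2.2, h.2.1⟩⟩
  loopless := ⟨fun _ h => G.loopless.irrefl _ h.1⟩

structure Slack [Fintype V] (G : SimpleGraph V) {k : ℕ} (F : Finset V) (α : V → Fin k) : Prop where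
  le : ∀ v, v ∉ F → wt G F α v ≤ k
  ex : ∀ T : Set V, T.Nonempty → (∀ v ∈ T, v ∉ F) → (∀ v ∈ T, ∀ u, G.Adj v u → u ∉ F → u ∈ T) →
    ∃ r ∈ T, wt G F α r < k

theorem wt_iso [Fintype V] (G : SimpleGraph V) {k : ℕ} (F : Finset V) (α α' : V → Fin k) (r v : V)
    (hr : r ∉ F) (hv : v ≠ r) (hα : ∀ u ∈ F, α' u = α u) :
    wt (iso G r) (insert r F) α' v + (if G.Adj v r then 1 else 0) = wt G F α v := by
  have h1 : nb (iso G r) v ∩ insert r F = nb G v ∩ F := by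
    ext u
    by_cases h : u = r
    · subst h; simp [iso, hr]
    · simp [iso, h, hv]
  have h2 : nb (iso G r) v \ insert r F = (nb G v \ F).erase r := by
    ext u; simp [iso, hv]; tauto
  have h3 : (nb G v ∩ F).image α' = (nb G v ∩ F).image α := by
    apply Finset.image_congr
    intro u hu
    exact hα u (Finset.mem_inter.1 hu).2
  unfold wt
  rw [h1, h2, h3, add_assoc]
  congr 1
  split_ifs with h
  · rw [Finset.card_erase_add_one]; simp [h, hr]
  · rw [Finset.erase_eq_of_notMem]; simp; simp [h]

theorem Slack.step [Fintype V] {G : SimpleGraph V} {k : ℕ} {F : Finset V} {α : V → Fin k}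
    (h : Slack G F α) (α' : V → Fin k) {r : V} (hr : r ∉ F) (hα : ∀ u ∈ F, α' u = α u) :
    Slack (iso G r) (insert r F) α' := by
  constructor
  · intro v hv
    simp only [Finset.mem_insert, not_or] at hv
    have := wt_iso G F α α' r v hr hv.1 hα
    have := h.le v hv.2
    omega
  · intro T hT hTF hcl
    have hTr : ∀ v ∈ T, v ≠ r ∧ v ∉ F := by
      intro v hv
      have := hTF v hv
      simpa only [Finset.mem_insert, not_or] using this
    by_cases hadj : ∃ v ∈ T, G.Adj v r
    · obtain ⟨v, hv, hvr⟩ := hadj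
      refine ⟨v, hv, ?_⟩
      have := wt_iso G F α α' r v hr (hTr v hv).1 hα
      have := h.le v (hTr v hv).2
      simp only [hvr, if_true] at *
      omega
    · push Not at hadj
      obtain ⟨v, hv, hlt⟩ := h.ex T hT (fun v hv => (hTr v hv).2) (by
        intro v hv u huv hu
        have hur : u ≠ r := by rintro rfl; exact hadj v hv huv
        exact hcl v hv u ⟨huv, (hTr v hv).1, hur⟩ (by simp [hur, hu]))
      refine ⟨v, hv, ?_⟩
      have := wt_iso G F α α' r v hr (hTr v hv).1 hα
      omega

theorem image_le_wt [Fintype V] (G : SimpleGraph V) {k : ℕ} (F : Finset V) (α c : V → Fin k) (v : V)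
    (hα : ∀ u ∈ F, c u = α u) : ((nb G v).image c).card ≤ wt G F α v := by
  have h : (nb G v).image c = ((nb G v ∩ F).image α) ∪ ((nb G v \ F).image c) := by
    have : (nb G v ∩ F).image α = (nb G v ∩ F).image c := by
      apply Finset.image_congr
      intro u hu
      exact (hα u (Finset.mem_inter.1 hu).2).symm
    rw [this, ← Finset.image_union]
    congr 1
    ext u; simp; tauto
  rw [h, wt]
  refine (Finset.card_union_le _ _).trans ?_
  exact Nat.add_le_add_left Finset.card_image_le _

theorem image_lt_wt [Fintype V] (G : SimpleGraph V) {k : ℕ} (F : Finset V) (α c : V → Fin k) (v s t : V)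
    (hα : ∀ u ∈ F, c u = α u) (hs : G.Adj v s) (hsF : s ∉ F) (ht : G.Adj v t) (hst : s ≠ t)
    (hc : c s = c t) : ((nb G v).image c).card < wt G F α v := by
  have h : (nb G v).image c ⊆ ((nb G v ∩ F).image α) ∪ (((nb G v \ F).erase s).image c) := by
    intro x hx
    obtain ⟨u, hu, rfl⟩ := Finset.mem_image.1 hx
    have hu' : ∃ u', G.Adj v u' ∧ u' ≠ s ∧ c u' = c u := by
      by_cases hus : u = s
      · exact ⟨t, ht, hst.symm, by rw [hus, hc]⟩
      · exact ⟨u, by simpa using hu, hus, rfl⟩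
    obtain ⟨u', h1, h2, h3⟩ := hu'
    rw [← h3]
    by_cases hF : u' ∈ F
    · apply Finset.mem_union_left
      rw [hα u' hF]
      exact Finset.mem_image_of_mem _ (by simp [h1, hF])
    · apply Finset.mem_union_right
      exact Finset.mem_image_of_mem _ (by simp [h1, hF, h2])
  refine (Finset.card_le_card h).trans_lt ((Finset.card_union_le _ _).trans_lt ?_)
  rw [wt]
  refine Nat.add_lt_add_left (Finset.card_image_le.trans_lt ?_) _
  exact Finset.card_erase_lt_of_mem (by simp [hs, hsF])

theorem exists_free {k : ℕ} (s : Finset (Fin k)) (h : s.card < k) : ∃ f, f ∉ s := by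
  by_contra hh
  push Not at hh
  have : s = Finset.univ := by ext; simp [hh]
  rw [this] at h; simp at h

/-- lifting when the removed vertex carries colour `a` -/
theorem lift_a [Fintype V] {G : SimpleGraph V} {k : ℕ} {F : Finset V} {α : V → Fin k} {r : V}
    (hr : r ∉ F) (hw : wt G F α r < k) (c c1 : V → Fin k) (a b : Fin k) (S : Set V)
    (hS : ∀ v ∈ S, v ∉ insert r F) (h2 : ∀ v ∈ S, c v = a ∨ c v = b)
    (h3 : ∀ v ∈ S, ∀ u, (iso G r).Adj v u → (c u = a ∨ c u = b) → u ∈ S)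
    (hp : IsProperColoring G k c1) (hα : ∀ u ∈ F, c1 u = α u) (hcc : ∀ u, u ≠ r → c1 u = c u)
    (ha : c1 r = a) :
    ∃ c1', KE G F c1 c1' ∧ ∀ u, u ≠ r → c1' u = swp c a b S u := by
  have hS' : ∀ v ∈ S, v ≠ r ∧ v ∉ F := by
    intro v hv
    have := hS v hv
    simpa only [Finset.mem_insert, not_or] using this
  have h2' : ∀ v ∈ S, c1 v = a ∨ c1 v = b := fun v hv => by
    rw [hcc v (hS' v hv).1]; exact h2 v hv
  have h3' : ∀ v ∈ S, ∀ u, u ≠ r → G.Adj v u → (c1 u = a ∨ c1 u = b) → u ∈ S := by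
    intro v hv u hu huv hc
    rw [hcc u hu] at hc
    exact h3 v hv u ⟨huv, (hS' v hv).1, hu⟩ hc
  by_cases hA : ∀ u, G.Adj r u → c1 u = b → u ∉ S
  · refine ⟨swp c1 a b S, (Stp.swp a b S (fun v hv => (hS' v hv).2) h2' ?_).ke, ?_⟩
    · intro v hv u huv hc
      by_cases hur : u = r
      · subst hur
        rcases h2' v hv with h | h
        · exact absurd (h.trans ha.symm) (hp huv)
        · exact absurd hv (hA v huv.symm h)
      · exact h3' v hv u hur huv hc
    · intro u hu; simp [swp, hcc u hu]
  by_cases hB : ∀ u, G.Adj r u → c1 u = b → u ∈ S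
  · refine ⟨swp c1 a b (insert r S), (Stp.swp a b (insert r S) ?_ ?_ ?_).ke, ?_⟩
    · rintro v (rfl | hv)
      · exact hr
      · exact (hS' v hv).2
    · rintro v (rfl | hv)
      · exact Or.inl ha
      · exact h2' v hv
    · rintro v (rfl | hv) u huv hc
      · right
        rcases hc with hc | hc
        · exact absurd (ha.trans hc.symm) (hp huv)
        · exact hB u huv hc
      · by_cases hur : u = r
        · exact Or.inl hur
        · exact Or.inr (h3' v hv u hur huv hc)
    · intro u hu; simp [swp, hcc u hu, hu]
  push Not at hA hB
  obtain ⟨s, hs1, hs2, hs3⟩ := hA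
  obtain ⟨t, ht1, ht2, ht3⟩ := hB
  have hlt := image_lt_wt G F α c1 r s t hα hs1 (hS' s hs3).2 ht1
    (by rintro rfl; exact ht3 hs3) (hs2.trans ht2.symm)
  obtain ⟨f, hf⟩ := exists_free (insert a ((nb G r).image c1)) (by
    have := Finset.card_insert_le a ((nb G r).image c1)
    omega)
  simp only [Finset.mem_insert, not_or, Finset.mem_image, mem_nb, not_exists, not_and] at hf
  have hfb : f ≠ b := by rintro rfl; exact hf.2 s hs1 hs2
  have st := Stp.single (F := F) hp r hr f hf.2
  refine ⟨swp (Function.update c1 r f) a b S, st.ke.trans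
    (Stp.swp a b S (fun v hv => (hS' v hv).2) ?_ ?_).ke, ?_⟩
  · intro v hv
    rw [Function.update_of_ne (hS' v hv).1]; exact h2' v hv
  · intro v hv u huv hc
    by_cases hur : u = r
    · subst hur; rw [Function.update_self] at hc
      rcases hc with h | h
      · exact absurd h hf.1
      · exact absurd h hfb
    · rw [Function.update_of_ne hur] at hc
      exact h3' v hv u hur huv hc
  · intro u hu; simp [swp, hcc u hu, hu]

theorem swp_comm {k : ℕ} (c : V → Fin k) (a b : Fin k) (S : Set V) : swp c a b S = swp c b a S := by
  funext v; simp [swp, Equiv.swap_comm a b]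

theorem lift_step [Fintype V] {G : SimpleGraph V} {k : ℕ} {F : Finset V} {α : V → Fin k} {r : V}
    (hr : r ∉ F) (hw : wt G F α r < k) (c d c1 : V → Fin k) (hst : Stp (iso G r) (insert r F) c d)
    (hp : IsProperColoring G k c1) (hα : ∀ u ∈ F, c1 u = α u) (hcc : ∀ u, u ≠ r → c1 u = c u) :
    ∃ c1', KE G F c1 c1' ∧ ∀ u, u ≠ r → c1' u = d u := by
  obtain ⟨a, b, S, hS, h2, h3, h4⟩ := hst
  simp_rw [h4]
  by_cases ha : c1 r = a
  · exact lift_a hr hw c c1 a b S hS h2 h3 hp hα hcc ha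
  by_cases hb : c1 r = b
  · have := lift_a hr hw c c1 b a S hS (fun v hv => (h2 v hv).symm)
      (fun v hv u hu hc => h3 v hv u hu hc.symm) hp hα hcc hb
    rwa [swp_comm] at this
  have hS' : ∀ v ∈ S, v ≠ r ∧ v ∉ F := by
    intro v hv
    have := hS v hv
    simpa only [Finset.mem_insert, not_or] using this
  refine ⟨swp c1 a b S, (Stp.swp a b S (fun v hv => (hS' v hv).2) ?_ ?_).ke, ?_⟩
  · intro v hv
    rw [hcc v (hS' v hv).1]; exact h2 v hv
  · intro v hv u huv hc
    by_cases hur : u = r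
    · subst hur; tauto
    · rw [hcc u hur] at hc
      exact h3 v hv u ⟨huv, (hS' v hv).1, hur⟩ hc
  · intro u hu; simp [swp, hcc u hu]

theorem lift_KE [Fintype V] {G : SimpleGraph V} {k : ℕ} {F : Finset V} {α : V → Fin k} {r : V}
    (hr : r ∉ F) (hw : wt G F α r < k) (c d c1 : V → Fin k) (hst : KE (iso G r) (insert r F) c d)
    (hp : IsProperColoring G k c1) (hα : ∀ u ∈ F, c1 u = α u) (hcc : ∀ u, u ≠ r → c1 u = c u) :
    ∃ c1', KE G F c1 c1' ∧ ∀ u, u ≠ r → c1' u = d u := by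
  induction hst with
  | refl => exact ⟨c1, KE.rfl, hcc⟩
  | tail _ h ih =>
    obtain ⟨c2, h1, h2⟩ := ih
    obtain ⟨c3, h3, h4⟩ := lift_step hr hw _ _ c2 h (h1.proper hp)
      (fun u hu => (h1.eqOn u hu).trans (hα u hu)) h2
    exact ⟨c3, h1.trans h3, h4⟩

theorem slack_equiv_aux [Fintype V] {k : ℕ} (n : ℕ) : ∀ (G : SimpleGraph V) (F : Finset V) (α β : V → Fin k),
    (Fᶜ).card = n → Slack G F α → IsProperColoring G k α → IsProperColoring G k β →
    (∀ v ∈ F, β v = α v) → KE G F α β := by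
  induction n with
  | zero =>
    intro G F α β hn _ _ _ hag
    have : α = β := by
      funext v
      have : v ∈ F := by
        rw [Finset.card_eq_zero] at hn
        by_contra h
        have : v ∈ Fᶜ := by simpa using h
        simp [hn] at this
      exact (hag v this).symm
    subst this; exact KE.rfl
  | succ n ih =>
    intro G F α β hn hs hpa hpb hag
    have hne : (Fᶜ).Nonempty := by rw [← Finset.card_pos]; omega
    obtain ⟨r, hr, hw⟩ := hs.ex {v | v ∉ F} (by
      obtain ⟨v, hv⟩ := hne; exact ⟨v, by simpa using hv⟩) (fun v hv => hv) (fun _ _ _ _ h => h)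
    have hr : r ∉ F := hr
    let β' := Function.update β r (α r)
    have isop : ∀ c : V → Fin k, ∀ x, IsProperColoring G k c →
        IsProperColoring (iso G r) k (Function.update c r x) := by
      intro c x hc u v huv
      rw [Function.update_of_ne huv.2.1, Function.update_of_ne huv.2.2]
      exact hc huv.1
    have hke := ih (iso G r) (insert r F) α β' (by
        rw [Finset.compl_insert, Finset.card_erase_of_mem (by simpa using hr)]; omega)
      (hs.step α hr (fun _ _ => rfl)) (fun u v huv => hpa huv.1) (isop β _ hpb) (by
        intro v hv
        by_cases hvr : v = r
        · subst hvr; simp [β']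
        · simp only [β', Function.update_of_ne hvr]
          exact hag v (Finset.mem_of_mem_insert_of_ne hv hvr))
    obtain ⟨c, h1, h2⟩ := lift_KE hr hw α β' α hke hpa (fun _ _ => rfl) (fun _ _ => rfl)
    have h2' : ∀ u, u ≠ r → c u = β u := fun u hu => by
      rw [h2 u hu]; simp [β', hu]
    have st := Stp.single (F := F) (h1.proper hpa) r hr (β r) (fun u hu => by
      rw [h2' u (by rintro rfl; exact G.loopless.irrefl _ hu)]
      exact (hpb hu).symm)
    have e : Function.update c r (β r) = β := by
      funext v
      by_cases hvr : v = r
      · subst hvr; simp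
      · simp [hvr, h2' v hvr]
    rw [e] at st
    exact h1.trans st.ke

theorem slack_equiv [Fintype V] {k : ℕ} {G : SimpleGraph V} {F : Finset V} {α β : V → Fin k}
    (hs : Slack G F α) (ha : IsProperColoring G k α) (hb : IsProperColoring G k β)
    (hag : ∀ v ∈ F, β v = α v) : KE G F α β :=
  slack_equiv_aux _ G F α β rfl hs ha hb hag

theorem slack_exists_aux [Fintype V] {k : ℕ} (n : ℕ) : ∀ (G : SimpleGraph V) (F : Finset V) (α : V → Fin k),
    (Fᶜ).card = n → Slack G F α → (∀ u ∈ F, ∀ v ∈ F, G.Adj u v → α u ≠ α v) →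
    ∃ β, IsProperColoring G k β ∧ ∀ v ∈ F, β v = α v := by
  induction n with
  | zero =>
    intro G F α hn _ hp
    have hF : ∀ v, v ∈ F := by
      intro v
      rw [Finset.card_eq_zero] at hn
      by_contra h
      have : v ∈ Fᶜ := by simpa using h
      simp [hn] at this
    exact ⟨α, fun u v huv => hp u (hF u) v (hF v) huv, fun _ _ => rfl⟩
  | succ n ih =>
    intro G F α hn hs hp
    have hne : (Fᶜ).Nonempty := by rw [← Finset.card_pos]; omega
    obtain ⟨r, hr, hw⟩ := hs.ex {v | v ∉ F} (by
      obtain ⟨v, hv⟩ := hne; exact ⟨v, by simpa using hv⟩) (fun v hv => hv) (fun _ _ _ _ h => h)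
    have hr : r ∉ F := hr
    obtain ⟨β, hb1, hb2⟩ := ih (iso G r) (insert r F) α (by
        rw [Finset.compl_insert, Finset.card_erase_of_mem (by simpa using hr)]; omega)
      (hs.step α hr (fun _ _ => rfl)) (fun u hu v hv huv =>
        hp u (Finset.mem_of_mem_insert_of_ne hu huv.2.1) v
          (Finset.mem_of_mem_insert_of_ne hv huv.2.2) huv.1)
    have hb2' : ∀ v ∈ F, β v = α v := fun v hv => hb2 v (Finset.mem_insert_of_mem hv)
    obtain ⟨f, hf⟩ := exists_free ((nb G r).image β) ((image_le_wt G F α β r hb2').trans_lt hw)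
    simp only [Finset.mem_image, mem_nb, not_exists, not_and] at hf
    refine ⟨Function.update β r f, ?_, ?_⟩
    · intro u v huv
      by_cases hu : u = r <;> by_cases hv : v = r
      · subst hu; subst hv; exact absurd huv (G.loopless.irrefl _)
      · subst hu; simp [hv]; exact fun h => hf v huv h.symm
      · subst hv; simp [hu]; exact hf u huv.symm
      · simp [hu, hv]; exact hb1 ⟨huv, hu, hv⟩
    · intro v hv
      rw [Function.update_of_ne (by rintro rfl; exact hr hv)]; exact hb2' v hv

theorem slack_exists [Fintype V] {k : ℕ} {G : SimpleGraph V} {F : Finset V} {α : V → Fin k}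
    (hs : Slack G F α) (hp : ∀ u ∈ F, ∀ v ∈ F, G.Adj u v → α u ≠ α v) :
    ∃ β, IsProperColoring G k β ∧ ∀ v ∈ F, β v = α v :=
  slack_exists_aux _ G F α rfl hs hp

/-- connectivity in cut form -/
def Cn (G : SimpleGraph V) : Prop :=
  ∀ T : Set V, T.Nonempty → (∀ v ∈ T, ∀ u, G.Adj v u → u ∈ T) → ∀ v, v ∈ T

theorem Cn.of_connected {G : SimpleGraph V} (h : G.Connected) : Cn G := by
  intro T ⟨t, ht⟩ hcl v
  obtain ⟨p⟩ := h.preconnected t v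
  induction p with
  | nil => exact ht
  | cons h p ih => exact ih (hcl _ ht _ h)

def rst (G : SimpleGraph V) (X : Set V) : SimpleGraph V where
  Adj u v := G.Adj u v ∧ u ∈ X ∧ v ∈ X
  symm := ⟨fun _ _ h => ⟨h.1.symm, h.2.2, h.2.1⟩⟩
  loopless := ⟨fun _ h => G.loopless.irrefl _ h.1⟩

theorem wt_le_card [Fintype V] (G : SimpleGraph V) {k : ℕ} (F : Finset V) (α : V → Fin k) (v : V) :
    wt G F α v ≤ (nb G v).card := by
  unfold wt
  have := Finset.card_image_le (s := nb G v ∩ F) (f := α)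
  have := Finset.card_inter_add_card_sdiff (nb G v) F
  omega

theorem slack_rst [Fintype V] {G : SimpleGraph V} {k : ℕ} (hc : Cn G) (hdeg : ∀ v, (nb G v).card ≤ k)
    (F : Finset V) (hF : F.Nonempty) (α : V → Fin k) : Slack (rst G {v | v ∉ F}) F α := by
  have hsub : ∀ v, nb (rst G {v | v ∉ F}) v ⊆ nb G v := by
    intro v u; simp only [mem_nb]; exact fun h => h.1
  constructor
  · intro v _
    exact (wt_le_card _ _ _ _).trans ((Finset.card_le_card (hsub v)).trans (hdeg v))
  · intro T hT hTF hcl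
    by_contra hno
    push Not at hno
    obtain ⟨f, hf⟩ := hF
    refine hTF f (hc T hT ?_ f) hf
    intro v hv u huv
    by_cases hu : u ∈ F
    · exfalso
      have h1 := hno v hv
      have h2 : nb (rst G {v | v ∉ F}) v ⊂ nb G v := by
        refine ⟨hsub v, fun h => ?_⟩
        have := h (mem_nb.2 huv)
        rw [mem_nb] at this
        exact this.2.2 hu
      have := wt_le_card (rst G {v | v ∉ F}) F α v
      have := Finset.card_lt_card h2
      have := hdeg v
      omega
    · exact hcl v hv u ⟨huv, hTF v hv, hu⟩ hu

structure CutData (G : SimpleGraph V) (K P Q : Set V) : Prop where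
  cov : ∀ v, v ∈ K ∨ v ∈ P ∨ v ∈ Q
  KP : ∀ v ∈ K, v ∉ P
  KQ : ∀ v ∈ K, v ∉ Q
  PQ : ∀ v ∈ P, v ∉ Q
  clq : ∀ u ∈ K, ∀ v ∈ K, u ≠ v → G.Adj u v
  noe : ∀ u ∈ P, ∀ v ∈ Q, ¬ G.Adj u v
  neP : P.Nonempty
  neQ : Q.Nonempty

theorem CutData.symm {G : SimpleGraph V} {K P Q : Set V} (h : CutData G K P Q) : CutData G K Q P :=
  ⟨fun v => by have := h.cov v; tauto, h.KQ, h.KP, fun v hv hv' => h.PQ v hv' hv, h.clq,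
    fun u hu v hv huv => h.noe v hv u hu huv.symm, h.neQ, h.neP⟩

theorem cut_lift [Fintype V] {G : SimpleGraph V} {k : ℕ} {K P Q : Set V} (h : CutData G K P Q)
    (F : Finset V) (hF : ∀ v, v ∈ F ↔ v ∈ Q) {c d c1 : V → Fin k} (hst : KE (rst G {v | v ∉ F}) F c d)
    (hcc : ∀ v, v ∉ Q → c1 v = c v) :
    ∃ (c1' : V → Fin k) (σ : Equiv.Perm (Fin k)), KE G ∅ c1 c1' ∧ (∀ v, v ∉ Q → c1' v = d v) ∧
      ∀ v, v ∉ P → c1' v = σ (c1 v) := by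
  induction hst with
  | refl => exact ⟨c1, 1, KE.rfl, hcc, by simp⟩
  | @tail d e _ hs ih =>
    obtain ⟨c2, σ, h1, h2, h3⟩ := ih
    obtain ⟨a, b, S, hS1, hS2, hS3, hS4⟩ := hs
    have hSQ : ∀ v ∈ S, v ∉ Q := fun v hv hq => hS1 v hv ((hF v).2 hq)
    have hcl : ∀ v ∈ S, ∀ u, u ∉ Q → G.Adj v u → (c2 u = a ∨ c2 u = b) → u ∈ S := by
      intro v hv u hu huv hc
      rw [h2 u hu] at hc
      exact hS3 v hv u ⟨huv, hS1 v hv, fun h => hu ((hF u).1 h)⟩ hc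
    by_cases hK : ∃ w ∈ K, w ∈ S
    · obtain ⟨w, hwK, hwS⟩ := hK
      refine ⟨swp c2 a b (S ∪ {v | v ∈ Q ∧ (c2 v = a ∨ c2 v = b)}), Equiv.swap a b * σ,
        h1.trans (Stp.swp _ _ _ (by simp) ?_ ?_).ke, ?_, ?_⟩
      · rintro v (hv | hv)
        · rw [h2 v (hSQ v hv)]; exact hS2 v hv
        · exact hv.2
      · rintro v (hv | hv) u huv hc
        · by_cases hu : u ∈ Q
          · exact Or.inr ⟨hu, hc⟩
          · exact Or.inl (hcl v hv u hu huv hc)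
        · by_cases hu : u ∈ Q
          · exact Or.inr ⟨hu, hc⟩
          · have hu' : u ∈ K := by
              rcases h.cov u with h' | h' | h'
              · exact h'
              · exact absurd huv.symm (h.noe u h' v hv.1)
              · exact absurd h' hu
            by_cases huw : u = w
            · subst huw; exact Or.inl hwS
            · exact Or.inl (hcl w hwS u hu (h.clq _ hwK _ hu' (Ne.symm huw)) hc)
      · intro v hv
        rw [hS4]
        simp [swp, hv, h2 v hv]
      · intro v hv
        rw [Equiv.Perm.mul_apply, ← h3 v hv]
        by_cases hc : c2 v = a ∨ c2 v = b
        · have : v ∈ S ∪ {v | v ∈ Q ∧ (c2 v = a ∨ c2 v = b)} := by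
            by_cases hu : v ∈ Q
            · exact Or.inr ⟨hu, hc⟩
            · have hu' : v ∈ K := by have := h.cov v; tauto
              by_cases huw : v = w
              · subst huw; exact Or.inl hwS
              · exact Or.inl (hcl w hwS v hu (h.clq _ hwK _ hu' (Ne.symm huw)) hc)
          simp only [swp, this, if_true]
        · rw [not_or] at hc
          rw [Equiv.swap_apply_of_ne_of_ne hc.1 hc.2, swp]
          split_ifs
          · rw [Equiv.swap_apply_of_ne_of_ne hc.1 hc.2]
          · rfl
    · push Not at hK
      have hSP : ∀ v ∈ S, v ∈ P := by
        intro v hv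
        rcases h.cov v with h' | h' | h'
        · exact absurd hv (hK v h')
        · exact h'
        · exact absurd h' (hSQ v hv)
      refine ⟨swp c2 a b S, σ, h1.trans (Stp.swp _ _ _ (by simp) ?_ ?_).ke, ?_, ?_⟩
      · intro v hv
        rw [h2 v (hSQ v hv)]; exact hS2 v hv
      · intro v hv u huv hc
        exact hcl v hv u (fun hq => h.noe v (hSP v hv) u hq huv) huv hc
      · intro v hv
        rw [hS4]
        simp [swp, h2 v hv]
      · intro v hv
        rw [swp, if_neg (fun h => hv (hSP v h)), h3 v hv]

theorem cut_side [Fintype V] {G : SimpleGraph V} {k : ℕ} {K P Q : Set V} (h : CutData G K P Q)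
    (hc : Cn G) (hdeg : ∀ v, (nb G v).card ≤ k) {α β : V → Fin k} (ha : IsProperColoring G k α)
    (hb : IsProperColoring G k β) :
    ∃ (α' : V → Fin k) (σ : Equiv.Perm (Fin k)), KE G ∅ α α' ∧ (∀ v, v ∉ Q → α' v = β v) ∧
      ∀ v, v ∉ P → α' v = σ (α v) := by
  let F : Finset V := Finset.univ.filter (fun v => v ∈ Q)
  have hF : ∀ v, v ∈ F ↔ v ∈ Q := by simp [F]
  let β' : V → Fin k := fun v => if v ∈ F then α v else β v
  have hke : KE (rst G {v | v ∉ F}) F α β' := by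
    refine slack_equiv (slack_rst hc hdeg F ?_ α) (fun u v huv => ha huv.1) ?_ ?_
    · obtain ⟨q, hq⟩ := h.neQ; exact ⟨q, (hF q).2 hq⟩
    · intro u v huv
      simp only [β', if_neg huv.2.1, if_neg huv.2.2]
      exact hb huv.1
    · intro v hv; simp [β', hv]
  obtain ⟨α', σ, h1, h2, h3⟩ := cut_lift h F hF (c1 := α) hke (fun _ _ => rfl)
  refine ⟨α', σ, h1, fun v hv => ?_, h3⟩
  rw [h2 v hv]; simp [β', hF, hv]

theorem cut_perm {G : SimpleGraph V} {k : ℕ} {K P Q : Set V} (h : CutData G K P Q)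
    (C : Set (Fin k)) (τ : Equiv.Perm {x // x ∉ C}) (c : V → Fin k) (hcK : ∀ v ∈ K, c v ∈ C) :
    KE G ∅ c (fun v => if v ∈ P then Equiv.Perm.ofSubtype τ (c v) else c v) := by
  induction τ using Equiv.Perm.swap_induction_on with
  | one => simpa using KE.rfl
  | swap_mul f x y _ ih =>
    refine ih.trans (Stp.ke ⟨x.1, y.1, {v | v ∈ P ∧ (Equiv.Perm.ofSubtype f (c v) = x.1 ∨
      Equiv.Perm.ofSubtype f (c v) = y.1)}, by simp, ?_, ?_, ?_⟩)
    · intro v hv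
      simp only [hv.1, if_true]; exact hv.2
    · intro v hv u huv hc'
      by_cases hu : u ∈ P
      · simp only [hu, if_true] at hc'
        exact ⟨hu, hc'⟩
      · simp only [hu, if_false] at hc'
        have hu' : u ∈ K := by
          rcases h.cov u with h' | h' | h'
          · exact h'
          · exact absurd h' hu
          · exact absurd huv (h.noe v hv.1 u h')
        have := hcK u hu'
        rcases hc' with e | e
        · rw [e] at this; exact absurd this x.2
        · rw [e] at this; exact absurd this y.2
    · intro v
      by_cases hv : v ∈ P
      · simp only [hv, if_true, swp, map_mul, Equiv.Perm.mul_apply, Equiv.Perm.ofSubtype_swap_eq]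
        by_cases hx : Equiv.Perm.ofSubtype f (c v) = x.1 ∨ Equiv.Perm.ofSubtype f (c v) = y.1
        · rw [if_pos ⟨hv, hx⟩]
        · rw [if_neg (fun h => hx h.2)]
          rw [not_or] at hx
          rw [Equiv.swap_apply_of_ne_of_ne hx.1 hx.2]
      · simp [hv, swp]

theorem clique_cut [Fintype V] {G : SimpleGraph V} {k : ℕ} {K P Q : Set V} (h : CutData G K P Q)
    (hc : Cn G) (hdeg : ∀ v, (nb G v).card ≤ k) {α β : V → Fin k} (ha : IsProperColoring G k α)
    (hb : IsProperColoring G k β) : KE G ∅ α β := by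
  obtain ⟨α1, σ1, h1, h2, h3⟩ := cut_side h hc hdeg ha hb
  obtain ⟨α2, σ, h4, h5, h6⟩ := cut_side h.symm hc hdeg (h1.proper ha) hb
  refine h1.trans (h4.trans ?_)
  refine KE.symm ?_
  obtain ⟨C, hC⟩ : ∃ C : Set (Fin k), ∀ x, x ∈ C ↔ σ x = x := ⟨{x | σ x = x}, fun _ => Iff.rfl⟩
  have hσ : ∀ x, x ∉ C ↔ σ x ∉ C := by
    intro x; simp [hC]
  have := cut_perm h C (σ.subtypePerm (fun x => (hσ x).symm)) β (by
    intro v hv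
    have e1 := h5 v (h.KP v hv)
    have e2 := h6 v (h.KQ v hv)
    rw [e1, h2 v (h.KQ v hv)] at e2
    exact (hC _).2 e2.symm)
  rw [Equiv.Perm.ofSubtype_subtypePerm] at this
  · convert this using 1
    funext v
    by_cases hv : v ∈ P
    · rw [if_pos hv, h6 v (h.PQ v hv), h2 v (h.PQ v hv)]
    · rw [if_neg hv, h5 v hv]
  · intro x hx; exact fun h => hx ((hC x).1 h)

/-- no cut vertex -/
def NoCut (G : SimpleGraph V) : Prop :=
  ∀ x, ∀ T : Set V, T.Nonempty → x ∉ T → (∀ v ∈ T, ∀ u, G.Adj v u → u ∈ T ∨ u = x) →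
    ∀ v, v ∈ T ∨ v = x

/-- deleting `s` and `y` leaves a connected graph -/
def Cn2 (G : SimpleGraph V) (s y : V) : Prop :=
  ∀ T : Set V, T.Nonempty → s ∉ T → y ∉ T → (∀ v ∈ T, ∀ u, G.Adj v u → u ∈ T ∨ u = s ∨ u = y) →
    ∀ v, v ∈ T ∨ v = s ∨ v = y

noncomputable def bd [Fintype V] (G : SimpleGraph V) (D : Finset V) : Finset V :=
  Finset.univ.filter (fun u => u ∉ D ∧ ∃ v ∈ D, G.Adj v u)

theorem mem_bd [Fintype V] {G : SimpleGraph V} {D : Finset V} {u : V} :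
    u ∈ bd G D ↔ u ∉ D ∧ ∃ v ∈ D, G.Adj v u := by simp [bd]

theorem bd_submod [Fintype V] (G : SimpleGraph V) (D P : Finset V) :
    (bd G (D ∩ P)).card + (bd G (D ∪ P)).card ≤ (bd G D).card + (bd G P).card := by
  rw [← Finset.card_union_add_card_inter, ← Finset.card_union_add_card_inter (bd G D)]
  apply Nat.add_le_add
  · apply Finset.card_le_card
    intro u
    simp only [Finset.mem_union, mem_bd, Finset.mem_inter]
    rintro (⟨h1, v, h2, h3⟩ | ⟨h1, v, h2, h3⟩)
    · by_cases h : u ∈ D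
      · right; exact ⟨fun h' => h1 ⟨h, h'⟩, v, h2.2, h3⟩
      · left; exact ⟨h, v, h2.1, h3⟩
    · rcases h2 with h2 | h2
      · left; exact ⟨fun h' => h1 (Or.inl h'), v, h2, h3⟩
      · right; exact ⟨fun h' => h1 (Or.inr h'), v, h2, h3⟩
  · apply Finset.card_le_card
    intro u
    simp only [Finset.mem_union, mem_bd, Finset.mem_inter]
    rintro ⟨⟨h1, v, h2, h3⟩, ⟨h1', v', h2', h3'⟩⟩
    exact ⟨⟨fun h => h1' (Or.inl h), v, h2.1, h3⟩, ⟨fun h => h1' (Or.inr h), v, h2.2, h3⟩⟩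

theorem small_bd [Fintype V] {G : SimpleGraph V} (hc : Cn G) (hn : NoCut G) {D : Finset V}
    (hD : D.Nonempty) (hb : (bd G D).card ≤ 1) : (Dᶜ).card ≤ 1 := by
  have : ∀ v, v ∉ D → v ∈ bd G D := by
    intro v hv
    have : Nonempty V := ⟨v⟩
    rcases Finset.card_le_one_iff_subset_singleton.1 hb with ⟨x, hx⟩
    by_cases hxb : x ∈ bd G D
    · have := hn x (D : Set V) (by simpa using hD) (by simpa using (mem_bd.1 hxb).1) (by
        intro w hw u hwu
        by_cases hu : u ∈ D
        · exact Or.inl (by simpa using hu)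
        · right
          simpa using hx (mem_bd.2 ⟨hu, w, by simpa using hw, hwu⟩)) v
      rcases this with h | h
      · exact absurd (by simpa using h) hv
      · rw [h]; exact hxb
    · have := hc (D : Set V) (by simpa using hD) (by
        intro w hw u hwu
        by_contra hu
        have hu' : u ∈ bd G D := mem_bd.2 ⟨by simpa using hu, w, by simpa using hw, hwu⟩
        have : u = x := by simpa using hx hu'
        exact hxb (this ▸ hu')) v
      exact absurd (by simpa using this) hv
  refine le_trans (Finset.card_le_card ?_) hb
  intro v hv
  exact this v (by simpa using hv)

theorem bd_le_two [Fintype V] {G : SimpleGraph V} {D : Finset V} {s y : V}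
    (h : ∀ v ∈ D, ∀ u, G.Adj v u → u ∈ D ∨ u = s ∨ u = y) : (bd G D).card ≤ 2 := by
  refine (Finset.card_le_card (t := {s, y}) ?_).trans Finset.card_le_two
  intro u hu
  obtain ⟨h1, v, h2, h3⟩ := mem_bd.1 hu
  have := h v h2 u h3
  simp; tauto

theorem frag_aux [Fintype V] {G : SimpleGraph V} (hc : Cn G) (hn : NoCut G)
    {D : Finset V} (hD2 : (bd G D).card ≤ 2) (hDV : ∃ v, v ∉ D ∧ v ∉ bd G D)
    (hmin : ∀ E : Finset V, E.Nonempty → (bd G E).card ≤ 2 → (∃ v, v ∉ E ∧ v ∉ bd G E) → D.card ≤ E.card)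
    {s y : V} (hs : s ∈ D) {P : Finset V} (hsP : s ∉ P)
    (hP : ∀ v ∈ P, ∀ u, G.Adj v u → u ∈ P ∨ u = s ∨ u = y) (hDP : (D ∩ P).Nonempty) :
    ((D ∪ P)ᶜ).card ≤ 1 := by
  have h1 := bd_submod G D P
  have h2 := bd_le_two hP
  have h3 : 3 ≤ (bd G (D ∩ P)).card := by
    by_contra hlt
    have := hmin (D ∩ P) hDP (by omega) (by
      obtain ⟨v, hv1, hv2⟩ := hDV
      refine ⟨v, fun h => hv1 (Finset.mem_inter.1 h).1, fun h => hv2 ?_⟩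
      obtain ⟨_, w, h4, h5⟩ := mem_bd.1 h
      exact mem_bd.2 ⟨hv1, w, (Finset.mem_inter.1 h4).1, h5⟩)
    have : D ∩ P = D := Finset.eq_of_subset_of_card_le Finset.inter_subset_left this
    rw [← this] at hs
    exact hsP (Finset.mem_inter.1 hs).2
  exact small_bd hc hn ⟨s, by simp [hs]⟩ (by omega)

theorem frag_aux2 [Fintype V] {G : SimpleGraph V} (hd : ∀ v, 3 ≤ (nb G v).card) 
    {p : V} {s y : V} (h : ∀ u, G.Adj p u → u = s ∨ u = y) : False := by
  have := hd p
  have := (Finset.card_le_card (s := nb G p) (t := {s, y}) (by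
    intro u hu; simpa using h u (mem_nb.1 hu))).trans Finset.card_le_two
  omega

theorem frag_aux3 [Fintype V] {G : SimpleGraph V} (hc : Cn G) (hn : NoCut G)
    (hd : ∀ v, 3 ≤ (nb G v).card)
    {D : Finset V} (hD2 : (bd G D).card ≤ 2) (hDV : ∃ v, v ∉ D ∧ v ∉ bd G D)
    (hmin : ∀ E : Finset V, E.Nonempty → (bd G E).card ≤ 2 → (∃ v, v ∉ E ∧ v ∉ bd G E) → D.card ≤ E.card)
    {s y : V} (hs : s ∈ D) {P Q : Finset V} (hsQ : s ∉ Q)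
    (hPQ : Disjoint P Q) (hPn : P.Nonempty)
    (hP : ∀ v ∈ P, ∀ u, G.Adj v u → u ∈ P ∨ u = s ∨ u = y)
    (hQ : ∀ v ∈ Q, ∀ u, G.Adj v u → u ∈ Q ∨ u = s ∨ u = y) (hDQ : (D ∩ Q).Nonempty) 
    (hDP : ¬ (D ∩ P).Nonempty) : False := by
  have h1 := frag_aux hc hn hD2 hDV hmin hs hsQ hQ hDQ
  have hsub : P ⊆ (D ∪ Q)ᶜ := by
    intro p hp
    simp only [Finset.mem_compl, Finset.mem_union, not_or]
    exact ⟨fun h => hDP ⟨p, by simp [h, hp]⟩, Finset.disjoint_left.1 hPQ hp⟩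
  obtain ⟨p, hp⟩ := hPn
  refine frag_aux2 hd (p := p) (s := s) (y := y) ?_
  intro u hu
  rcases hP p hp u hu with h | h
  · have : p = u := Finset.card_le_one.1 h1 p (hsub hp) u (hsub h)
    subst this; exact absurd hu (G.loopless.irrefl _)
  · exact h

theorem good_vertex [Fintype V] [Nonempty V] {G : SimpleGraph V} (hc : Cn G) (hn : NoCut G)
    (hd : ∀ v, 3 ≤ (nb G v).card) : ∃ s, ∀ y, y ≠ s → Cn2 G s y := by
  by_cases hex : ∃ D : Finset V, D.Nonempty ∧ (bd G D).card ≤ 2 ∧ ∃ v, v ∉ D ∧ v ∉ bd G D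
  swap
  · obtain ⟨s⟩ := ‹Nonempty V›
    refine ⟨s, fun y hy T hT hsT hyT hcl v => ?_⟩
    by_contra hv
    push Not at hv
    refine hex ⟨Finset.univ.filter (· ∈ T), ?_, bd_le_two (s := s) (y := y) ?_, v, ?_, ?_⟩
    · obtain ⟨t, ht⟩ := hT; exact ⟨t, by simpa using ht⟩
    · intro v hv u huv
      simpa using hcl v (by simpa using hv) u huv
    · simpa using hv.1
    · intro h
      obtain ⟨h1, w, h2, h3⟩ := mem_bd.1 h
      have := hcl w (by simpa using h2) v h3
      tauto
  · let 𝒟 : Finset (Finset V) := Finset.univ.filter (fun D => D.Nonempty ∧ (bd G D).card ≤ 2 ∧ ∃ v, v ∉ D ∧ v ∉ bd G D)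
    obtain ⟨D, hD, hmin⟩ := Finset.exists_min_image 𝒟 Finset.card (by
      obtain ⟨D, hD⟩ := hex; exact ⟨D, by simpa [𝒟] using hD⟩)
    have hD' : D.Nonempty ∧ (bd G D).card ≤ 2 ∧ ∃ v, v ∉ D ∧ v ∉ bd G D := by simpa [𝒟] using hD
    obtain ⟨⟨s, hs⟩, hD2, hDV⟩ := hD'
    have hmin' : ∀ E : Finset V, E.Nonempty → (bd G E).card ≤ 2 → (∃ v, v ∉ E ∧ v ∉ bd G E) → D.card ≤ E.card := by
      intro E h1 h2 h3
      exact hmin E (by simpa [𝒟] using ⟨h1, h2, h3⟩)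
    refine ⟨s, fun y hy T hT hsT hyT hcl v => ?_⟩
    by_contra hv
    push Not at hv
    let P : Finset V := Finset.univ.filter (· ∈ T)
    let Q : Finset V := Finset.univ.filter (fun v => v ∉ T ∧ v ≠ s ∧ v ≠ y)
    have hPn : P.Nonempty := by obtain ⟨t, ht⟩ := hT; exact ⟨t, by simpa [P] using ht⟩
    have hQn : Q.Nonempty := ⟨v, by simpa [Q] using hv⟩
    have hsP : s ∉ P := by simpa [P] using hsT
    have hyP : y ∉ P := by simpa [P] using hyT
    have hsQ : s ∉ Q := by simp [Q]
    have hyQ : y ∉ Q := by simp [Q]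
    have hPQ : Disjoint P Q := by
      rw [Finset.disjoint_left]; intro a h1 h2
      simp [P] at h1; simp [Q] at h2; exact h2.1 h1
    have hcov : ∀ u, u ∈ P ∨ u ∈ Q ∨ u = s ∨ u = y := by
      intro u; simp [P, Q]; tauto
    have hP : ∀ v ∈ P, ∀ u, G.Adj v u → u ∈ P ∨ u = s ∨ u = y := by
      intro v hv u huv
      have := hcl v (by simpa [P] using hv) u huv
      simpa [P] using this
    have hQ : ∀ v ∈ Q, ∀ u, G.Adj v u → u ∈ Q ∨ u = s ∨ u = y := by
      intro v hv u huv
      rcases hcov u with h | h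
      · exfalso
        have := hP u h v huv.symm
        have h1 := Finset.disjoint_right.1 hPQ hv
        rcases this with h | rfl | rfl
        · exact h1 h
        · exact hsQ hv
        · exact hyQ hv
      · exact h
    by_cases hDP : (D ∩ P).Nonempty <;> by_cases hDQ : (D ∩ Q).Nonempty
    · have h1 := frag_aux hc hn hD2 hDV hmin' hs hsP hP hDP
      have h2 := frag_aux hc hn hD2 hDV hmin' hs hsQ hQ hDQ
      have h3 : (Dᶜ) ⊆ (D ∪ P)ᶜ ∪ (D ∪ Q)ᶜ := by
        intro u hu
        have hu' : u ∉ D := by simpa using hu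
        simp only [Finset.mem_union, Finset.mem_compl, not_or]
        by_cases h : u ∈ P
        · right; exact ⟨hu', Finset.disjoint_left.1 hPQ h⟩
        · left; exact ⟨hu', h⟩
      have h4 := (Finset.card_le_card h3).trans (Finset.card_union_le _ _)
      obtain ⟨z, hz1, hz2⟩ := hDV
      have h5 : insert z (bd G D) ⊆ Dᶜ := by
        intro u hu
        rcases Finset.mem_insert.1 hu with rfl | h
        · simpa using hz1
        · simpa using (mem_bd.1 h).1
      have h6 := Finset.card_le_card h5
      rw [Finset.card_insert_of_notMem hz2] at h6
      have h7 := small_bd hc hn ⟨s, hs⟩ (D := D) (by omega)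
      have h8 : (bd G D).card = 0 := by omega
      have := hc (D : Set V) ⟨s, by simpa using hs⟩ (by
        intro w hw u hwu
        by_contra hu
        have : u ∈ bd G D := mem_bd.2 ⟨by simpa using hu, w, by simpa using hw, hwu⟩
        rw [Finset.card_eq_zero.1 h8] at this
        simp at this) z
      exact hz1 (by simpa using this)
    · exact frag_aux3 hc hn hd hD2 hDV hmin' hs hsP hPQ.symm hQn hQ hP hDP hDQ
    · exact frag_aux3 hc hn hd hD2 hDV hmin' hs hsQ hPQ hPn hP hQ hDQ hDP
    · have hDsub : ∀ u ∈ D, u = s ∨ u = y := by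
        intro u hu
        rcases hcov u with h | h | h
        · exact absurd ⟨u, by simp [hu, h]⟩ hDP
        · exact absurd ⟨u, by simp [hu, h]⟩ hDQ
        · exact h
      by_cases hyD : y ∈ D
      · -- both sides meet the boundary
        have meet : ∀ R : Finset V, R.Nonempty → s ∉ R → y ∉ R →
            (∀ v ∈ R, ∀ u, G.Adj v u → u ∈ R ∨ u = s ∨ u = y) → ∃ p ∈ R, p ∈ bd G D := by
          intro R hRn hsR hyR hR
          by_contra hno
          push Not at hno
          have hyD' : ∀ r ∈ R, r ∉ D := by
            intro r hr hrD
            rcases hDsub r hrD with rfl | rfl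
            · exact hsR hr
            · exact hyR hr
          have := hc (R : Set V) (by simpa using hRn) (by
            intro w hw u hwu
            have hw : w ∈ R := by simpa using hw
            rcases hR w hw u hwu with h | rfl | rfl
            · simpa using h
            · exact absurd (mem_bd.2 ⟨hyD' w hw, _, hs, hwu.symm⟩) (hno w hw)
            · exact absurd (mem_bd.2 ⟨hyD' w hw, _, hyD, hwu.symm⟩) (hno w hw)) s
          exact hsR (by simpa using this)
        obtain ⟨p, hp, hpb⟩ := meet P hPn hsP hyP hP
        obtain ⟨q, hq, hqb⟩ := meet Q hQn hsQ hyQ hQ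
        have hpq : p ≠ q := by rintro rfl; exact Finset.disjoint_left.1 hPQ hp hq
        have hbd : bd G D = {p, q} := by
          symm
          apply Finset.eq_of_subset_of_card_le
          · intro u hu
            rcases Finset.mem_insert.1 hu with rfl | h
            · exact hpb
            · rw [Finset.mem_singleton.1 h]; exact hqb
          · rw [Finset.card_pair hpq]; exact hD2
        have hPD : ∀ r ∈ P, r ∉ D := fun r hr hrD => hDP ⟨r, by simp [hr, hrD]⟩
        have hPp : ∀ u ∈ P, u ≠ p → ∀ w, G.Adj u w → w ∈ P := by
          intro u hu hup w huw
          have hub : u ∉ bd G D := by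
            rw [hbd]; simp only [Finset.mem_insert, Finset.mem_singleton, not_or]
            refine ⟨hup, ?_⟩
            rintro rfl; exact Finset.disjoint_left.1 hPQ hu hq
          rcases hP u hu w huw with h | rfl | rfl
          · exact h
          · exact absurd (mem_bd.2 ⟨hPD u hu, _, hs, huw.symm⟩) hub
          · exact absurd (mem_bd.2 ⟨hPD u hu, _, hyD, huw.symm⟩) hub
        by_cases hP1 : ∃ r ∈ P, r ≠ p
        · obtain ⟨r, hr, hrp⟩ := hP1
          have := hn p {u | u ∈ P ∧ u ≠ p} ⟨r, hr, hrp⟩ (fun h => h.2 rfl) (by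
            intro w hw u hwu
            have := hPp w hw.1 hw.2 u hwu
            by_cases h : u = p
            · exact Or.inr h
            · exact Or.inl ⟨this, h⟩) s
          rcases this with h | h
          · exact hsP h.1
          · exact hsP (h ▸ hp)
        · push Not at hP1
          refine frag_aux2 hd (p := p) (s := s) (y := y) ?_
          intro u hu
          rcases hP p hp u hu with h | h
          · rw [hP1 u h] at hu; exact absurd hu (G.loopless.irrefl _)
          · exact h
      · have : nb G s ⊆ bd G D := by
          intro u hu
          have hu := mem_nb.1 hu
          refine mem_bd.2 ⟨fun h => ?_, s, hs, hu⟩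
          rcases hDsub u h with rfl | rfl
          · exact G.loopless.irrefl _ hu
          · exact hyD h
        have := Finset.card_le_card this
        have := hd s
        omega

theorem exists_dist2 [Fintype V] {G : SimpleGraph V} {k : ℕ} (hc : Cn G)
    (hreg : ∀ v, (nb G v).card = k) (hnt : ∃ u v, u ≠ v ∧ ¬ G.Adj u v) (s : V) :
    ∃ y x, y ≠ s ∧ ¬ G.Adj s y ∧ G.Adj s x ∧ G.Adj x y := by
  by_contra hno
  push Not at hno
  have hall := hc {v | v = s ∨ G.Adj s v} ⟨s, Or.inl rfl⟩ (by
    rintro v (rfl | hv) u huv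
    · exact Or.inr huv
    · by_contra hu
      have hu : ¬ (u = s ∨ G.Adj s u) := hu
      rw [not_or] at hu
      exact hno u v hu.1 hu.2 hv huv)
  have huniv : insert s (nb G s) = Finset.univ := by
    ext v; have : v = s ∨ G.Adj s v := hall v
    simpa using this
  have hcard : Fintype.card V = k + 1 := by
    rw [← Finset.card_univ, ← huniv, Finset.card_insert_of_notMem (by simp), hreg]
  obtain ⟨u, v, huv, hadj⟩ := hnt
  have : nb G u ⊂ Finset.univ.erase u := by
    refine ⟨fun w hw => ?_, fun h => ?_⟩
    · have := mem_nb.1 hw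
      simp; rintro rfl; exact G.loopless.irrefl _ this
    · exact hadj (mem_nb.1 (h (by simp [huv.symm])))
  have := Finset.card_lt_card this
  rw [hreg, Finset.card_erase_of_mem (by simp), Finset.card_univ] at this
  omega

theorem slack_pair [Fintype V] {G : SimpleGraph V} {k : ℕ} {s y x : V} (hdeg : ∀ v, (nb G v).card ≤ k)
    (h2 : Cn2 G s y) (hsy : y ≠ s) (hx : G.Adj s x) (hxy : G.Adj x y) {α : V → Fin k} (ha : α s = α y) :
    Slack G {s, y} α := by
  constructor
  · intro v _
    exact (wt_le_card _ _ _ _).trans (hdeg v)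
  · intro T hT hTF hcl
    have := h2 T hT (fun h => hTF s h (by simp)) (fun h => hTF y h (by simp)) (by
      intro v hv u huv
      by_cases h : u ∈ ({s, y} : Finset V)
      · right; simpa using h
      · left; exact hcl v hv u huv h) x
    have hxT : x ∈ T := by
      rcases this with h | h | h
      · exact h
      · subst h; exact absurd hx (G.loopless.irrefl _)
      · subst h; exact absurd hxy (G.loopless.irrefl _)
    refine ⟨x, hxT, ?_⟩
    have e : nb G x ∩ {s, y} = {s, y} := by
      ext u; simp only [Finset.mem_inter, mem_nb, Finset.mem_insert, Finset.mem_singleton]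
      constructor
      · exact fun h => h.2
      · rintro (rfl | rfl)
        · exact ⟨hx.symm, Or.inl rfl⟩
        · exact ⟨hxy, Or.inr rfl⟩
    have h1 := Finset.card_inter_add_card_sdiff (nb G x) {s, y}
    have h3 := hdeg x
    unfold wt
    rw [e] at h1 ⊢
    rw [Finset.card_pair hsy.symm] at h1
    have : (({s, y} : Finset V).image α).card = 1 := by
      rw [Finset.image_insert, Finset.image_singleton, ha]; simp
    omega

theorem brooks_helper.{u} {d : ℕ} (hd : 3 ≤ d) {V : Type u} [Fintype V] {G : SimpleGraph V} 
    (ih : ∀ m < Fintype.card V, ∀ (W : Type u) [Fintype W], Fintype.card W = m → ∀ H : SimpleGraph W,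
      (∀ v, (nb H v).card ≤ d) → (∀ s : Finset W, (∀ u ∈ s, ∀ v ∈ s, u ≠ v → H.Adj u v) → s.card ≤ d) →
      ∃ c, IsProperColoring H d c)
    (hdeg : ∀ v, (nb G v).card ≤ d)
    (hcl : ∀ s : Finset V, (∀ u ∈ s, ∀ v ∈ s, u ≠ v → G.Adj u v) → s.card ≤ d)
    (X : Set V) (hX : ∃ v, v ∉ X) : ∃ c : V → Fin d, ∀ u ∈ X, ∀ v ∈ X, G.Adj u v → c u ≠ c v := by
  obtain ⟨v, hv⟩ := hX
  obtain ⟨c, hc⟩ := ih (Fintype.card X) (Fintype.card_subtype_lt hv) X rfl (G.induce X) (by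
    intro w
    rw [← Finset.card_map (Function.Embedding.subtype _)]
    refine (Finset.card_le_card ?_).trans (hdeg w)
    intro u hu
    simp only [Finset.mem_map, mem_nb] at hu
    obtain ⟨u', h, rfl⟩ := hu
    exact mem_nb.2 h) (by
    intro s hs
    rw [← Finset.card_map (Function.Embedding.subtype _)]
    apply hcl
    intro a ha b hb hab
    simp only [Finset.mem_map] at ha hb
    obtain ⟨a', ha', rfl⟩ := ha
    obtain ⟨b', hb', rfl⟩ := hb
    exact hs a' ha' b' hb' (by rintro rfl; exact hab rfl))
  refine ⟨fun v => if h : v ∈ X then c ⟨v, h⟩ else ⟨0, by omega⟩, fun u hu v hv huv => ?_⟩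
  simp only [hu, hv, dif_pos]
  exact hc (u := ⟨u, hu⟩) (v := ⟨v, hv⟩) huv

theorem brooks_aux.{u} {d : ℕ} (hd : 3 ≤ d) (n : ℕ) : ∀ (V : Type u) [Fintype V], Fintype.card V = n → ∀ G : SimpleGraph V,
      (∀ v, (nb G v).card ≤ d) → (∀ s : Finset V, (∀ u ∈ s, ∀ v ∈ s, u ≠ v → G.Adj u v) → s.card ≤ d) →
      ∃ c, IsProperColoring G d c := by
  induction n using Nat.strong_induction_on with
  | _ n ih =>
  intro V _ hn G hdeg hcl
  rw [← hn] at ih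
  have hX := brooks_helper hd ih hdeg hcl
  rcases isEmpty_or_nonempty V with hE | hE
  · exact ⟨fun _ => ⟨0, by omega⟩, fun u => (hE.false u).elim⟩
  by_cases hc : Cn G
  swap
  · unfold Cn at hc
    push Not at hc
    obtain ⟨T, ⟨t, ht⟩, hT, v, hv⟩ := hc
    obtain ⟨c1, h1⟩ := hX T ⟨v, hv⟩
    obtain ⟨c2, h2⟩ := hX Tᶜ ⟨t, by simpa using ht⟩
    refine ⟨fun v => if v ∈ T then c1 v else c2 v, fun u w huw => ?_⟩
    have e : u ∈ T ↔ w ∈ T := ⟨fun h => hT u h w huw, fun h => hT w h u huw.symm⟩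
    by_cases hu : u ∈ T
    · simp only [hu, e.1 hu, if_true]; exact h1 u hu w (e.1 hu) huw
    · have hw : w ∉ T := fun h => hu (e.2 h)
      simp only [hu, hw, if_false]; exact h2 u hu w hw huw
  by_cases hlow : ∃ v, (nb G v).card < d
  · obtain ⟨v, hv⟩ := hlow
    obtain ⟨β, hb, -⟩ := slack_exists (G := G) (F := ∅) (α := fun _ => (⟨0, by omega⟩ : Fin d))
      ⟨fun v _ => (wt_le_card _ _ _ _).trans (hdeg v), fun T hT _ hcl =>
        ⟨v, hc T hT (fun a ha b hab => hcl a ha b hab (by simp)) v, (wt_le_card _ _ _ _).trans_lt hv⟩⟩ (by simp)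
    exact ⟨β, hb⟩
  push Not at hlow
  have hreg : ∀ v, (nb G v).card = d := fun v => le_antisymm (hdeg v) (hlow v)
  by_cases hnc : NoCut G
  swap
  · unfold NoCut at hnc
    push Not at hnc
    obtain ⟨x, T, ⟨t, ht⟩, hxT, hT, w, hwT, hwx⟩ := hnc
    obtain ⟨c1, h1⟩ := hX (insert x T) ⟨w, by simp [hwT, hwx]⟩
    obtain ⟨c2, h2⟩ := hX Tᶜ ⟨t, by simpa using ht⟩
    let σ := Equiv.swap (c1 x) (c2 x)
    have key : ∀ u w, u ∈ T → w ∉ T → G.Adj u w → c1 u ≠ σ (c2 w) := by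
      intro u w hu hw huw
      rcases hT u hu w huw with h | rfl
      · exact absurd h hw
      · rw [Equiv.swap_apply_right]
        exact h1 u (Or.inr hu) _ (Or.inl rfl) huw
    refine ⟨fun v => if v ∈ T then c1 v else σ (c2 v), fun u w huw => ?_⟩
    by_cases hu : u ∈ T <;> by_cases hw : w ∈ T
    · simp only [hu, hw, if_true]; exact h1 u (Or.inr hu) w (Or.inr hw) huw
    · simp only [hu, hw, if_true, if_false]; exact key u w hu hw huw
    · simp only [hu, hw, if_true, if_false]; exact (key w u hw hu huw.symm).symm
    · simp only [hu, hw, if_false]; exact fun h => h2 u hu w hw huw (σ.injective h)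
  obtain ⟨s, hs⟩ := good_vertex hc hnc (fun v => by rw [hreg]; exact hd)
  have hnt : ∃ u v, u ≠ v ∧ ¬ G.Adj u v := by
    by_contra hno
    push Not at hno
    have := hcl (insert s (nb G s)) (fun u _ v _ h => hno u v h)
    rw [Finset.card_insert_of_notMem (by simp), hreg] at this
    omega
  obtain ⟨y, x, h1, h2, h3, h4⟩ := exists_dist2 hc hreg hnt s
  obtain ⟨β, hb, -⟩ := slack_exists (slack_pair (α := fun _ => (⟨0, by omega⟩ : Fin d)) hdeg (hs y h1) h1 h3 h4 rfl) (by
    intro u hu v hv huv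
    simp only [Finset.mem_insert, Finset.mem_singleton] at hu hv
    rcases hu with rfl | rfl <;> rcases hv with rfl | rfl
    · exact absurd huv (G.loopless.irrefl _)
    · exact absurd huv h2
    · exact absurd huv.symm h2
    · exact absurd huv (G.loopless.irrefl _))
  exact ⟨β, hb⟩

theorem brooks [Fintype V] {d : ℕ} (hd : 3 ≤ d) (G : SimpleGraph V) (h1 : ∀ v, (nb G v).card ≤ d)
    (h2 : ∀ s : Finset V, (∀ u ∈ s, ∀ v ∈ s, u ≠ v → G.Adj u v) → s.card ≤ d) :
    ∃ c, IsProperColoring G d c := brooks_aux hd _ V rfl G h1 h2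

/-- An independent set can be made monochromatic. -/
theorem indep_mono [Fintype V] {k : ℕ} (hk : 4 ≤ k) (G : SimpleGraph V) (hdeg : ∀ v, (nb G v).card ≤ k)
    (hcl : ∀ s : Finset V, (∀ u ∈ s, ∀ v ∈ s, u ≠ v → G.Adj u v) → s.card < k)
    (I : Finset V) (hI : ∀ u ∈ I, ∀ v ∈ I, ¬ G.Adj u v) :
    ∃ (c : V → Fin k) (e : Fin k), IsProperColoring G k c ∧ ∀ v ∈ I, c v = e := by
  obtain ⟨J, hJ, hmax⟩ := Finset.exists_max_image
    (Finset.univ.filter (fun J : Finset V => I ⊆ J ∧ ∀ u ∈ J, ∀ v ∈ J, ¬ G.Adj u v)) Finset.card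
    ⟨I, by simpa using hI⟩
  have hJ' : I ⊆ J ∧ ∀ u ∈ J, ∀ v ∈ J, ¬ G.Adj u v := by simpa using hJ
  have hmx : ∀ v, v ∉ J → ∃ u ∈ J, G.Adj v u := by
    intro v hv
    by_contra hno
    push Not at hno
    have := hmax (insert v J) (by
      simp only [Finset.mem_filter, Finset.mem_univ, true_and]
      refine ⟨hJ'.1.trans (Finset.subset_insert _ _), ?_⟩
      intro a ha b hb hab
      rcases Finset.mem_insert.1 ha with rfl | ha' <;> rcases Finset.mem_insert.1 hb with rfl | hb'
      · exact G.loopless.irrefl _ hab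
      · exact hno b hb' hab
      · exact hno a ha' hab.symm
      · exact hJ'.2 a ha' b hb' hab)
    rw [Finset.card_insert_of_notMem hv] at this
    omega
  obtain ⟨m, rfl⟩ : ∃ m, k = m + 1 := ⟨k - 1, by omega⟩
  obtain ⟨c, hc⟩ := brooks (d := m) (by omega) (rst G {v | v ∉ J}) (by
    intro v
    by_cases hv : v ∈ J
    · have : nb (rst G {v | v ∉ J}) v = ∅ := by
        ext u; simp only [mem_nb, Finset.notMem_empty, iff_false]
        exact fun h => h.2.1 hv
      rw [this]; simp
    · obtain ⟨u, hu, hvu⟩ := hmx v hv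
      have : nb (rst G {v | v ∉ J}) v ⊂ nb G v := by
        refine ⟨fun w hw => mem_nb.2 (mem_nb.1 hw).1, fun h => ?_⟩
        exact (mem_nb.1 (h (mem_nb.2 hvu))).2.2 hu
      have := Finset.card_lt_card this
      have := hdeg v
      omega) (by
    intro s hs
    have := hcl s (fun u hu v hv h => (hs u hu v hv h).1)
    omega)
  refine ⟨fun v => if v ∈ J then Fin.last m else (c v).castSucc, Fin.last m, ?_, ?_⟩
  · intro u v huv
    by_cases hu : u ∈ J <;> by_cases hv : v ∈ J
    · exact absurd huv (hJ'.2 u hu v hv)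
    · simp only [hu, hv, if_true, if_false]; exact (Fin.castSucc_lt_last _).ne'
    · simp only [hu, hv, if_true, if_false]; exact (Fin.castSucc_lt_last _).ne
    · simp only [hu, hv, if_false]
      intro h
      exact hc (u := u) (v := v) ⟨huv, hu, hv⟩ (Fin.castSucc_injective _ h)
  · intro v hv; simp [hJ'.1 hv]

structure QD [Fintype V] (G : SimpleGraph V) (k : ℕ) (Q : Finset V) (u : V → V) : Prop where
  card : Q.card = k
  adj : ∀ q ∈ Q, ∀ w, G.Adj q w ↔ (w ∈ Q ∧ w ≠ q) ∨ w = u q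
  uQ : ∀ q ∈ Q, u q ∉ Q

theorem QD.mk' [Fintype V] {G : SimpleGraph V} {k : ℕ} {Q : Finset V} (hk : 1 ≤ k) (hreg : ∀ v, (nb G v).card = k)
    (hQ : Q.card = k) (hcl : ∀ a ∈ Q, ∀ b ∈ Q, a ≠ b → G.Adj a b) : ∃ u, QD G k Q u := by
  have : ∀ q ∈ Q, ∃ w, nb G q \ Q = {w} := by
    intro q hq
    rw [← Finset.card_eq_one]
    have h1 : nb G q ∩ Q = Q.erase q := by
      ext w; simp only [Finset.mem_inter, mem_nb, Finset.mem_erase]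
      constructor
      · rintro ⟨h, h'⟩; exact ⟨fun e => by subst e; exact G.loopless.irrefl _ h, h'⟩
      · rintro ⟨h, h'⟩; exact ⟨hcl q hq w h' (Ne.symm h), h'⟩
    have h2 := Finset.card_inter_add_card_sdiff (nb G q) Q
    rw [h1, Finset.card_erase_of_mem hq, hreg] at h2
    omega
  choose! u hu using this
  have hmem : ∀ q ∈ Q, ∀ w, (G.Adj q w ∧ w ∉ Q) ↔ w = u q := by
    intro q hq w
    have := Finset.ext_iff.1 (hu q hq) w
    simpa using this
  refine ⟨u, hQ, fun q hq w => ?_, fun q hq => ((hmem q hq _).2 rfl).2⟩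
  constructor
  · intro h
    by_cases hw : w ∈ Q
    · left; exact ⟨hw, fun e => by subst e; exact G.loopless.irrefl _ h⟩
    · right; exact (hmem q hq w).1 ⟨h, hw⟩
  · rintro (⟨h1, h2⟩ | h)
    · exact hcl q hq w h1 h2.symm
    · exact ((hmem q hq w).2 h).1

section
variable [Fintype V] {G : SimpleGraph V} {k : ℕ} {Q : Finset V} {u : V → V}

theorem QD.clq (h : QD G k Q u) {a b : V} (ha : a ∈ Q) (hb : b ∈ Q) (hab : a ≠ b) : G.Adj a b :=
  (h.adj a ha b).2 (Or.inl ⟨hb, hab.symm⟩)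

theorem QD.adju (h : QD G k Q u) {a : V} (ha : a ∈ Q) : G.Adj a (u a) :=
  (h.adj a ha _).2 (Or.inr rfl)

theorem QD.inj (h : QD G k Q u) {c : V → Fin k} (hc : IsProperColoring G k c) {a b : V} (ha : a ∈ Q) (hb : b ∈ Q)
    (hab : c a = c b) : a = b := by
  by_contra hne
  exact hc (h.clq ha hb hne) hab

theorem QD.surj (h : QD G k Q u) {c : V → Fin k} (hc : IsProperColoring G k c) (e : Fin k) : ∃ q ∈ Q, c q = e := by
  have : Q.image c = Finset.univ := by
    apply Finset.eq_univ_of_card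
    rw [Finset.card_image_of_injOn (fun a ha b hb hab => h.inj hc (by simpa using ha) (by simpa using hb) hab), h.card]; simp
  have he : e ∈ Q.image c := by rw [this]; simp
  simpa using he

theorem QD.swap (h : QD G k Q u) {c : V → Fin k} (hc : IsProperColoring G k c) {q q' : V} (hq : q ∈ Q) (hq' : q' ∈ Q)
    (hne : q ≠ q') (h1 : c (u q) ≠ c q') (h2 : c (u q') ≠ c q) :
    ∃ c2, KE G ∅ c c2 ∧ IsProperColoring G k c2 ∧ c2 q = c q' ∧ c2 q' = c q ∧ ∀ v, v ≠ q → v ≠ q' → c2 v = c v := by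
  have hs : Stp G ∅ c (swp c (c q) (c q') {q, q'}) := by
    apply Stp.swp
    · simp
    · rintro v (rfl | rfl)
      · exact Or.inl rfl
      · exact Or.inr rfl
    · rintro v (rfl | rfl) w hvw hw
      · rcases (h.adj _ hq w).1 hvw with ⟨hw1, hw2⟩ | rfl
        · rcases hw with hw | hw
          · exact Or.inl (h.inj hc hw1 hq hw)
          · exact Or.inr (h.inj hc hw1 hq' hw)
        · rcases hw with hw | hw
          · exact absurd hw.symm (hc hvw)
          · exact absurd hw h1
      · rcases (h.adj _ hq' w).1 hvw with ⟨hw1, hw2⟩ | rfl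
        · rcases hw with hw | hw
          · exact Or.inl (h.inj hc hw1 hq hw)
          · exact Or.inr (h.inj hc hw1 hq' hw)
        · rcases hw with hw | hw
          · exact absurd hw h2
          · exact absurd hw.symm (hc hvw)
  refine ⟨_, hs.ke, hs.proper hc, ?_, ?_, ?_⟩
  · simp [swp]
  · simp [swp]
  · intro v hv hv'; simp [swp, hv, hv']

theorem QD.ex4 (h : QD G k Q u) (hk : 4 ≤ k) (a b c : V) : ∃ m ∈ Q, m ≠ a ∧ m ≠ b ∧ m ≠ c := by
  by_contra hno
  push Not at hno
  have : Q ⊆ {a, b, c} := by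
    intro m hm
    have := hno m hm
    simp; tauto
  have := (Finset.card_le_card this).trans Finset.card_le_three
  rw [h.card] at this; omega

/-- moving the colour `C` to `i` -/
theorem QD.move (h : QD G k Q u) (hk : 4 ≤ k) {c : V → Fin k} (hc : IsProperColoring G k c) {i j : V}
    (hi : i ∈ Q) (hj : j ∈ Q) (hij : i ≠ j) (hfi : c (u i) ≠ c (u j)) :
    ∃ c2, KE G ∅ c c2 ∧ IsProperColoring G k c2 ∧ (∀ v, v ∉ Q → c2 v = c v) ∧ c2 i = c (u j) := by
  obtain ⟨l, hl, hlC⟩ := h.surj hc (c (u j))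
  have hlj : l ≠ j := by rintro rfl; exact hc (h.adju hl) hlC
  by_cases hil : i = l
  · subst hil; exact ⟨c, KE.rfl, hc, fun _ _ => rfl, hlC⟩
  -- final swap
  have fin : ∀ c1 : V → Fin k, KE G ∅ c c1 → IsProperColoring G k c1 → (∀ v, v ∉ Q → c1 v = c v) →
      c1 l = c l → c1 i ≠ c (u l) →
      ∃ c2, KE G ∅ c c2 ∧ IsProperColoring G k c2 ∧ (∀ v, v ∉ Q → c2 v = c v) ∧ c2 i = c (u j) := by
    intro c1 h1 h2 h3 h4 h5
    obtain ⟨c2, e1, e2, e3, e4, e5⟩ := h.swap h2 hi hl hil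
      (by rw [h3 _ (h.uQ i hi), h4, hlC]; exact hfi) (by rw [h3 _ (h.uQ l hl)]; exact h5.symm)
    refine ⟨c2, h1.trans e1, e2, fun v hv => ?_, by rw [e3, h4, hlC]⟩
    rw [e5 v (by rintro rfl; exact hv hi) (by rintro rfl; exact hv hl), h3 v hv]
  have ne : ∀ {a b : V}, a ∈ Q → b ∈ Q → a ≠ b → c a ≠ c b := fun ha hb hab => hc (h.clq ha hb hab)
  by_cases h1 : c i = c (u l)
  swap
  · exact fin c KE.rfl hc (fun _ _ => rfl) rfl h1
  have hnq : ∀ {a v : V}, a ∈ Q → v ∉ Q → v ≠ a := by rintro a v ha hv rfl; exact hv ha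
  by_cases h2 : c j = c (u i)
  swap
  · obtain ⟨c2, e1, e2, e3, e4, e5⟩ := h.swap hc hi hj hij (Ne.symm h2) (by
      rw [← hlC]; exact ne hl hi (Ne.symm hil))
    refine fin c2 e1 e2 (fun v hv => e5 v (hnq hi hv) (hnq hj hv)) (e5 l (Ne.symm hil) hlj) ?_
    rw [e3, ← h1]; exact ne hj hi hij.symm
  obtain ⟨m, hm, hmi, hmj, hml⟩ := h.ex4 hk i j l
  by_cases h3 : c (u m) = c i
  swap
  · obtain ⟨c2, e1, e2, e3, e4, e5⟩ := h.swap hc hi hm (Ne.symm hmi) (by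
      rw [← h2]; exact ne hj hm (Ne.symm hmj)) h3
    refine fin c2 e1 e2 (fun v hv => e5 v (hnq hi hv) (hnq hm hv)) (e5 l (Ne.symm hil) (Ne.symm hml)) ?_
    rw [e3, ← h1]; exact ne hm hi hmi
  · obtain ⟨c2, e1, e2, e3, e4, e5⟩ := h.swap hc hj hm (Ne.symm hmj) (by
      rw [← hlC]; exact ne hl hm (Ne.symm hml)) (by rw [h3]; exact ne hi hj hij)
    have o2 : ∀ v, v ∉ Q → c2 v = c v := fun v hv => e5 v (hnq hj hv) (hnq hm hv)
    have i2 : c2 i = c i := e5 i hij (Ne.symm hmi)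
    obtain ⟨c3, d1, d2, d3, d4, d5⟩ := h.swap e2 hi hj hij (by
      rw [o2 _ (h.uQ i hi), e3, ← h2]; exact ne hj hm (Ne.symm hmj)) (by
      rw [o2 _ (h.uQ j hj), i2, ← hlC]; exact ne hl hi (Ne.symm hil))
    refine fin c3 (e1.trans d1) d2 (fun v hv => (d5 v (hnq hi hv) (hnq hj hv)).trans (o2 v hv)) ?_ ?_
    · rw [d5 l (Ne.symm hil) hlj, e5 l hlj (Ne.symm hml)]
    · rw [d3, e3, ← h1]; exact ne hm hi hmi

theorem QD.claimE (h : QD G k Q u) (hk : 4 ≤ k) (hdeg : ∀ v, (nb G v).card ≤ k)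
    {c c' : V → Fin k} (hc : IsProperColoring G k c) (hc' : IsProperColoring G k c')
    (hag : ∀ v, v ∉ Q → c' v = c v) : KE G ∅ c c' := by
  obtain ⟨j, hj⟩ : Q.Nonempty := by rw [← Finset.card_pos, h.card]; omega
  obtain ⟨i, hi, hiC⟩ := h.surj hc' (c (u j))
  have hij : i ≠ j := by
    rintro rfl; rw [← hag _ (h.uQ _ hi)] at hiC; exact hc' (h.adju hi) hiC
  obtain ⟨c2, h1, h2, h3, h4⟩ := h.move hk hc hi hj hij (by
    rw [← hiC, ← hag _ (h.uQ _ hi)]; exact (hc' (h.adju hi)).symm)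
  refine h1.trans ?_
  let F : Finset V := (Q.erase i)ᶜ
  have hF : ∀ v, v ∉ F ↔ (v ∈ Q ∧ v ≠ i) := by intro v; simp [F]; tauto
  refine (slack_equiv (F := F) ?_ h2 hc' ?_).zero
  · constructor
    · intro v _; exact (wt_le_card _ _ _ _).trans (hdeg v)
    · rintro T ⟨t, ht⟩ hTF hcl
      have hjT : j ∈ T := by
        by_cases htj : t = j
        · subst htj; exact ht
        · exact hcl t ht j (h.clq ((hF t).1 (hTF t ht)).1 hj htj) ((hF j).2 ⟨hj, hij.symm⟩)
      refine ⟨j, hjT, ?_⟩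
      have huF : u j ∈ F := by
        by_contra hh; exact h.uQ j hj ((hF _).1 hh).1
      have hiF : i ∈ F := by
        by_contra hh; exact ((hF _).1 hh).2 rfl
      have e : nb G j ∩ F = {i, u j} := by
        ext w
        simp only [Finset.mem_inter, mem_nb, Finset.mem_insert, Finset.mem_singleton]
        constructor
        · rintro ⟨hw, hwF⟩
          rcases (h.adj j hj w).1 hw with hw | hw
          · left; by_contra hne; exact (hF w).2 ⟨hw.1, hne⟩ hwF
          · exact Or.inr hw
        · rintro (rfl | rfl)
          · exact ⟨h.clq hj hi hij.symm, hiF⟩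
          · exact ⟨h.adju hj, huF⟩
      have h5 := Finset.card_inter_add_card_sdiff (nb G j) F
      have h6 := hdeg j
      unfold wt
      rw [e] at h5 ⊢
      rw [Finset.card_pair (by rintro rfl; exact h.uQ j hj hi)] at h5
      have : (({i, u j} : Finset V).image c2).card = 1 := by
        rw [Finset.image_insert, Finset.image_singleton, h4, h3 _ (h.uQ j hj)]; simp
      omega
  · intro v hv
    by_cases hvQ : v ∈ Q
    · have : v = i := by by_contra hne; exact (hF v).2 ⟨hvQ, hne⟩ hv
      subst this; rw [hiC, h4]
    · rw [hag v hvQ, h3 v hvQ]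

theorem QD.nbr (h : QD G k Q u) {v w : V} (hv : v ∉ Q) (hw : w ∈ Q) (hvw : G.Adj v w) : v = u w := by
  rcases (h.adj w hw v).1 hvw.symm with h' | h'
  · exact absurd h'.1 hv
  · exact h'

theorem QD.good (h : QD G k Q u) {c : V → Fin k} (hc : IsProperColoring G k c) {a b : Fin k} {S : Set V}
    (hSQ : ∀ v ∈ S, v ∉ Q) (hS2 : ∀ v ∈ S, c v = a ∨ c v = b)
    (hS3 : ∀ v ∈ S, ∀ w, w ∉ Q → G.Adj v w → (c w = a ∨ c w = b) → w ∈ S)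
    {qa qb : V} (hqa : qa ∈ Q) (hqb : qb ∈ Q) (ha : c qa = a) (hb : c qb = b)
    (hgood : c (u qa) ≠ b ∨ c (u qb) ≠ a ∨ (u qa ∈ S ↔ u qb ∈ S)) :
    ∃ c', KE G ∅ c c' ∧ ∀ v, v ∉ Q → c' v = swp c a b S v := by
  have fa : c (u qa) ≠ a := by rw [← ha]; exact (hc (h.adju hqa)).symm
  have fb : c (u qb) ≠ b := by rw [← hb]; exact (hc (h.adju hqb)).symm
  have sa : u qa ∈ S → c (u qa) = b := fun hs => (hS2 _ hs).resolve_left fa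
  have sb : u qb ∈ S → c (u qb) = a := fun hs => (hS2 _ hs).resolve_right fb
  by_cases hno : u qa ∉ S ∧ u qb ∉ S
  · refine ⟨_, (Stp.swp (G := G) (F := ∅) a b S (by simp) hS2 ?_).ke, fun _ _ => rfl⟩
    intro v hv w hvw hw
    by_cases hwQ : w ∈ Q
    · exfalso
      have := h.nbr (hSQ v hv) hwQ hvw
      rcases hw with hw | hw
      · rw [h.inj hc hwQ hqa (hw.trans ha.symm)] at this; rw [this] at hv; exact hno.1 hv
      · rw [h.inj hc hwQ hqb (hw.trans hb.symm)] at this; rw [this] at hv; exact hno.2 hv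
    · exact hS3 v hv w hwQ hvw hw
  · have pa : c (u qa) = b → u qa ∈ S := by intro e; by_contra hn; tauto
    have pb : c (u qb) = a → u qb ∈ S := by intro e; by_contra hn; tauto
    refine ⟨_, (Stp.swp (G := G) (F := ∅) a b (S ∪ {qa, qb}) (by simp) ?_ ?_).ke, ?_⟩
    · rintro v (hv | rfl | rfl)
      · exact hS2 v hv
      · exact Or.inl ha
      · exact Or.inr hb
    · have inQ : ∀ w ∈ Q, (c w = a ∨ c w = b) → w ∈ S ∪ {qa, qb} := by
        rintro w hwQ (hw | hw)
        · right; left; exact h.inj hc hwQ hqa (hw.trans ha.symm)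
        · right; right; exact h.inj hc hwQ hqb (hw.trans hb.symm)
      intro v hv w hvw hw
      by_cases hwQ : w ∈ Q
      · exact inQ w hwQ hw
      rcases hv with hv | rfl | rfl
      · left; exact hS3 v hv w hwQ hvw hw
      · left
        rw [h.nbr hwQ hqa hvw.symm] at hw ⊢
        rcases hw with hw | hw
        · exact absurd hw fa
        · exact pa hw
      · left
        rw [h.nbr hwQ hqb hvw.symm] at hw ⊢
        rcases hw with hw | hw
        · exact pb hw
        · exact absurd hw fb
    · intro v hv
      have h1 : v ≠ qa := by rintro rfl; exact hv hqa
      have h2 : v ≠ qb := by rintro rfl; exact hv hqb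
      simp [swp, h1, h2]

theorem QD.lift1 (h : QD G k Q u) {c : V → Fin k} (hc : IsProperColoring G k c) {a b : Fin k} {S : Set V}
    (hSQ : ∀ v ∈ S, v ∉ Q) (hS2 : ∀ v ∈ S, c v = a ∨ c v = b)
    (hS3 : ∀ v ∈ S, ∀ w, w ∉ Q → G.Adj v w → (c w = a ∨ c w = b) → w ∈ S)
    (hab : a ≠ b) {qa qb : V} (hqa : qa ∈ Q) (hqb : qb ∈ Q) (ha : c qa = a) (hb : c qb = b)
    (fa : c (u qa) = b) (fb : c (u qb) = a) (hin : u qa ∈ S) (hout : u qb ∉ S)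
    (hnc : ∃ i ∈ Q, ∃ j ∈ Q, swp c a b S (u i) ≠ swp c a b S (u j)) :
    ∃ c', KE G ∅ c c' ∧ ∀ v, v ∉ Q → c' v = swp c a b S v := by
  have hqab : qa ≠ qb := by rintro rfl; exact hab (ha.symm.trans hb)
  have hnq : ∀ {a v : V}, a ∈ Q → v ∉ Q → v ≠ a := by rintro a v ha hv rfl; exact hv ha
  have ne : ∀ {a b : V}, a ∈ Q → b ∈ Q → a ≠ b → c a ≠ c b := fun ha hb hab => hc (h.clq ha hb hab)
  -- transfer along a swap inside `Q`
  have trans : ∀ c2 : V → Fin k, KE G ∅ c c2 → IsProperColoring G k c2 → (∀ v, v ∉ Q → c2 v = c v) →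
      (∃ pa ∈ Q, ∃ pb ∈ Q, c2 pa = a ∧ c2 pb = b ∧
        (c (u pa) ≠ b ∨ c (u pb) ≠ a ∨ (u pa ∈ S ↔ u pb ∈ S))) →
      ∃ c', KE G ∅ c c' ∧ ∀ v, v ∉ Q → c' v = swp c a b S v := by
    rintro c2 h1 h2 h3 ⟨pa, hpa, pb, hpb, e1, e2, e3⟩
    obtain ⟨c', g1, g2⟩ := h.good h2 (a := a) (b := b) (S := S) hSQ
      (fun v hv => by rw [h3 v (hSQ v hv)]; exact hS2 v hv)
      (fun v hv w hw hvw hcw => hS3 v hv w hw hvw (by rwa [h3 w hw] at hcw)) hpa hpb e1 e2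
      (by rw [h3 _ (h.uQ _ hpa), h3 _ (h.uQ _ hpb)]; exact e3)
    refine ⟨c', h1.trans g1, fun v hv => ?_⟩
    rw [g2 v hv]; simp [swp, h3 v hv]
  by_cases h3 : ∃ m ∈ Q, c (u m) ≠ a ∧ c (u m) ≠ b
  · obtain ⟨m, hm, hma, hmb⟩ := h3
    have hmqa : m ≠ qa := by rintro rfl; exact hmb fa
    have hmqb : m ≠ qb := by rintro rfl; exact hma fb
    obtain ⟨c2, e1, e2, e3, e4, e5⟩ := h.swap hc hqa hm hmqa.symm (by
      rw [fa, ← hb]; exact ne hqb hm hmqb.symm) (by rw [ha]; exact hma)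
    exact trans c2 e1 e2 (fun v hv => e5 v (hnq hqa hv) (hnq hm hv))
      ⟨m, hm, qb, hqb, by rw [e4, ha], by rw [e5 qb hqab.symm hmqb.symm, hb], Or.inl hmb⟩
  push Not at h3
  obtain ⟨m, hm, hma⟩ : ∃ m ∈ Q, swp c a b S (u m) ≠ a := by
    by_contra hno
    push Not at hno
    obtain ⟨i, hi, j, hj, hne⟩ := hnc
    exact hne ((hno i hi).trans (hno j hj).symm)
  have hmqa : m ≠ qa := by
    rintro rfl; apply hma; simp [swp, hin, fa]
  have hmqb : m ≠ qb := by
    rintro rfl; apply hma; simp [swp, hout, fb]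
  by_cases hmS : u m ∈ S
  · have hfm : c (u m) = a := by
      rcases hS2 _ hmS with h' | h'
      · exact h'
      · exact absurd (by simp [swp, hmS, h']) hma
    obtain ⟨c2, e1, e2, e3, e4, e5⟩ := h.swap hc hqb hm hmqb.symm (by
      rw [fb, ← ha]; exact ne hqa hm hmqa.symm) (by rw [hb, hfm]; exact hab)
    exact trans c2 e1 e2 (fun v hv => e5 v (hnq hqb hv) (hnq hm hv))
      ⟨qa, hqa, m, hm, by rw [e5 qa hqab hmqa.symm, ha], by rw [e4, hb], Or.inr (Or.inr (by simp [hin, hmS]))⟩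
  · have hfa : c (u m) ≠ a := by intro h'; apply hma; simp [swp, hmS, h']
    have hfm : c (u m) = b := h3 m hm hfa
    obtain ⟨c2, e1, e2, e3, e4, e5⟩ := h.swap hc hqa hm hmqa.symm (by
      rw [fa, ← hb]; exact ne hqb hm hmqb.symm) (by rw [ha]; exact hfa)
    exact trans c2 e1 e2 (fun v hv => e5 v (hnq hqa hv) (hnq hm hv))
      ⟨m, hm, qb, hqb, by rw [e4, ha], by rw [e5 qb hqab.symm hmqb.symm, hb], Or.inr (Or.inr (by simp [hout, hmS]))⟩

theorem QD.lift (h : QD G k Q u) {c : V → Fin k} (hc : IsProperColoring G k c) {a b : Fin k} {S : Set V}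
    (hSQ : ∀ v ∈ S, v ∉ Q) (hS2 : ∀ v ∈ S, c v = a ∨ c v = b)
    (hS3 : ∀ v ∈ S, ∀ w, w ∉ Q → G.Adj v w → (c w = a ∨ c w = b) → w ∈ S)
    (hnc : ∃ i ∈ Q, ∃ j ∈ Q, swp c a b S (u i) ≠ swp c a b S (u j)) :
    ∃ c', KE G ∅ c c' ∧ ∀ v, v ∉ Q → c' v = swp c a b S v := by
  by_cases hab : a = b
  · subst hab; exact ⟨c, KE.rfl, fun v _ => by simp [swp]⟩
  obtain ⟨qa, hqa, ha⟩ := h.surj hc a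
  obtain ⟨qb, hqb, hb⟩ := h.surj hc b
  by_cases hg : c (u qa) ≠ b ∨ c (u qb) ≠ a ∨ (u qa ∈ S ↔ u qb ∈ S)
  · exact h.good hc hSQ hS2 hS3 hqa hqb ha hb hg
  push Not at hg
  obtain ⟨fa, fb, hh⟩ := hg
  by_cases hin : u qa ∈ S
  · have hout : u qb ∉ S := by tauto
    exact h.lift1 hc hSQ hS2 hS3 hab hqa hqb ha hb fa fb hin hout hnc
  · have hout : u qb ∈ S := by tauto
    rw [swp_comm] at hnc ⊢
    exact h.lift1 hc hSQ (fun v hv => (hS2 v hv).symm) (fun v hv w h1 h2 h3 => hS3 v hv w h1 h2 h3.symm)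
      (Ne.symm hab) hqb hqa hb ha fb fa hout hin hnc

/-- the graph outside the clique with one extra edge -/
def gij (G : SimpleGraph V) (Q : Finset V) (x y : V) : SimpleGraph V where
  Adj v w := (G.Adj v w ∧ v ∉ Q ∧ w ∉ Q) ∨ (x ≠ y ∧ ((v = x ∧ w = y) ∨ (v = y ∧ w = x)))
  symm := ⟨fun v w h => by
    rcases h with h | h
    · exact Or.inl ⟨h.1.symm, h.2.2, h.2.1⟩
    · right; tauto⟩
  loopless := ⟨fun v h => by
    rcases h with h | ⟨h1, h2 | h2⟩
    · exact G.loopless.irrefl _ h.1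
    · exact h1 (h2.1.symm.trans h2.2)
    · exact h1 (h2.2.symm.trans h2.1)⟩

theorem gij_nb (h : QD G k Q u) (hdeg : ∀ v, (nb G v).card ≤ k) {i j : V} (hi : i ∈ Q) (hj : j ∈ Q)
    (hne : u i ≠ u j) (v : V) (hv : v ∉ Q) (X : Finset V) (hX : ∀ q ∈ X, q ∈ Q ∧ q ≠ i ∧ q ≠ j ∧ G.Adj v q) :
    (nb (gij G Q (u i) (u j)) v).card + X.card ≤ k := by
  have key : ∀ i j : V, i ∈ Q → j ∈ Q → u i ≠ u j → v = u i → 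
      (∀ q ∈ X, q ∈ Q ∧ q ≠ i ∧ q ≠ j ∧ G.Adj v q) → (nb (gij G Q (u i) (u j)) v).card + X.card ≤ k := by
    intro i j hi hj hne hvi hX
    have hvi' : G.Adj v i := by rw [hvi]; exact (h.adju hi).symm
    have h1 : nb (gij G Q (u i) (u j)) v ⊆ insert (u j) (((nb G v).erase i) \ X) := by
      intro w hw
      rw [mem_nb] at hw
      rcases hw with ⟨h1, h2, h3⟩ | ⟨h1, ⟨h2, h3⟩ | ⟨h2, h3⟩⟩
      · simp only [Finset.mem_insert, Finset.mem_sdiff, Finset.mem_erase, mem_nb]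
        right
        exact ⟨⟨by rintro rfl; exact h3 hi, h1⟩, fun h => h3 (hX w h).1⟩
      · simp [h3]
      · exact absurd (hvi.symm.trans h2) hne
    have h2 := (Finset.card_le_card h1).trans (Finset.card_insert_le _ _)
    rw [Finset.card_sdiff_of_subset (by
      intro q hq
      have := hX q hq
      simp [this.2.1, this.2.2.2])] at h2
    have h3 : X.card + 1 ≤ (nb G v).card := by
      rw [← Finset.card_insert_of_notMem (s := X) (a := i) (fun h => (hX i h).2.1 rfl)]
      apply Finset.card_le_card
      intro w hw
      rcases Finset.mem_insert.1 hw with rfl | hw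
      · simpa using hvi'
      · simpa using (hX w hw).2.2.2
    rw [Finset.card_erase_of_mem (by simpa using hvi')] at h2
    have := hdeg v
    omega
  by_cases h1 : v = u i
  · exact key i j hi hj hne h1 hX
  by_cases h2 : v = u j
  · have := key j i hj hi hne.symm h2 (fun q hq => by have := hX q hq; tauto)
    have hsym : gij G Q (u i) (u j) = gij G Q (u j) (u i) := by
      ext a b
      simp only [gij]
      constructor <;> (intro h; rcases h with h | h; · exact Or.inl h
                       · right; exact ⟨h.1.symm, h.2.symm⟩)
    rw [hsym]; exact this
  · have h3 : nb (gij G Q (u i) (u j)) v ⊆ nb G v \ X := by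
      intro w hw
      rw [mem_nb] at hw
      rcases hw with ⟨h1, h2, h3⟩ | ⟨_, ⟨h4, _⟩ | ⟨h4, _⟩⟩
      · simp only [Finset.mem_sdiff, mem_nb]; exact ⟨h1, fun h => h3 (hX w h).1⟩
      · exact absurd h4 h1
      · exact absurd h4 h2
    have h4 := Finset.card_le_card h3
    have h5 : X ⊆ nb G v := fun q hq => by simpa using (hX q hq).2.2.2
    rw [Finset.card_sdiff_of_subset h5] at h4
    have := Finset.card_le_card h5
    have := hdeg v
    omega

theorem QD.slack (h : QD G k Q u) (hk : 4 ≤ k) (hdeg : ∀ v, (nb G v).card ≤ k)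
    (h2c : ∀ i j, G.Adj i j → Cn2 G i j) {i j : V} (hi : i ∈ Q) (hj : j ∈ Q)
    (hne : u i ≠ u j) (α : V → Fin k) : Slack (gij G Q (u i) (u j)) Q α := by
  constructor
  · intro v hv
    have := gij_nb h hdeg hi hj hne v hv ∅ (by simp)
    exact (wt_le_card _ _ _ _).trans (by simpa using this)
  · intro T hT hTQ hcl
    by_contra hno
    push Not at hno
    obtain ⟨m, hm, hmi, hmj, -⟩ := h.ex4 hk i j i
    have hij : i ≠ j := by rintro rfl; exact hne rfl
    have := h2c i j (h.clq hi hj hij) T hT (fun h => hTQ i h hi) (fun h => hTQ j h hj) (by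
      intro v hv w hvw
      by_cases hwQ : w ∈ Q
      · right
        by_contra hw
        push Not at hw
        have h1 := gij_nb h hdeg hi hj hne v (hTQ v hv) {w} (by
          intro q hq
          rw [Finset.mem_singleton.1 hq]
          exact ⟨hwQ, hw.1, hw.2, hvw⟩)
        have h2 := hno v hv
        have h3 := wt_le_card (gij G Q (u i) (u j)) Q α v
        rw [Finset.card_singleton] at h1
        omega
      · left
        exact hcl v hv w (Or.inl ⟨hvw, hTQ v hv, hwQ⟩) hwQ) m
    rcases this with h' | h' | h'
    · exact hTQ m h' hm
    · exact hmi h'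
    · exact hmj h'

theorem QD.pair (h : QD G k Q u) (hk : 4 ≤ k) (hdeg : ∀ v, (nb G v).card ≤ k)
    (h2c : ∀ i j, G.Adj i j → Cn2 G i j) {i j : V} (hi : i ∈ Q) (hj : j ∈ Q)
    {α β : V → Fin k} (ha : IsProperColoring G k α) (hb : IsProperColoring G k β)
    (hfa : α (u i) ≠ α (u j)) (hfb : β (u i) ≠ β (u j)) : KE G ∅ α β := by
  have hne : u i ≠ u j := fun e => hfa (by rw [e])
  let β' : V → Fin k := fun v => if v ∈ Q then α v else β v
  have hbo : ∀ v, v ∉ Q → β' v = β v := fun v hv => by simp [β', hv]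
  have prop : ∀ c : V → Fin k, IsProperColoring G k c → c (u i) ≠ c (u j) →
      ∀ c' : V → Fin k, (∀ v, v ∉ Q → c' v = c v) → IsProperColoring (gij G Q (u i) (u j)) k c' := by
    intro c h1 h2 c' h3 v w hvw
    rcases hvw with ⟨e1, e2, e3⟩ | ⟨_, ⟨rfl, rfl⟩ | ⟨rfl, rfl⟩⟩
    · rw [h3 v e2, h3 w e3]; exact h1 e1
    · rw [h3 _ (h.uQ i hi), h3 _ (h.uQ j hj)]; exact h2
    · rw [h3 _ (h.uQ i hi), h3 _ (h.uQ j hj)]; exact h2.symm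
  have hpa := prop α ha hfa α (fun _ _ => rfl)
  have hke : KE (gij G Q (u i) (u j)) Q α β' :=
    slack_equiv (h.slack hk hdeg h2c hi hj hne α) hpa (prop β hb hfb β' hbo) (by
      intro v hv; simp [β', hv])
  have main : ∀ d, KE (gij G Q (u i) (u j)) Q α d → ∃ c1, KE G ∅ α c1 ∧ ∀ v, v ∉ Q → c1 v = d v := by
    intro d hd
    induction hd with
    | refl => exact ⟨α, KE.rfl, fun _ _ => rfl⟩
    | @tail d e hd hs ih =>
      obtain ⟨c1, h1, h2⟩ := ih
      have hpe : IsProperColoring (gij G Q (u i) (u j)) k e := hs.proper (KE.proper hd hpa)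
      obtain ⟨a, b, S, hS1, hS2, hS3, hS4⟩ := hs
      have hsw : ∀ v, v ∉ Q → swp c1 a b S v = e v := by
        intro v hv; rw [hS4]; simp [swp, h2 v hv]
      obtain ⟨c2, e1, e2⟩ := h.lift (h1.proper ha) (a := a) (b := b) (S := S) hS1
        (fun v hv => by rw [h2 v (hS1 v hv)]; exact hS2 v hv)
        (fun v hv w hw hvw hcw => hS3 v hv w (Or.inl ⟨hvw, hS1 v hv, hw⟩) (by rwa [h2 w hw] at hcw))
        ⟨i, hi, j, hj, by
          rw [hsw _ (h.uQ i hi), hsw _ (h.uQ j hj)]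
          exact hpe (Or.inr ⟨hne, Or.inl ⟨rfl, rfl⟩⟩)⟩
      exact ⟨c2, h1.trans e1, fun v hv => (e2 v hv).trans (hsw v hv)⟩
  obtain ⟨c1, h1, h2⟩ := main β' hke
  exact h1.trans (h.claimE hk hdeg (h1.proper ha) hb (fun v hv => by rw [h2 v hv, hbo v hv]))

theorem QD.nonconst (h : QD G k Q u) (hk : 4 ≤ k) {c : V → Fin k} (hc : IsProperColoring G k c) :
    ∃ i ∈ Q, ∃ j ∈ Q, c (u i) ≠ c (u j) := by
  by_contra hno
  push Not at hno
  obtain ⟨i, hi⟩ : Q.Nonempty := by rw [← Finset.card_pos, h.card]; omega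
  obtain ⟨q, hq, e⟩ := h.surj hc (c (u i))
  exact hc (h.adju hq) (e.trans (hno i hi q hq))

theorem QD.main (h : QD G k Q u) (hk : 4 ≤ k) (hdeg : ∀ v, (nb G v).card ≤ k)
    (h2c : ∀ i j, G.Adj i j → Cn2 G i j) 
    {α β : V → Fin k} (ha : IsProperColoring G k α) (hb : IsProperColoring G k β) : KE G ∅ α β := by
  obtain ⟨i, hi, j, hj, hij⟩ := h.nonconst hk ha
  obtain ⟨i', hi', j', hj', hij'⟩ := h.nonconst hk hb
  by_cases h1 : α (u i') = α (u j')
  swap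
  · exact h.pair hk hdeg h2c hi' hj' ha hb h1 hij'
  obtain ⟨x, hx, hxi⟩ : ∃ x ∈ Q, α (u x) ≠ α (u i') := by
    by_contra hno
    push Not at hno
    exact hij ((hno i hi).trans (hno j hj).symm)
  by_cases h2 : β (u x) = β (u i')
  · exact h.pair hk hdeg h2c hx hj' ha hb (by rwa [← h1]) (by rwa [h2])
  · exact h.pair hk hdeg h2c hx hi' ha hb hxi h2
end

/-- `v` sees every colour other than its own. -/
def Full (G : SimpleGraph V) {k : ℕ} (φ : V → Fin k) (v : V) : Prop :=
  ∀ e, e ≠ φ v → ∃ u, G.Adj v u ∧ φ u = e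

theorem full_inj [Fintype V] {G : SimpleGraph V} {k : ℕ} {φ : V → Fin k} {v p q : V}
    (hd : (nb G v).card ≤ k) (hf : Full G φ v) (hp : G.Adj v p) (hq : G.Adj v q)
    (hne : p ≠ q) (he : φ p = φ q) {r t : V} (hr : G.Adj v r) (ht : G.Adj v t)
    (hrp : r ≠ p) (htp : t ≠ p) (hrt : φ r = φ t) : r = t := by
  by_contra hn
  have h1 : (Finset.univ.erase (φ v)) ⊆ (((nb G v).erase p).erase r).image φ := by
    intro e he'
    obtain ⟨u, hu, hue⟩ := hf e (by simpa using he')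
    rw [Finset.mem_image]
    by_cases hup : u = p
    · by_cases hqr : q = r
      · exact ⟨t, by simp [htp, ht, Ne.symm hn], by rw [← hrt, ← hqr, ← he, ← hup, hue]⟩
      · exact ⟨q, by simp [hqr, hne.symm, hq], by rw [← he, ← hup, hue]⟩
    · by_cases hur : u = r
      · exact ⟨t, by simp [htp, ht, Ne.symm hn], by rw [← hrt, ← hur, hue]⟩
      · exact ⟨u, by simp [hup, hur, hu], hue⟩
  have h2 := (Finset.card_le_card h1).trans Finset.card_image_le
  rw [Finset.card_erase_of_mem (by simp), Finset.card_univ, Fintype.card_fin,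
    Finset.card_erase_of_mem (by simp [hrp, hr]), Finset.card_erase_of_mem (by simp [hp])] at h2
  have h3 : 2 ≤ (nb G v).card := by
    have : ({p, q} : Finset V) ⊆ nb G v := by
      intro z hz; simp at hz; rcases hz with rfl | rfl <;> simpa
    have := Finset.card_le_card this
    rwa [Finset.card_pair hne] at this
  omega

theorem not_full {G : SimpleGraph V} {k : ℕ} {φ : V → Fin k} {v : V} (h : ¬ Full G φ v) :
    ∃ e, e ≠ φ v ∧ ∀ u, G.Adj v u → φ u ≠ e := by
  unfold Full at h; push Not at h; exact h

def D2 (G : SimpleGraph V) (s v : V) : Prop := v ≠ s ∧ ¬ G.Adj s v ∧ ∃ x, G.Adj s x ∧ G.Adj x v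

structure HK [Fintype V] (G : SimpleGraph V) (k : ℕ) (s : V) (A B : Finset V)
    (P : (V → Fin k) → Prop) : Prop where
  reg : ∀ v, (nb G v).card = k
  prop : ∀ {φ}, P φ → IsProperColoring G k φ
  step : ∀ {φ ψ}, P φ → Stp G ∅ φ ψ → P ψ
  n2 : ∀ v, D2 G s v ↔ (v ∈ A ∨ v ∈ B)
  adj : ∀ a ∈ A, ∀ b ∈ B, G.Adj a b
  nob : ∀ {φ}, P φ → ∀ b ∈ B, φ b ≠ φ s

section
variable [Fintype V] {G : SimpleGraph V} {k : ℕ} {s : V} {A B : Finset V}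
    {P : (V → Fin k) → Prop}

theorem HK.upd (H : HK G k s A B P) {φ : V → Fin k} (hφ : P φ) {v : V} {e : Fin k}
    (h : ∀ u, G.Adj v u → φ u ≠ e) : P (Function.update φ v e) :=
  H.step hφ (Stp.single (H.prop hφ) v (by simp) e h)

theorem HK.sw (H : HK G k s A B P) {φ : V → Fin k} (hφ : P φ) (a b : Fin k) (S : Set V)
    (h2 : ∀ v ∈ S, φ v = a ∨ φ v = b)
    (h3 : ∀ v ∈ S, ∀ u, G.Adj v u → (φ u = a ∨ φ u = b) → u ∈ S) : P (swp φ a b S) :=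
  H.step hφ (Stp.swp a b S (by simp) h2 h3)

theorem HK.An (H : HK G k s A B P) {a : V} (ha : a ∈ A) : a ≠ s ∧ ¬ G.Adj s a :=
  have := (H.n2 a).2 (Or.inl ha); ⟨this.1, this.2.1⟩
theorem HK.Bn (H : HK G k s A B P) {a : V} (ha : a ∈ B) : a ≠ s ∧ ¬ G.Adj s a :=
  have := (H.n2 a).2 (Or.inr ha); ⟨this.1, this.2.1⟩

/-- the witness relation -/
def Wit (G : SimpleGraph V) {k : ℕ} (s : V) (φ : V → Fin k) (b a : V) : Prop :=
  φ a = φ s ∧ Full G φ a ∧ ∃ x, G.Adj s x ∧ G.Adj a x ∧ φ x = φ b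

theorem HK.wit_aux (H : HK G k s A B P) {b : V} (hb : b ∈ B) (n : ℕ) : ∀ φ, P φ →
    (A.filter (fun a => φ a = φ s)).card = n → ∃ a ∈ A, Wit G s φ b a := by
  induction n using Nat.strong_induction_on with
  | _ n ih =>
  intro φ hφ hn
  by_cases hnf : ∃ a ∈ A, φ a = φ s ∧ ¬ Full G φ a
  · obtain ⟨a, ha, has, hfa⟩ := hnf
    obtain ⟨e, he, hne⟩ := not_full hfa
    have hP := H.upd hφ hne
    have hsa : s ≠ a := (H.An ha).1.symm
    have hba : b ≠ a := (H.adj a ha b hb).ne.symm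
    obtain ⟨a', ha', h1, h2, x, hx1, hx2, hx3⟩ := ih _ (by
      rw [← hn]
      apply Finset.card_lt_card
      refine ⟨fun z hz => ?_, fun h => ?_⟩
      · rw [Finset.mem_filter] at hz ⊢
        refine ⟨hz.1, ?_⟩
        have := hz.2
        by_cases hza : z = a
        · rw [hza]; exact has
        · rwa [Function.update_of_ne hza, Function.update_of_ne hsa] at this
      · have := h (Finset.mem_filter.2 ⟨ha, has⟩)
        rw [Finset.mem_filter, Function.update_self, Function.update_of_ne hsa] at this
        exact he (this.2.trans has.symm)) _ hP rfl
    rw [Function.update_of_ne hsa] at h1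
    have haa : a' ≠ a := by
      rintro rfl
      rw [Function.update_self] at h1
      exact he (h1.trans has.symm)
    rw [Function.update_of_ne haa] at h1
    have hadj : ¬ G.Adj a' a := fun h => H.prop hφ h (h1.trans has.symm)
    refine ⟨a', ha', h1, ?_, x, hx1, hx2, ?_⟩
    · intro f hf
      obtain ⟨u, hu, huf⟩ := h2 f (by rwa [Function.update_of_ne haa])
      have : u ≠ a := by rintro rfl; exact hadj hu
      rw [Function.update_of_ne this] at huf
      exact ⟨u, hu, huf⟩
    · have : x ≠ a := by rintro rfl; exact hadj hx2
      rwa [Function.update_of_ne this, Function.update_of_ne hba] at hx3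
  · push Not at hnf
    by_contra hno
    have hp := H.prop hφ
    obtain ⟨S, hS⟩ : ∃ S : Set V, ∀ x, x ∈ S ↔ (x = s ∨ (G.Adj s x ∧ φ x = φ b)) :=
      ⟨{x | x = s ∨ (G.Adj s x ∧ φ x = φ b)}, fun _ => Iff.rfl⟩
    have hP := H.sw hφ (φ s) (φ b) S (by
      intro v hv
      rcases (hS v).1 hv with rfl | h
      · exact Or.inl rfl
      · exact Or.inr h.2) (by
      intro v hv u hvu hu
      rcases (hS v).1 hv with rfl | h
      · rcases hu with hu | hu
        · exact absurd hu.symm (hp hvu)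
        · exact (hS u).2 (Or.inr ⟨hvu, hu⟩)
      · rcases hu with hu | hu
        · by_cases hus : u = s
          · exact (hS u).2 (Or.inl hus)
          · exfalso
            have hnu : ¬ G.Adj s u := fun h' => hp h' hu.symm
            rcases (H.n2 u).1 ⟨hus, hnu, v, h.1, hvu⟩ with hA | hB
            · exact hno ⟨u, hA, hu, hnf u hA hu, v, h.1, hvu.symm, h.2⟩
            · exact H.nob hφ u hB hu
        · exact absurd (hu.trans h.2.symm).symm (hp hvu))
    refine H.nob hP b hb ?_
    have hbS : b ∉ S := fun h => by
      rcases (hS b).1 h with h | h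
      · exact (H.Bn hb).1 h
      · exact (H.Bn hb).2 h.1
    have hsS : s ∈ S := (hS s).2 (Or.inl rfl)
    simp [swp, hbS, hsS]

theorem HK.wit (H : HK G k s A B P) {φ : V → Fin k} (hφ : P φ) {b : V} (hb : b ∈ B) :
    ∃ a ∈ A, Wit G s φ b a := H.wit_aux hb _ φ hφ rfl

theorem HK.wit_inj (H : HK G k s A B P) {φ : V → Fin k} {a b b' : V} (ha : a ∈ A)
    (hb : b ∈ B) (hb' : b' ∈ B) (h : Wit G s φ b a) (h' : φ b' = φ b ∨ Wit G s φ b' a) : b' = b := by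
  obtain ⟨h1, h2, x, hx1, hx2, hx3⟩ := h
  have hxb : x ≠ b := by rintro rfl; exact (H.Bn hb).2 hx1
  have hxb' : x ≠ b' := by rintro rfl; exact (H.Bn hb').2 hx1
  rcases h' with h' | ⟨h1', h2', x', hx1', hx2', hx3'⟩
  · exact full_inj (H.reg a).le h2 hx2 (H.adj a ha b hb) hxb hx3 (H.adj a ha b' hb') (H.adj a ha b hb)
      hxb'.symm hxb.symm h'
  · have hxb2 : x' ≠ b := by rintro rfl; exact (H.Bn hb).2 hx1'
    have hxb2' : x' ≠ b' := by rintro rfl; exact (H.Bn hb').2 hx1'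
    by_contra hne
    exact hxb2' (full_inj (H.reg a).le h2 (H.adj a ha b hb) hx2 hxb.symm hx3.symm hx2' (H.adj a ha b' hb')
      hxb2 hne hx3')

theorem HK.exw (H : HK G k s A B P) {φ : V → Fin k} (hφ : P φ) :
    ∃ w : V → V, Set.InjOn w B ∧ ∀ b ∈ B, w b ∈ A ∧ Wit G s φ b (w b) := by
  choose! w hw using fun b (hb : b ∈ B) => H.wit hφ hb
  refine ⟨w, ?_, hw⟩
  intro b hb b' hb' h
  have h1 := hw b hb
  have h2 := hw b' hb'
  rw [h] at h1
  exact (H.wit_inj h2.1 hb hb' h1.2 (Or.inr h2.2)).symm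

theorem HK.card_le (H : HK G k s A B P) {φ : V → Fin k} (hφ : P φ) : B.card ≤ A.card := by
  obtain ⟨w, hw, h⟩ := H.exw hφ
  exact Finset.card_le_card_of_injOn w (fun b hb => (h b hb).1) hw

/-- every vertex of `A` is a witness -/
theorem HK.wit' (H : HK G k s A B P) (hc : A.card ≤ B.card) {φ : V → Fin k} (hφ : P φ) {a : V} (ha : a ∈ A) :
    ∃ b ∈ B, Wit G s φ b a := by
  obtain ⟨w, hw, h⟩ := H.exw hφ
  have := Finset.surj_on_of_inj_on_of_card_le (fun b (_ : b ∈ B) => w b) (fun b hb => (h b hb).1)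
    (fun b b' hb hb' e => hw hb hb' e) hc a ha
  obtain ⟨b, hb, e⟩ := this
  exact ⟨b, hb, e ▸ (h b hb).2⟩

theorem HK.mono (H : HK G k s A B P) (hc : A.card ≤ B.card) {φ : V → Fin k} (hφ : P φ) {a : V} (ha : a ∈ A) :
    φ a = φ s := by
  obtain ⟨b, hb, h⟩ := H.wit' hc hφ ha; exact h.1

theorem HK.fullA (H : HK G k s A B P) (hc : A.card ≤ B.card) {φ : V → Fin k} (hφ : P φ) {a : V} (ha : a ∈ A) :
    Full G φ a := by
  obtain ⟨b, hb, h⟩ := H.wit' hc hφ ha; exact h.2.1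

theorem HK.rain (H : HK G k s A B P) {φ : V → Fin k} (hφ : P φ) {b b' : V} (hb : b ∈ B)
    (hb' : b' ∈ B) (h : φ b' = φ b) : b' = b := by
  obtain ⟨a, ha, hw⟩ := H.wit hφ hb
  exact H.wit_inj ha hb hb' hw (Or.inl h)
end

section
variable [Fintype V] {G : SimpleGraph V} {k : ℕ} {s : V} {A B : Finset V}
    {P : (V → Fin k) → Prop}

theorem HK.one (hk : 4 ≤ k) {a b : V} (H : HK G k s {a} {b} P) (h2c : Cn2 G a b)
    {φ : V → Fin k} (hφ : P φ) : False := by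
  have hab : G.Adj a b := H.adj a (by simp) b (by simp)
  have haA : a ∈ ({a} : Finset V) := by simp
  have hbB : b ∈ ({b} : Finset V) := by simp
  have hc : ({a} : Finset V).card ≤ ({b} : Finset V).card := by simp
  have hsa := H.An haA
  have hsb := H.Bn hbB
  have hn2 : ∀ v, D2 G s v → v = a ∨ v = b := fun v hv => by simpa using (H.n2 v).1 hv
  -- the whole vertex set
  have hV : ∀ v, v = s ∨ G.Adj s v ∨ v = a ∨ v = b := by
    by_contra hno
    push Not at hno
    obtain ⟨v0, h1, h2, h3, h4⟩ := hno
    have := h2c {v | v ≠ s ∧ ¬ G.Adj s v ∧ v ≠ a ∧ v ≠ b} ⟨v0, h1, h2, h3, h4⟩ (fun h => h.2.2.1 rfl)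
      (fun h => h.2.2.2 rfl) (by
        rintro v ⟨e1, e2, e3, e4⟩ u hvu
        by_cases hua : u = a
        · right; left; exact hua
        by_cases hub : u = b
        · right; right; exact hub
        left
        refine ⟨?_, ?_, hua, hub⟩
        · rintro rfl; exact e2 hvu.symm
        · intro hu
          rcases hn2 v ⟨e1, e2, u, hu, hvu.symm⟩ with h | h
          · exact e3 h
          · exact e4 h) s
    rcases this with h | h | h
    · exact h.1 rfl
    · exact hsa.1 h.symm
    · exact hsb.1 h.symm
  -- a vertex at distance two misses exactly one vertex of N(s)
  have miss : ∀ a b : V, G.Adj a b → a ≠ s → ¬ G.Adj s a → b ≠ s → ¬ G.Adj s b → 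
      (∀ v, v = s ∨ G.Adj s v ∨ v = a ∨ v = b) →
      ∃ t, G.Adj s t ∧ ¬ G.Adj a t ∧ ∀ t', G.Adj s t' → ¬ G.Adj a t' → t' = t := by
    intro a b hab ha1 ha2 hb1 hb2 hV
    have h1 : nb G a = insert b ((nb G s).filter (fun v => G.Adj a v)) := by
      ext v
      simp only [mem_nb, Finset.mem_insert, Finset.mem_filter]
      constructor
      · intro hv
        rcases hV v with h | h | h | h
        · subst h; exact absurd hv.symm ha2
        · exact Or.inr ⟨h, hv⟩
        · subst h; exact absurd hv (G.loopless.irrefl _)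
        · exact Or.inl h
      · rintro (rfl | h)
        · exact hab
        · exact h.2
    have h2 : ((nb G s).filter (fun v => ¬ G.Adj a v)).card = 1 := by
      have e1 := H.reg a
      rw [h1, Finset.card_insert_of_notMem (by simp [hb2])] at e1
      have e2 := Finset.card_filter_add_card_filter_not (s := nb G s) (fun v => G.Adj a v)
      rw [H.reg s] at e2
      omega
    obtain ⟨t, ht⟩ := Finset.card_eq_one.1 h2
    have hm : ∀ v, (G.Adj s v ∧ ¬ G.Adj a v) ↔ v = t := fun v => by
      have : v ∈ ((nb G s).filter (fun v => ¬ G.Adj a v)) ↔ v = t := by rw [ht]; simp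
      simpa using this
    exact ⟨t, ((hm t).2 rfl).1, ((hm t).2 rfl).2, fun t' h1 h2 => (hm t').1 ⟨h1, h2⟩⟩
  obtain ⟨t, hst, hat, htu⟩ := miss a b hab hsa.1 hsa.2 hsb.1 hsb.2 hV
  obtain ⟨x, hsx, hbx, hxu⟩ := miss b a hab.symm hsb.1 hsb.2 hsa.1 hsa.2 (fun v => by have := hV v; tauto)
  have wit : ∀ φ, P φ → φ a = φ s ∧ Full G φ a ∧ G.Adj a x ∧ φ x = φ b := by
    intro φ hφ
    obtain ⟨a', ha', h1, h2, x', h3, h4, h5⟩ := H.wit hφ hbB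
    rw [Finset.mem_singleton] at ha'
    subst ha'
    have : x' = x := hxu x' h3 (fun h => H.prop hφ h h5.symm)
    subst this
    exact ⟨h1, h2, h4, h5⟩
  obtain ⟨has, hfa, hax, hxb⟩ := wit φ hφ
  have hp := H.prop hφ
  have hxnb : x ≠ b := by rintro rfl; exact hsb.2 hsx
  have inj : ∀ v w, G.Adj s v → G.Adj s w → v ≠ t → w ≠ t → φ v = φ w → v = w := by
    intro v w hv hw hvt hwt hvw
    have h1 : G.Adj a v := by by_contra h; exact hvt (htu v hv h)
    have h2 : G.Adj a w := by by_contra h; exact hwt (htu w hw h)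
    exact full_inj (H.reg a).le hfa hab hax hxnb.symm hxb.symm h1 h2 (by rintro rfl; exact hsb.2 hv)
      (by rintro rfl; exact hsb.2 hw) hvw
  have htx : t ≠ x := by rintro rfl; exact hat hax
  have hbt : G.Adj b t := by by_contra h; exact htx (hxu t hst h)
  obtain ⟨xt, hxt1, hxt2⟩ := hfa (φ t) (by rw [has]; exact (hp hst).symm)
  have hxtb : xt ≠ b := by rintro rfl; exact hp hbt hxt2
  have hsxt : G.Adj s xt := by
    rcases hV xt with h | h | h | h
    · subst h; exact absurd hxt1.symm hsa.2
    · exact h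
    · subst h; exact absurd hxt1 (G.loopless.irrefl _)
    · exact absurd h hxtb
  have hxtt : xt ≠ t := by rintro rfl; exact hat hxt1
  have hxtx : xt ≠ x := by rintro rfl; exact hp hbt (hxb.symm.trans hxt2)
  -- choose z
  obtain ⟨z, hz⟩ : ∃ z, z ∈ nb G s \ {t, x, xt} := by
    apply Finset.Nonempty.exists_mem
    rw [← Finset.card_pos]
    have h1 := Finset.le_card_sdiff {t, x, xt} (nb G s)
    have h2 : ({t, x, xt} : Finset V).card ≤ 3 := Finset.card_le_three
    rw [H.reg] at h1
    omega
  simp only [Finset.mem_sdiff, mem_nb, Finset.mem_insert, Finset.mem_singleton, not_or] at hz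
  obtain ⟨hsz, hzt, hzx, hzxt⟩ := hz
  have haz : G.Adj a z := by by_contra h; exact hzt (htu z hsz h)
  have hbz : G.Adj b z := by by_contra h; exact hzx (hxu z hsz h)
  have nzs : z ≠ s := hsz.ne.symm
  have nza : z ≠ a := haz.ne.symm
  have nzb : z ≠ b := hbz.ne.symm
  -- z is full
  have hfz : Full G φ z := by
    by_contra h
    obtain ⟨e, he, hne⟩ := not_full h
    have hP := H.upd hφ hne
    obtain ⟨e1, e2, -, -⟩ := wit _ hP
    obtain ⟨u, hu, hue⟩ := e2 (φ z) (by
      rw [Function.update_of_ne nza.symm]; exact (hp haz).symm)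
    have huz : u ≠ z := by
      rintro rfl
      rw [Function.update_self] at hue; exact he hue
    rw [Function.update_of_ne huz] at hue
    exact huz (full_inj (H.reg a).le hfa hab hax hxnb.symm hxb.symm hu haz
      (by rintro rfl; exact hp hbz hue) nzb hue)
  -- x is full
  have hxa : x ≠ a := hax.ne.symm
  have hxs : x ≠ s := hsx.ne.symm
  have hfx : Full G φ x := by
    by_contra h
    obtain ⟨e, he, hne⟩ := not_full h
    have hP := H.upd hφ hne
    obtain ⟨e1, e2, -, e3⟩ := wit _ hP
    rw [Function.update_self, Function.update_of_ne hxnb.symm] at e3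
    exact he (e3.trans hxb.symm)
  -- z not adjacent to x
  have hzx' : ¬ G.Adj z x := by
    intro hzx'
    obtain ⟨t0, ht0, h0⟩ := hfz (φ t) (by
      intro e
      exact hzxt (inj z xt hsz hsxt hzt hxtt (by rw [hxt2, e])))
    have key : ∀ w, G.Adj s w → w ≠ z → w ≠ t → w ≠ xt → G.Adj z w := by
      intro w hw h1 h2 h3
      by_cases hwx : w = x
      · rw [hwx]; exact hzx'
      obtain ⟨u, hu, hue⟩ := hfz (φ w) (fun e => h1 (inj w z hw hsz h2 hzt e))
      rcases hV u with h | h | h | h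
      · subst h; exact absurd hue (hp hw)
      · by_cases hut : u = t
        · subst hut
          exact absurd (inj w xt hw hsxt h2 hxtt (by rw [hxt2, hue])) h3
        · rw [inj w u hw h h2 hut hue.symm]; exact hu
      · subst h; rw [has] at hue; exact absurd hue (hp hw)
      · subst h
        exact absurd (inj w x hw hsx h2 htx.symm (by rw [hxb, hue])) hwx
    have ht0' : t0 = t ∨ t0 = xt := by
      by_cases h : t0 = t
      · exact Or.inl h
      right
      rcases hV t0 with h' | h' | h' | h'
      · subst h'; exact absurd h0 (hp hst)
      · exact inj t0 xt h' hsxt h hxtt (by rw [hxt2, h0])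
      · subst h'; rw [has] at h0; exact absurd h0 (hp hst)
      · subst h'; exact absurd h0 (hp hbt)
    obtain ⟨t1, ht1⟩ : ∃ t1, ∀ w, G.Adj s w → w ≠ z → w ≠ t1 → G.Adj z w := by
      rcases ht0' with rfl | rfl
      · refine ⟨xt, fun w h1 h2 h3 => ?_⟩
        by_cases h4 : w = t0
        · rw [h4]; exact ht0
        · exact key w h1 h2 h4 h3
      · refine ⟨t, fun w h1 h2 h3 => ?_⟩
        by_cases h4 : w = t0
        · rw [h4]; exact ht0
        · exact key w h1 h2 h3 h4
    have hsub : insert s (insert a (insert b (((nb G s).erase z).erase t1))) ⊆ nb G z := by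
      intro w hw
      simp only [Finset.mem_insert, Finset.mem_erase, mem_nb] at hw ⊢
      rcases hw with rfl | rfl | rfl | hw
      · exact hsz.symm
      · exact haz.symm
      · exact hbz.symm
      · exact ht1 w hw.2.2 hw.2.1 hw.1
    have hcard := Finset.card_le_card hsub
    rw [Finset.card_insert_of_notMem (by simp [hsa.1.symm, hsb.1.symm]),
      Finset.card_insert_of_notMem (by simp [hab.ne, hsa.2]),
      Finset.card_insert_of_notMem (by simp [hsb.2]), H.reg] at hcard
    have e1 := Finset.card_erase_of_mem (s := nb G s) (a := z) (by simpa)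
    have e2 := Finset.pred_card_le_card_erase (s := (nb G s).erase z) (a := t1)
    rw [H.reg] at e1
    omega
  -- x misses one of t, xt
  obtain ⟨w, hw1, hw2, hw3, hw4⟩ : ∃ w, G.Adj s w ∧ w ≠ x ∧ w ≠ z ∧ ¬ G.Adj x w := by
    by_contra hno
    push Not at hno
    have h1 := hno t hst htx (Ne.symm hzt)
    have h2 := hno xt hsxt hxtx (Ne.symm hzxt)
    exact hxtt (full_inj (H.reg x).le hfx hsx.symm hax.symm hsa.1.symm has.symm h2 h1 hsxt.ne.symm hst.ne.symm hxt2)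
  have hsub : nb G x ⊆ insert s (insert a ((((nb G s).erase x).erase z).erase w)) := by
    intro u hu
    rw [mem_nb] at hu
    simp only [Finset.mem_insert, Finset.mem_erase, mem_nb]
    rcases hV u with h | h | h | h
    · exact Or.inl h
    · right; right
      refine ⟨?_, ?_, ?_, h⟩
      · rintro rfl; exact hw4 hu
      · rintro rfl; exact hzx' hu.symm
      · rintro rfl; exact G.loopless.irrefl _ hu
    · exact Or.inr (Or.inl h)
    · subst h; exact absurd hu.symm hbx
  have hcard := Finset.card_le_card hsub
  have e3 := Finset.card_insert_le s (insert a ((((nb G s).erase x).erase z).erase w))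
  have e4 := Finset.card_insert_le a ((((nb G s).erase x).erase z).erase w)
  rw [Finset.card_erase_of_mem (s := ((nb G s).erase x).erase z) (by simp [hw1, hw2, hw3]),
    Finset.card_erase_of_mem (s := (nb G s).erase x) (by simp [hsz, hzx]),
    Finset.card_erase_of_mem (s := nb G s) (by simp [hsx]), H.reg s] at e4
  rw [H.reg] at hcard
  omega
end

/-- a finite connected graph with three leaves has a vertex of degree at least three -/
theorem leaf [Fintype V] (G : SimpleGraph V) (C : Finset V) (p q r : V) (hp : p ∈ C) (hq : q ∈ C) (hr : r ∈ C)
    (hpq : p ≠ q) (hpr : p ≠ r) (hqr : q ≠ r)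
    (hcon : ∀ T : Set V, p ∈ T → (∀ v ∈ T, ∀ u ∈ C, G.Adj v u → u ∈ T) → ∀ v ∈ C, v ∈ T)
    (dp : (nb G p ∩ C).card ≤ 1) (dq : (nb G q ∩ C).card ≤ 1) (dr : (nb G r ∩ C).card ≤ 1) :
    ∃ v ∈ C, 3 ≤ (nb G v ∩ C).card := by
  by_contra hno
  push Not at hno
  let H : SimpleGraph C := G.comap Subtype.val
  have hdeg : ∀ v : C, H.degree v = (nb G v.1 ∩ C).card := by
    intro v
    rw [← SimpleGraph.card_neighborFinset_eq_degree, ← Finset.card_map (Function.Embedding.subtype (· ∈ C))]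
    congr 1
    ext u
    simp [H]
  have hc : H.Connected := by
    have : ∀ v ∈ C, v ∈ {v : V | ∃ h : v ∈ C, H.Reachable ⟨p, hp⟩ ⟨v, h⟩} := by
      apply hcon
      · exact ⟨hp, .refl _⟩
      · rintro v ⟨hv, hrv⟩ u hu hvu
        exact ⟨hu, hrv.trans (SimpleGraph.Adj.reachable (by exact hvu))⟩
    rw [SimpleGraph.connected_iff_exists_forall_reachable]
    exact ⟨⟨p, hp⟩, fun v => (this v.1 v.2).2⟩
  have h1 := hc.card_vert_le_card_edgeSet_add_one
  have h2 := H.sum_degrees_eq_twice_card_edges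
  have h3 : ∑ v : C, H.degree v = ∑ v ∈ C, (nb G v ∩ C).card := by
    rw [← Finset.sum_coe_sort C]
    exact Finset.sum_congr rfl (fun v _ => hdeg v)
  have h4 : ∑ v ∈ C, ((nb G v ∩ C).card + (if v = p then 1 else 0) + (if v = q then 1 else 0) + (if v = r then 1 else 0))
      ≤ ∑ v ∈ C, 2 := by
    apply Finset.sum_le_sum
    intro v hv
    have := hno v hv
    by_cases e1 : v = p
    · subst e1; simp [hpq, hpr]; omega
    by_cases e2 : v = q
    · subst e2; simp [e1, hqr]; omega
    by_cases e3 : v = r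
    · subst e3; simp [e1, e2]; omega
    simp [e1, e2, e3]; omega
  simp only [Finset.sum_add_distrib, Finset.sum_ite_eq', hp, hq, hr, if_true, Finset.sum_const, smul_eq_mul] at h4
  have h5 : Nat.card C = C.card := by simp
  have h6 : Nat.card H.edgeSet = H.edgeFinset.card := by
    rw [Nat.card_eq_fintype_card, SimpleGraph.edgeFinset_card]
  omega

/-- Kempe chain of `r` -/
noncomputable def chn [Fintype V] (G : SimpleGraph V) {k : ℕ} (φ : V → Fin k) (a b : Fin k) (r : V) : Finset V :=
  Finset.univ.filter (fun v => ∀ S : Set V, r ∈ S →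
    (∀ v ∈ S, ∀ u, G.Adj v u → (φ u = a ∨ φ u = b) → u ∈ S) → v ∈ S)

section
variable [Fintype V] {G : SimpleGraph V} {k : ℕ} {φ : V → Fin k} {a b : Fin k} {r : V}

theorem mem_chn {v : V} : v ∈ chn G φ a b r ↔ ∀ S : Set V, r ∈ S →
    (∀ v ∈ S, ∀ u, G.Adj v u → (φ u = a ∨ φ u = b) → u ∈ S) → v ∈ S := by simp [chn]

theorem chn_self : r ∈ chn G φ a b r := mem_chn.2 fun _ h _ => h

theorem chn_cl : ∀ v ∈ chn G φ a b r, ∀ u, G.Adj v u → (φ u = a ∨ φ u = b) → u ∈ chn G φ a b r := by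
  intro v hv u hvu hu
  rw [mem_chn] at hv ⊢
  intro S h1 h2
  exact h2 v (hv S h1 h2) u hvu hu

theorem chn_col (hr : φ r = a ∨ φ r = b) : ∀ v ∈ chn G φ a b r, φ v = a ∨ φ v = b := by
  intro v hv
  exact mem_chn.1 hv {v | φ v = a ∨ φ v = b} hr (fun v _ u _ hu => hu)

/-- three leaves in a chain produce a recolourable vertex. -/
theorem chain3 (hreg : ∀ v, (nb G v).card ≤ k) (hprop : IsProperColoring G k φ) (hr : φ r = a ∨ φ r = b)
    {q q' : V} (hq : q ∈ chn G φ a b r) (hq' : q' ∈ chn G φ a b r) (h1 : r ≠ q) (h2 : r ≠ q') (h3 : q ≠ q')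
    (hd : ∀ v, v = r ∨ v = q ∨ v = q' → ∀ u w, G.Adj v u → G.Adj v w → (φ u = a ∨ φ u = b) → φ w = φ u → w = u) :
    ∃ v f, v ≠ r ∧ v ≠ q ∧ v ≠ q' ∧ (φ v = a ∨ φ v = b) ∧ f ≠ a ∧ f ≠ b ∧ ∀ u, G.Adj v u → φ u ≠ f := by
  have hcol := chn_col (G := G) hr
  have same : ∀ v ∈ chn G φ a b r, ∀ u ∈ chn G φ a b r, ∀ w ∈ chn G φ a b r, G.Adj v u → G.Adj v w → φ w = φ u := by
    intro v hv u hu w hw hvu hvw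
    have e1 := hprop hvu
    have e2 := hprop hvw
    have c1 := hcol v hv
    have c2 := hcol u hu
    have c3 := hcol w hw
    rcases c1 with c1 | c1 <;> rcases c2 with c2 | c2 <;> rcases c3 with c3 | c3 <;> simp_all
  have hle : ∀ v ∈ chn G φ a b r, (v = r ∨ v = q ∨ v = q') → (nb G v ∩ chn G φ a b r).card ≤ 1 := by
    intro v hvC hv
    rw [Finset.card_le_one]
    intro x hx y hy
    simp only [Finset.mem_inter, mem_nb] at hx hy
    exact hd v hv y x hy.1 hx.1 (hcol y hy.2) (same v hvC y hy.2 x hx.2 hy.1 hx.1)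
  obtain ⟨v, hv, h3v⟩ := leaf G (chn G φ a b r) r q q' chn_self hq hq' h1 h2 h3 (by
    intro T hT hcl
    have hh : ∀ v ∈ chn G φ a b r, v ∈ {v : V | v ∈ T ∧ v ∈ chn G φ a b r} := by
      intro v hv
      refine mem_chn.1 hv _ ⟨hT, chn_self⟩ ?_
      rintro v ⟨hv1, hv2⟩ u hvu hu
      have := chn_cl v hv2 u hvu hu
      exact ⟨hcl v hv1 u this hvu, this⟩
    exact fun v hv => (hh v hv).1)
    (hle r chn_self (by simp)) (hle q hq (by simp)) (hle q' hq' (by simp))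
  have hnot : ∀ w ∈ chn G φ a b r, (w = r ∨ w = q ∨ w = q') → v ≠ w := by
    rintro w hw h rfl
    have := hle v hw h
    omega
  obtain ⟨x, hx, y, hy, z, hz, hxy, hxz, hyz⟩ := Finset.two_lt_card.1 h3v
  simp only [Finset.mem_inter, mem_nb] at hx hy hz
  have sxy := same v hv x hx.2 y hy.2 hx.1 hy.1
  have sxz := same v hv x hx.2 z hz.2 hx.1 hz.1
  have hnf : ¬ Full G φ v := by
    intro hf
    exact hyz (full_inj (hreg v) hf hx.1 hy.1 hxy sxy.symm hy.1 hz.1 hxy.symm hxz.symm (sxy.trans sxz.symm))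
  obtain ⟨f, hf, hfn⟩ := not_full hnf
  have hfx := hfn x hx.1
  have hvx := hprop hx.1
  refine ⟨v, f, hnot r chn_self (by simp), hnot q hq (by simp), hnot q' hq' (by simp), hcol v hv, ?_, ?_, hfn⟩
  · rintro rfl
    rcases hcol v hv with h | h
    · exact hf h.symm
    · rcases hcol x hx.2 with h' | h'
      · exact hfx h'
      · exact hvx (h.trans h'.symm)
  · rintro rfl
    rcases hcol v hv with h | h
    · rcases hcol x hx.2 with h' | h'
      · exact hvx (h.trans h'.symm)
      · exact hfx h'
    · exact hf h.symm
end

section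
variable [Fintype V] {G : SimpleGraph V} {k : ℕ} {s : V} {A B : Finset V}
    {P : (V → Fin k) → Prop}

theorem HK.fullS (H : HK G k s A B P) (hc : A.card ≤ B.card) (hA : A.Nonempty) {φ : V → Fin k} (hφ : P φ) :
    Full G φ s := by
  by_contra h
  obtain ⟨e, he, hne⟩ := not_full h
  obtain ⟨a, ha⟩ := hA
  have := H.mono hc (H.upd hφ hne) ha
  rw [Function.update_self, Function.update_of_ne (H.An ha).1, H.mono hc hφ ha] at this
  exact he this.symm

theorem HK.fullB (H : HK G k s A B P) (hc : A.card ≤ B.card) (hB : 2 ≤ B.card) {φ : V → Fin k} (hφ : P φ)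
    {b : V} (hb : b ∈ B) : Full G φ b := by
  by_contra h
  obtain ⟨e, he, hne⟩ := not_full h
  have hP := H.upd hφ hne
  obtain ⟨b', hb', hbb⟩ := Finset.exists_mem_ne (by omega : 1 < B.card) b
  obtain ⟨a, ha, h1, h2, x, hx1, hx2, hx3⟩ := H.wit hφ hb'
  have hab := H.adj a ha b hb
  have hab' := H.adj a ha b' hb'
  obtain ⟨u, hu, hue⟩ := H.fullA hc hP ha (φ b) (by
    rw [Function.update_of_ne hab.ne]; exact (H.prop hφ hab).symm)
  have hub : u ≠ b := by rintro rfl; rw [Function.update_self] at hue; exact he hue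
  rw [Function.update_of_ne hub] at hue
  exact hub (full_inj (H.reg a).le h2 hab' hx2 (by rintro rfl; exact (H.Bn hb').2 hx1) hx3.symm hu hab
    (by rintro rfl; exact hbb (H.rain hφ hb hb' hue)) hbb.symm hue)

theorem HK.le_two (H : HK G k s A B P) (hc : A.card ≤ B.card) (hA : 2 ≤ A.card) {φ : V → Fin k} (hφ : P φ) :
    A.card ≤ 2 := by
  by_contra h
  obtain ⟨x, hx, y, hy, z, hz, hxy, hxz, hyz⟩ := Finset.two_lt_card.1 (not_le.1 h)
  obtain ⟨b, hb⟩ : B.Nonempty := Finset.card_pos.1 (by omega)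
  have hf := H.fullB hc (by omega) hφ hb
  have e1 := H.mono hc hφ hx
  have e2 := H.mono hc hφ hy
  have e3 := H.mono hc hφ hz
  exact hyz (full_inj (H.reg b).le hf (H.adj x hx b hb).symm (H.adj y hy b hb).symm hxy (e1.trans e2.symm)
    (H.adj y hy b hb).symm (H.adj z hz b hb).symm hxy.symm hxz.symm (e2.trans e3.symm))

theorem HK.two_aux (H : HK G k s A B P) (hc : A.card ≤ B.card) (hA : A.card = 2) (e : Fin k) (n : ℕ) : ∀ φ, P φ →
    e ≠ φ s → (∀ b ∈ B, e ≠ φ b) → (Finset.univ.filter (fun v => φ v = φ s ∨ φ v = e)).card = n →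
    (∀ u w, G.Adj s u → G.Adj s w → φ u = e → φ w = e → w = u) → False := by
  induction n using Nat.strong_induction_on with
  | _ n ih =>
  intro φ hφ hes heB hn hu
  have hp := H.prop hφ
  obtain ⟨a1, a2, h12, hA12⟩ := Finset.card_eq_two.1 hA
  have ha1 : a1 ∈ A := by rw [hA12]; simp
  have ha2 : a2 ∈ A := by rw [hA12]; simp
  have hin : ∀ a ∈ A, a ∈ chn G φ (φ s) e s := by
    intro a ha
    by_contra hna
    have hP := H.sw hφ (φ s) e (chn G φ (φ s) e s : Set V) (fun v hv => chn_col (Or.inl rfl) v (by simpa using hv))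
      (fun v hv u h1 h2 => by simpa using chn_cl v (by simpa using hv) u h1 h2)
    have := H.mono hc hP ha
    have hs : s ∈ chn G φ (φ s) e s := chn_self
    simp [swp, hna, hs] at this
    exact hes (this.symm.trans (H.mono hc hφ ha))
  obtain ⟨v, f, v1, v2, v3, vc, f1, f2, hf⟩ := chain3 (fun v => (H.reg v).le) hp (Or.inl rfl) (hin a1 ha1) (hin a2 ha2)
    (H.An ha1).1.symm (H.An ha2).1.symm h12 (by
      have hAe : ∀ v ∈ A, ∀ u w, G.Adj v u → G.Adj v w → (φ u = φ s ∨ φ u = e) → φ w = φ u → w = u := by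
        intro v hv u w hvu hvw hu hw
        have hm := H.mono hc hφ hv
        rcases hu with hu | hu
        · exact absurd (hm.trans hu.symm) (hp hvu)
        obtain ⟨b, hb, _, hfull, x, hx1, hx2, hx3⟩ := H.wit' hc hφ hv
        refine full_inj (H.reg v).le hfull (H.adj v hv b hb) hx2 (by rintro rfl; exact (H.Bn hb).2 hx1) hx3.symm hvw hvu
          ?_ ?_ hw
        · rintro rfl; exact heB _ hb (hw.trans hu).symm
        · rintro rfl; exact heB _ hb hu.symm
      rintro v (rfl | rfl | rfl)
      · intro u w h1 h2 h3 h4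
        rcases h3 with h3 | h3
        · exact absurd h3.symm (hp h1)
        · exact hu u w h1 h2 h3 (h4.trans h3)
      · exact hAe _ ha1
      · exact hAe _ ha2)
  have hvB : ∀ b ∈ B, b ≠ v := by
    rintro b hb rfl
    rcases vc with h | h
    · exact H.nob hφ _ hb h
    · exact heB _ hb h.symm
  have hP := H.upd hφ hf
  refine ih _ ?_ _ hP ?_ ?_ rfl ?_
  · rw [← hn, Function.update_of_ne v1.symm]
    apply Finset.card_lt_card
    refine ⟨fun z hz => ?_, fun h => ?_⟩
    · rw [Finset.mem_filter] at hz ⊢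
      refine ⟨hz.1, ?_⟩
      by_cases hzv : z = v
      · rw [hzv]; exact vc
      · have := hz.2
        rwa [Function.update_of_ne hzv] at this
    · have := h (Finset.mem_filter.2 ⟨Finset.mem_univ v, vc⟩)
      rw [Finset.mem_filter, Function.update_self] at this
      tauto
  · rwa [Function.update_of_ne v1.symm]
  · intro b hb
    rw [Function.update_of_ne (hvB b hb)]
    exact heB b hb
  · intro u w h1 h2 h3 h4
    have : ∀ z, Function.update φ v f z = e → φ z = e := by
      intro z hz
      by_cases hzv : z = v
      · rw [hzv, Function.update_self] at hz; exact absurd hz f2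
      · rwa [Function.update_of_ne hzv] at hz
    exact hu u w h1 h2 (this u h3) (this w h4)

theorem HK.two (H : HK G k s A B P) (hc : A.card ≤ B.card) (hA : A.card = 2) {φ : V → Fin k} (hφ : P φ) {e : Fin k}
    (hes : e ≠ φ s) (heB : ∀ b ∈ B, e ≠ φ b) : ∃ u w, G.Adj s u ∧ G.Adj s w ∧ φ u = e ∧ φ w = e ∧ w ≠ u := by
  by_contra hno
  push Not at hno
  exact H.two_aux hc hA e _ φ hφ hes heB rfl hno

theorem HK.k4 (H : HK G k s A B P) (hc : A.card ≤ B.card) (hA : A.card = 2) {φ : V → Fin k} (hφ : P φ) 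
    {b b' : V} (hBb : B = {b, b'}) (hk : 4 ≤ k) : k = 4 := by
  by_contra h5
  have h1 := Finset.le_card_sdiff {φ s, φ b, φ b'} (Finset.univ : Finset (Fin k))
  have h2 : ({φ s, φ b, φ b'} : Finset (Fin k)).card ≤ 3 := Finset.card_le_three
  rw [Finset.card_univ, Fintype.card_fin] at h1
  obtain ⟨e, he, e', he', hne⟩ := Finset.one_lt_card.1 (by omega : 1 < ((Finset.univ : Finset (Fin k)) \ {φ s, φ b, φ b'}).card)
  simp at he he'
  have hf := H.fullS hc (Finset.card_pos.1 (by omega)) hφ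
  obtain ⟨u, w, hu, hw, ue, we, huw⟩ := H.two hc hA hφ he.1 (by rw [hBb]; simp; exact he.2)
  obtain ⟨u', w', hu', hw', ue', we', huw'⟩ := H.two hc hA hφ he'.1 (by rw [hBb]; simp; exact he'.2)
  exact huw' (full_inj (H.reg s).le hf hu hw huw.symm (ue.trans we.symm) hw' hu' 
    (by rintro rfl; exact hne (ue.symm.trans we')) (by rintro rfl; exact hne (ue.symm.trans ue')) (we'.trans ue'.symm))
end

theorem col4 : ∀ x y z : Fin 4, x ≠ y → x ≠ z → y ≠ z →
    ∃ g, g ≠ x ∧ g ≠ y ∧ g ≠ z ∧ ∀ e, e = x ∨ e = y ∨ e = z ∨ e = g := by decide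

theorem two_mem {B : Finset V} (hB : B.card = 2) {b b' c : V} (hb : b ∈ B) (hb' : b' ∈ B) (hne : b' ≠ b) (hc : c ∈ B) :
    c = b ∨ c = b' := by
  by_contra h
  push Not at h
  have : 2 < B.card := Finset.two_lt_card.2 ⟨c, hc, b, hb, b', hb', h.1, h.2, hne.symm⟩
  omega

section
variable [Fintype V] {G : SimpleGraph V} {s : V} {A B : Finset V}
    {P : (V → Fin 4) → Prop}

theorem HK.gam (H : HK G 4 s A B P) (hB : B.card = 2) {φ : V → Fin 4} (hφ : P φ) :
    ∃ g, g ≠ φ s ∧ ∀ b ∈ B, g ≠ φ b := by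
  obtain ⟨b, b', hne, hBb⟩ := Finset.card_eq_two.1 hB
  have hb : b ∈ B := by simp [hBb]
  have hb' : b' ∈ B := by simp [hBb]
  obtain ⟨g, h1, h2, h3, -⟩ := col4 (φ s) (φ b) (φ b') (H.nob hφ b hb).symm (H.nob hφ b' hb').symm
    (fun h => hne (H.rain hφ hb' hb h))
  refine ⟨g, h1, ?_⟩
  rw [hBb]; simp [h2, h3]

theorem HK.sUniq (H : HK G 4 s A B P) (hA : A.card = 2) (hB : B.card = 2) {φ : V → Fin 4} (hφ : P φ) {b x x' : V}
    (hb : b ∈ B) (hx : G.Adj s x) (hx' : G.Adj s x') (h1 : φ x = φ b) (h2 : φ x' = φ b) : x = x' := by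
  obtain ⟨g, hg1, hg2⟩ := H.gam hB hφ
  have hc : A.card ≤ B.card := by omega
  obtain ⟨u, w, hu, hw, ue, we, huw⟩ := H.two hc hA hφ hg1 hg2
  refine full_inj (H.reg s).le (H.fullS hc (Finset.card_pos.1 (by omega)) hφ) hu hw huw.symm (ue.trans we.symm) hx hx' ?_ ?_
    (h1.trans h2.symm)
  · rintro rfl; exact hg2 b hb (ue.symm.trans h1)
  · rintro rfl; exact hg2 b hb (ue.symm.trans h2)

theorem HK.fullN (H : HK G 4 s A B P) (hA : A.card = 2) (hB : B.card = 2) {φ : V → Fin 4} (hφ : P φ) {x : V}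
    (hx : G.Adj s x) : Full G φ x := by
  have hc : A.card ≤ B.card := by omega
  have hA0 : A.Nonempty := Finset.card_pos.1 (by omega)
  by_contra h
  obtain ⟨e, he, hne⟩ := not_full h
  have hP := H.upd hφ hne
  have hsx : s ≠ x := hx.ne
  have back : ∀ u, Function.update φ x e u = φ x → u ≠ x ∧ φ u = φ x := by
    intro u hu
    have hux : u ≠ x := by rintro rfl; rw [Function.update_self] at hu; exact he hu
    rw [Function.update_of_ne hux] at hu
    exact ⟨hux, hu⟩
  by_cases hb : ∃ b ∈ B, φ x = φ b
  · obtain ⟨b, hb, hxb⟩ := hb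
    obtain ⟨u, hu, hue⟩ := H.fullS hc hA0 hP (φ x) (by
      rw [Function.update_of_ne hsx]; exact (H.prop hφ hx).symm)
    obtain ⟨h1, h2⟩ := back u hue
    exact h1 (H.sUniq hA hB hφ hb hu hx (h2.trans hxb) hxb)
  · push Not at hb
    obtain ⟨u, w, hu, hw, ue, we, huw⟩ := H.two hc hA hP (e := φ x) (by
      rw [Function.update_of_ne hsx]; exact (H.prop hφ hx).symm) (by
      intro b hbB
      rw [Function.update_of_ne (by rintro rfl; exact (H.Bn hbB).2 hx)]
      exact hb b hbB)
    obtain ⟨u1, u2⟩ := back u ue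
    obtain ⟨w1, w2⟩ := back w we
    exact huw (full_inj (H.reg s).le (H.fullS hc hA0 hφ) hx hu u1.symm u2.symm hw hu w1 u1 (w2.trans u2.symm))

/-- neighbours of `b ∈ B` of a colour other than that of `s` are unique -/
theorem HK.bUniq (H : HK G 4 s A B P) (hA : A.card = 2) (hB : B.card = 2) {φ : V → Fin 4} (hφ : P φ) {b u w : V}
    (hb : b ∈ B) (hu : G.Adj b u) (hw : G.Adj b w) (huw : φ u = φ w) (hs : φ w ≠ φ s) : u = w := by
  have hc : A.card ≤ B.card := by omega
  obtain ⟨a1, a2, h12, hA12⟩ := Finset.card_eq_two.1 hA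
  have ha1 : a1 ∈ A := by rw [hA12]; simp
  have ha2 : a2 ∈ A := by rw [hA12]; simp
  have e1 := H.mono hc hφ ha1
  have e2 := H.mono hc hφ ha2
  refine full_inj (H.reg b).le (H.fullB hc hB.ge hφ hb) (H.adj a1 ha1 b hb).symm (H.adj a2 ha2 b hb).symm h12
    (e1.trans e2.symm) hu hw ?_ ?_ huw
  · rintro rfl; exact hs (huw.symm.trans e1)
  · rintro rfl; exact hs e1

theorem HK.nUniq (H : HK G 4 s A B P) (hA : A.card = 2) (hB : B.card = 2) {φ : V → Fin 4} (hφ : P φ) {x a u w : V}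
    (hx : G.Adj s x) (ha : a ∈ A) (hax : G.Adj a x) (hu : G.Adj x u) (hw : G.Adj x w) (huw : φ u = φ w)
    (hs : φ w ≠ φ s) : u = w := by
  have hc : A.card ≤ B.card := by omega
  have e1 := H.mono hc hφ ha
  refine full_inj (H.reg x).le (H.fullN hA hB hφ hx) hx.symm hax.symm (H.An ha).1.symm e1.symm hu hw ?_ ?_ huw
  · rintro rfl; exact hs huw.symm
  · rintro rfl; exact hs rfl

theorem HK.noB (H : HK G 4 s A B P) (hA : A.card = 2) (hB : B.card = 2) {φ : V → Fin 4} (hφ : P φ) {x a b b' : V}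
    (hx : G.Adj s x) (ha : a ∈ A) (hax : G.Adj a x) (hb : b ∈ B) (hxb : φ x = φ b) (hb' : b' ∈ B) : ¬ G.Adj x b' := by
  intro hadj
  have hp := H.prop hφ
  have hbb : b' ≠ b := by rintro rfl; exact hp hadj hxb
  have hP := H.sw hφ (φ b) (φ b') {x, b'} (by
    rintro v (rfl | rfl)
    · exact Or.inl hxb
    · exact Or.inr rfl) (by
    rintro v (rfl | rfl) u hvu hu
    · rcases hu with hu | hu
      · exact absurd (hxb.trans hu.symm) (hp hvu)
      · right; exact H.nUniq hA hB hφ hx ha hax hvu hadj hu (H.nob hφ _ hb')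
    · rcases hu with hu | hu
      · left; exact H.bUniq hA hB hφ hb' hvu hadj.symm (hu.trans hxb.symm) (hp hx).symm
      · exact absurd hu.symm (hp hvu))
  refine hbb (H.rain hP hb hb' ?_)
  have hbx : b ≠ x := by rintro rfl; exact (H.Bn hb).2 hx
  simp [swp, hbx, hbb.symm]

theorem HK.caseI (H : HK G 4 s A B P) (hA : A.card = 2) (hB : B.card = 2) {φ : V → Fin 4} (hφ : P φ) {x a b u : V}
    (hx : G.Adj s x) (ha : a ∈ A) (hax : ∀ x', G.Adj s x' → G.Adj a x' → x' = x) (hb : b ∈ B)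
    (hxb : φ x = φ b) (hu : G.Adj s u) (hus : φ u ≠ φ s) (huB : ∀ b ∈ B, φ u ≠ φ b) :
    x ∈ chn G φ (φ b) (φ u) b ∧ u ∈ chn G φ (φ b) (φ u) b := by
  have hc : A.card ≤ B.card := by omega
  have hcol := chn_col (G := G) (φ := φ) (r := b) (a := φ b) (b := φ u) (Or.inl rfl)
  have hP := H.sw hφ (φ b) (φ u) (chn G φ (φ b) (φ u) b : Set V) (fun v hv => hcol v (by simpa using hv))
      (fun v hv u h1 h2 => by simpa using chn_cl v (by simpa using hv) u h1 h2)
  have hbK : b ∈ chn G φ (φ b) (φ u) b := chn_self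
  have hxK : x ∈ chn G φ (φ b) (φ u) b := by
    by_contra hxK
    obtain ⟨b2, hb2, _, _, x2, h1, h2, h3⟩ := H.wit' hc hP ha
    rw [hax x2 h1 h2] at h3
    have e1 : swp φ (φ b) (φ u) (chn G φ (φ b) (φ u) b : Set V) x = φ b := by simp [swp, hxK, hxb]
    rw [e1] at h3
    by_cases hbb : b2 = b
    · subst hbb
      simp [swp, hbK] at h3
      exact huB _ hb h3.symm
    · have hb2K : b2 ∉ chn G φ (φ b) (φ u) b := by
        intro h
        rcases hcol b2 h with h | h
        · exact hbb (H.rain hφ hb hb2 h)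
        · exact huB b2 hb2 h.symm
      simp [swp, hb2K] at h3
      exact hbb (H.rain hφ hb hb2 h3.symm)
  refine ⟨hxK, ?_⟩
  by_contra huK
  have := H.sUniq hA hB hP hb hx hu (by simp [swp, hxK, hbK, hxb]) (by simp [swp, huK, hbK])
  subst this
  exact huK hxK

theorem HK.tuple (H : HK G 4 s A B P) (hA : A.card = 2) (hB : B.card = 2) {x a b u : V}
    (hx : G.Adj s x) (ha : a ∈ A) (hax1 : G.Adj a x) (hax : ∀ x', G.Adj s x' → G.Adj a x' → x' = x) (hb : b ∈ B)
    (hu : G.Adj s u) (n : ℕ) : ∀ φ, P φ → φ x = φ b → φ u ≠ φ s → (∀ b ∈ B, φ u ≠ φ b) →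
    (Finset.univ.filter (fun v => φ v = φ b ∨ φ v = φ u)).card = n →
    (∀ p q, G.Adj u p → G.Adj u q → φ p = φ b → φ q = φ b → p = q) → False := by
  induction n using Nat.strong_induction_on with
  | _ n ih =>
  intro φ hφ hxb hus huB hn hun
  have hp := H.prop hφ
  obtain ⟨hxK, huK⟩ := H.caseI hA hB hφ hx ha hax hb hxb hu hus huB
  have hbx : b ≠ x := by rintro rfl; exact (H.Bn hb).2 hx
  have hbu : b ≠ u := by rintro rfl; exact (H.Bn hb).2 hu
  have hxu : x ≠ u := by rintro rfl; exact huB b hb hxb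
  obtain ⟨v, f, v1, v2, v3, vc, f1, f2, hf⟩ := chain3 (fun v => (H.reg v).le) hp (Or.inl rfl) hxK huK hbx hbu hxu (by
    rintro v (rfl | rfl | rfl) p q h1 h2 h3 h4
    · rcases h3 with h3 | h3
      · exact absurd h3.symm (hp h1)
      · exact H.bUniq hA hB hφ hb h2 h1 h4 (by rw [h3]; exact hus)
    · rcases h3 with h3 | h3
      · exact absurd (hxb.trans h3.symm) (hp h1)
      · exact H.nUniq hA hB hφ hx ha hax1 h2 h1 h4 (by rw [h3]; exact hus)
    · rcases h3 with h3 | h3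
      · exact hun q p h2 h1 (h4.trans h3) h3
      · exact absurd h3.symm (hp h1))
  have hvs : s ≠ v := by
    rintro rfl
    rcases vc with h | h
    · exact H.nob hφ b hb h.symm
    · exact hus h.symm
  have hvB : ∀ b' ∈ B, b' ≠ v := by
    rintro b' hb' rfl
    rcases vc with h | h
    · exact v1 (H.rain hφ hb hb' h)
    · exact huB b' hb' h.symm
  have hP := H.upd hφ hf
  have ub : Function.update φ v f b = φ b := Function.update_of_ne v1.symm ..
  have uu : Function.update φ v f u = φ u := Function.update_of_ne v3.symm ..
  have ux : Function.update φ v f x = φ x := Function.update_of_ne v2.symm ..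
  have us : Function.update φ v f s = φ s := Function.update_of_ne hvs ..
  refine ih _ ?_ _ hP (by rw [ux, ub]; exact hxb) (by rw [uu, us]; exact hus) ?_ rfl ?_
  · rw [← hn, ub, uu]
    apply Finset.card_lt_card
    refine ⟨fun z hz => ?_, fun h => ?_⟩
    · rw [Finset.mem_filter] at hz ⊢
      refine ⟨hz.1, ?_⟩
      by_cases hzv : z = v
      · rw [hzv]; exact vc
      · have := hz.2
        rwa [Function.update_of_ne hzv] at this
    · have := h (Finset.mem_filter.2 ⟨Finset.mem_univ v, vc⟩)
      rw [Finset.mem_filter, Function.update_self] at this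
      tauto
  · intro b' hb'
    rw [uu, Function.update_of_ne (hvB b' hb')]
    exact huB b' hb'
  · intro p q h1 h2 h3 h4
    rw [ub] at h3 h4
    have : ∀ z, Function.update φ v f z = φ b → φ z = φ b := by
      intro z hz
      by_cases hzv : z = v
      · rw [hzv, Function.update_self] at hz; exact absurd hz f1
      · rwa [Function.update_of_ne hzv] at hz
    exact hun p q h1 h2 (this p h3) (this q h4)

theorem HK.nbr2 (H : HK G 4 s A B P) (hA : A.card = 2) (hB : B.card = 2) {φ : V → Fin 4} (hφ : P φ) {a : V} (ha : a ∈ A) :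
    ∃ x y, x ≠ y ∧ G.Adj s x ∧ G.Adj a x ∧ G.Adj s y ∧ G.Adj a y := by
  have hc : A.card ≤ B.card := by omega
  have hp := H.prop hφ
  by_contra hno
  obtain ⟨b, hb, _, _, x, hx, hax, hxb⟩ := H.wit' hc hφ ha
  have hax' : ∀ x', G.Adj s x' → G.Adj a x' → x' = x := by
    intro x' h1 h2
    by_contra hne
    exact hno ⟨x', x, hne, h1, h2, hx, hax⟩
  obtain ⟨b', hb', hbb⟩ := Finset.exists_mem_ne (by omega : 1 < B.card) b
  obtain ⟨a', ha', _, hfa', x', hx', hax2, hxb'⟩ := H.wit hφ hb'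
  obtain ⟨g, hg1, hg2⟩ := H.gam hB hφ
  obtain ⟨u, w, hu, hw, ue, we, huw⟩ := H.two hc hA hφ hg1 hg2
  by_cases hcu : ∀ p q, G.Adj u p → G.Adj u q → φ p = φ b → φ q = φ b → p = q
  · exact H.tuple hA hB hx ha hax hax' hb hu _ φ hφ hxb (by rw [ue]; exact hg1) (by rw [ue]; exact hg2) rfl hcu
  push Not at hcu
  obtain ⟨p, q, hup, huq, hpb, hqb, hpq⟩ := hcu
  by_cases hy : ∀ y, G.Adj s y → G.Adj a' y → y = x'
  · refine H.tuple hA hB hx' ha' hax2 hy hb' hu _ φ hφ hxb' (by rw [ue]; exact hg1) (by rw [ue]; exact hg2) rfl ?_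
    intro p' q' h1 h2 h3 h4
    refine full_inj (H.reg u).le (H.fullN hA hB hφ hu) hup huq hpq (hpb.trans hqb.symm) h1 h2 ?_ ?_ (h3.trans h4.symm)
    · rintro rfl; exact hbb (H.rain hφ hb hb' (h3.symm.trans hpb))
    · rintro rfl; exact hbb (H.rain hφ hb hb' (h4.symm.trans hpb))
  push Not at hy
  obtain ⟨y, hy1, hy2, hy3⟩ := hy
  have hb'x : b' ≠ x' := by rintro rfl; exact (H.Bn hb').2 hx'
  have hyb' : y ≠ b' := by rintro rfl; exact (H.Bn hb').2 hy1
  have hinj : ∀ r, G.Adj a' r → r ≠ b' → φ y = φ r → y = r := fun r h1 h2 h3 =>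
    full_inj (H.reg a').le hfa' (H.adj a' ha' b' hb') hax2 hb'x hxb'.symm hy2 h1 hyb' h2 h3
  have hys : φ y ≠ φ s := (hp hy1).symm
  refine H.tuple hA hB hx ha hax hax' hb hy1 _ φ hφ hxb hys ?_ rfl ?_
  · intro b'' hb'' e
    rcases two_mem hB hb hb' hbb hb'' with rfl | rfl
    · have := hinj _ (H.adj a' ha' _ hb'') hbb.symm e
      subst this
      exact (H.Bn hb'').2 hy1
    · exact hy3 (hinj x' hax2 hb'x.symm (e.trans hxb'.symm))
  · intro p q h1 h2 h3 h4
    exact H.nUniq hA hB hφ hy1 ha' hy2 h1 h2 (h3.trans h4.symm) (by rw [h4]; exact H.nob hφ b hb)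

theorem HK.final (H : HK G 4 s A B P) {P' : (V → Fin 4) → Prop} (H' : HK G 4 s B A P') (hA : A.card = 2) (hB : B.card = 2)
    {φ ψ : V → Fin 4} (hφ : P φ) (hψ : P' ψ) : False := by
  obtain ⟨b1, b2, h12, hB12⟩ := Finset.card_eq_two.1 hB
  have hb1 : b1 ∈ B := by rw [hB12]; simp
  have hb2 : b2 ∈ B := by rw [hB12]; simp
  obtain ⟨x1, y1, n1, hx1, hbx1, hy1, hby1⟩ := H'.nbr2 hB hA hψ hb1
  obtain ⟨x2, y2, n2, hx2, hbx2, hy2, hby2⟩ := H'.nbr2 hB hA hψ hb2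
  have disj : ∀ z, G.Adj s z → G.Adj b1 z → G.Adj b2 z → False := by
    intro z hz h1 h2
    have hc : B.card ≤ A.card := by omega
    have e1 := H'.mono hc hψ hb1
    have e2 := H'.mono hc hψ hb2
    exact h12 (full_inj (H'.reg z).le (H'.fullN hB hA hψ hz) hz.symm h1.symm (H'.An hb1).1.symm e1.symm
      h1.symm h2.symm (H'.An hb1).1 (H'.An hb2).1 (e1.trans e2.symm))
  have hsub : ({x1, y1, x2, y2} : Finset V) ⊆ nb G s := by
    intro z hz; simp at hz; rcases hz with rfl | rfl | rfl | rfl <;> simpa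
  have hcard : ({x1, y1, x2, y2} : Finset V).card = 4 := by
    have e1 : x1 ≠ x2 := by rintro rfl; exact disj _ hx1 hbx1 hbx2
    have e2 : x1 ≠ y2 := by rintro rfl; exact disj _ hx1 hbx1 hby2
    have e3 : y1 ≠ x2 := by rintro rfl; exact disj _ hy1 hby1 hbx2
    have e4 : y1 ≠ y2 := by rintro rfl; exact disj _ hy1 hby1 hby2
    rw [Finset.card_insert_of_notMem (by simp [n1, e1, e2]), Finset.card_insert_of_notMem (by simp [e3, e4]),
      Finset.card_pair n2]
  have heq := Finset.eq_of_subset_of_card_le hsub (by rw [hcard, H.reg])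
  obtain ⟨a, ha, _, _, x, hx, hax, hxb⟩ := H.wit hφ hb1
  have hno := fun b' (hb' : b' ∈ B) => H.noB hA hB hφ hx ha hax hb1 hxb hb'
  have hxm : x ∈ nb G s := mem_nb.2 hx
  rw [← heq] at hxm
  simp only [Finset.mem_insert, Finset.mem_singleton] at hxm
  rcases hxm with rfl | rfl | rfl | rfl
  · exact hno b1 hb1 hbx1.symm
  · exact hno b1 hb1 hby1.symm
  · exact hno b2 hb2 hbx2.symm
  · exact hno b2 hb2 hby2.symm
end

section
variable [Fintype V] {G : SimpleGraph V} {k : ℕ} {s : V}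

/-- the vertices reached by recolourings: `A` for a class -/
noncomputable def SA (G : SimpleGraph V) {k : ℕ} (s : V) (α : V → Fin k) : Finset V :=
  Finset.univ.filter (fun y => D2 G s y ∧ ∃ φ, KE G ∅ α φ ∧ φ y = φ s)

noncomputable def SB (G : SimpleGraph V) {k : ℕ} (s : V) (α : V → Fin k) : Finset V :=
  Finset.univ.filter (fun y => D2 G s y ∧ ¬ ∃ φ, KE G ∅ α φ ∧ φ y = φ s)

theorem mem_SA {α : V → Fin k} {y : V} : y ∈ SA G s α ↔ D2 G s y ∧ ∃ φ, KE G ∅ α φ ∧ φ y = φ s := by simp [SA]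
theorem mem_SB {α : V → Fin k} {y : V} : y ∈ SB G s α ↔ D2 G s y ∧ ¬ ∃ φ, KE G ∅ α φ ∧ φ y = φ s := by simp [SB]

theorem same_pair (hdeg : ∀ v, (nb G v).card ≤ k) (hs : ∀ y, y ≠ s → Cn2 G s y) {y : V} (hy : D2 G s y)
    {α β : V → Fin k} (ha : IsProperColoring G k α) (hb : IsProperColoring G k β) (h1 : α y = α s) (h2 : β y = β s) :
    KE G ∅ α β := by
  obtain ⟨hys, _, x, hsx, hxy⟩ := hy
  have hperm := KE.perm (G := G) (Equiv.swap (β s) (α s)) β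
  have hb' := hperm.proper hb
  refine KE.trans (KE.zero (slack_equiv (slack_pair hdeg (hs y hys) hys hsx hxy h1.symm) ha hb' ?_)) hperm.symm
  intro v hv
  simp only [Finset.mem_insert, Finset.mem_singleton] at hv
  rcases hv with rfl | rfl
  · simp
  · simp [h1, h2]

theorem to_pair {y : V} (hy : D2 G s y) {φ : V → Fin k} (hp : IsProperColoring G k φ) :
    ∃ ψ z, KE G ∅ φ ψ ∧ D2 G s z ∧ ψ z = ψ s := by
  by_cases hz : ∃ z, D2 G s z ∧ φ z = φ s
  · obtain ⟨z, h1, h2⟩ := hz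
    exact ⟨φ, z, KE.rfl, h1, h2⟩
  obtain ⟨S, hS⟩ : ∃ S : Set V, ∀ x, x ∈ S ↔ (x = s ∨ (G.Adj s x ∧ φ x = φ y)) :=
    ⟨{x | x = s ∨ (G.Adj s x ∧ φ x = φ y)}, fun _ => Iff.rfl⟩
  have hP := Stp.swp (G := G) (F := ∅) (c := φ) (φ s) (φ y) S (by simp) (by
    intro v hv
    rcases (hS v).1 hv with rfl | h
    · exact Or.inl rfl
    · exact Or.inr h.2) (by
    intro v hv u hvu hu
    rcases (hS v).1 hv with rfl | h
    · rcases hu with hu | hu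
      · exact absurd hu.symm (hp hvu)
      · exact (hS u).2 (Or.inr ⟨hvu, hu⟩)
    · rcases hu with hu | hu
      · by_cases hus : u = s
        · exact (hS u).2 (Or.inl hus)
        · exfalso
          have hnu : ¬ G.Adj s u := fun h' => hp h' hu.symm
          exact hz ⟨u, ⟨hus, hnu, v, h.1, hvu⟩, hu⟩
      · exact absurd (hu.trans h.2.symm).symm (hp hvu))
  refine ⟨_, y, hP.ke, hy, ?_⟩
  have hbS : y ∉ S := fun h => by
    rcases (hS y).1 h with h | h
    · exact hy.1 h
    · exact hy.2.1 h.1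
  have hsS : s ∈ S := (hS s).2 (Or.inl rfl)
  simp [swp, hbS, hsS]

theorem mkHK (hk : 4 ≤ k) (hreg : ∀ v, (nb G v).card = k) (hs : ∀ y, y ≠ s → Cn2 G s y)
    (hcl : ∀ s : Finset V, (∀ u ∈ s, ∀ v ∈ s, u ≠ v → G.Adj u v) → s.card < k)
    {α : V → Fin k} (ha : IsProperColoring G k α) : HK G k s (SA G s α) (SB G s α) (fun φ => KE G ∅ α φ) where
  reg := hreg
  prop := fun h => h.proper ha
  step := fun h h' => h.trans h'.ke
  n2 := by
    intro v; rw [mem_SA, mem_SB, ← and_or_left, and_iff_left (em _)]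
  nob := by
    intro φ hφ b hb h
    exact (mem_SB.1 hb).2 ⟨φ, hφ, h⟩
  adj := by
    intro a haA b hbB
    by_contra hab
    obtain ⟨h2, hno⟩ := mem_SB.1 hbB
    obtain ⟨h1, φ, hφ, hφa⟩ := mem_SA.1 haA
    obtain ⟨c, e, hc, hce⟩ := indep_mono hk G (fun v => (hreg v).le) hcl {s, a, b} (by
      intro u hu v hv huv
      simp only [Finset.mem_insert, Finset.mem_singleton] at hu hv
      have n1 := h1.2.1
      have n2 := h2.2.1
      rcases hu with rfl | rfl | rfl <;> rcases hv with rfl | rfl | rfl <;>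
        first
        | exact G.loopless.irrefl _ huv
        | exact n1 huv
        | exact n2 huv
        | exact hab huv
        | exact n1 huv.symm
        | exact n2 huv.symm
        | exact hab huv.symm)
    have e1 := hce s (by simp)
    have e2 := hce a (by simp)
    have e3 := hce b (by simp)
    exact hno ⟨c, hφ.trans (same_pair (fun v => (hreg v).le) hs h1 (hφ.proper ha) hc hφa (e2.trans e1.symm)),
      e3.trans e1.symm⟩

theorem HK.absurd_all (hk : 4 ≤ k) {A B : Finset V} {P P' : (V → Fin k) → Prop} (H : HK G k s A B P) (H' : HK G k s B A P')
    (h2c : ∀ i j, G.Adj i j → Cn2 G i j) (hB : B.Nonempty) {φ ψ : V → Fin k} (hφ : P φ) (hψ : P' ψ) : False := by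
  have h1 := H.card_le hφ
  have h2 := H'.card_le hψ
  have hpos := Finset.card_pos.2 hB
  rcases Nat.lt_or_ge A.card 2 with h | h
  · obtain ⟨a, rfl⟩ := Finset.card_eq_one.1 (by omega : A.card = 1)
    obtain ⟨b, rfl⟩ := Finset.card_eq_one.1 (by omega : B.card = 1)
    exact HK.one hk H (h2c a b (H.adj a (by simp) b (by simp))) hφ
  · have hA2 : A.card = 2 := le_antisymm (H.le_two h2 h hφ) h
    obtain ⟨b, b', _, hBb⟩ := Finset.card_eq_two.1 (by omega : B.card = 2)
    have hk4 := H.k4 h2 hA2 hφ hBb hk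
    subst hk4
    exact H.final H' hA2 (by omega) hφ hψ

theorem step2 [Nonempty V] (hk : 4 ≤ k) (hreg : ∀ v, (nb G v).card = k) (hcn : Cn G) (hnc : NoCut G)
    (h2c : ∀ i j, G.Adj i j → Cn2 G i j) (hnt : ∃ u v, u ≠ v ∧ ¬ G.Adj u v)
    (hcl : ∀ s : Finset V, (∀ u ∈ s, ∀ v ∈ s, u ≠ v → G.Adj u v) → s.card < k)
    {α β : V → Fin k} (ha : IsProperColoring G k α) (hb : IsProperColoring G k β) : KE G ∅ α β := by
  have hdeg : ∀ v, (nb G v).card ≤ k := fun v => (hreg v).le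
  obtain ⟨s, hs⟩ := good_vertex hcn hnc (fun v => by rw [hreg v]; omega)
  obtain ⟨y, x, hy1, hy2, hx1, hx2⟩ := exists_dist2 hcn hreg hnt s
  have hy : D2 G s y := ⟨hy1, hy2, x, hx1, hx2⟩
  have H := mkHK (s := s) hk hreg hs hcl ha
  rcases (SB G s α).eq_empty_or_nonempty with hBe | ⟨b0, hb0⟩
  · obtain ⟨β', z, h1, h2, h3⟩ := to_pair hy hb
    have hzA : z ∈ SA G s α := by
      rcases (H.n2 z).1 h2 with h | h
      · exact h
      · rw [hBe] at h; simp at h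
    obtain ⟨_, φ, hφ, hφz⟩ := mem_SA.1 hzA
    exact hφ.trans ((same_pair hdeg hs h2 (hφ.proper ha) (h1.proper hb) hφz h3).trans h1.symm)
  · exfalso
    obtain ⟨hb0D, hb0n⟩ := mem_SB.1 hb0
    obtain ⟨ψ, e, hψ, hψe⟩ := indep_mono hk G hdeg hcl {s, b0} (by
      intro u hu v hv huv
      simp only [Finset.mem_insert, Finset.mem_singleton] at hu hv
      have n1 := hb0D.2.1
      rcases hu with rfl | rfl <;> rcases hv with rfl | rfl <;>
        first
        | exact G.loopless.irrefl _ huv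
        | exact n1 huv
        | exact n1 huv.symm)
    have hψ0 : ψ b0 = ψ s := (hψe b0 (by simp)).trans (hψe s (by simp)).symm
    have H' := mkHK (s := s) hk hreg hs hcl hψ
    have hdis : ∀ z, z ∈ SA G s ψ → z ∈ SB G s α := by
      intro z hz
      obtain ⟨hz1, φ', hφ', hφz'⟩ := mem_SA.1 hz
      refine mem_SB.2 ⟨hz1, ?_⟩
      rintro ⟨φ, hφ, hφz⟩
      exact hb0n ⟨ψ, hφ.trans ((same_pair hdeg hs hz1 (hφ.proper ha) (hφ'.proper hψ) hφz hφz').trans hφ'.symm), hψ0⟩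
    have hsub2 : SA G s α ⊆ SB G s ψ := by
      intro z hz
      have hz1 := mem_SA.1 hz
      rcases (H'.n2 z).1 hz1.1 with h | h
      · exact absurd hz1.2 (mem_SB.1 (hdis z h)).2
      · exact h
    have c1 := H.card_le KE.rfl
    have c2 := H'.card_le KE.rfl
    have c3 := Finset.card_le_card hsub2
    have c4 := Finset.card_le_card (show SA G s ψ ⊆ SB G s α from hdis)
    have e1 : SA G s α = SB G s ψ := Finset.eq_of_subset_of_card_le hsub2 (by omega)
    have e2 : SA G s ψ = SB G s α := Finset.eq_of_subset_of_card_le hdis (by omega)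
    rw [← e1, e2] at H'
    exact H.absurd_all hk H' h2c ⟨b0, hb0⟩ KE.rfl KE.rfl

theorem main_ke [Nonempty V] (hk : 4 ≤ k) (hreg : ∀ v, (nb G v).card = k) (hcn : Cn G)
    (hnt : ∃ u v, u ≠ v ∧ ¬ G.Adj u v)
    {α β : V → Fin k} (ha : IsProperColoring G k α) (hb : IsProperColoring G k β) : KE G ∅ α β := by
  have hdeg : ∀ v, (nb G v).card ≤ k := fun v => (hreg v).le
  by_cases hnc : NoCut G
  swap
  · unfold NoCut at hnc
    push Not at hnc
    obtain ⟨x, T, hT, hx, hcl, v, hv, hvx⟩ := hnc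
    have hcut : CutData G {x} T {w | w ∉ T ∧ w ≠ x} := by
      refine ⟨?_, ?_, ?_, ?_, ?_, ?_, hT, ⟨v, hv, hvx⟩⟩
      · intro w
        by_cases h1 : w = x
        · exact Or.inl h1
        by_cases h2 : w ∈ T
        · exact Or.inr (Or.inl h2)
        · exact Or.inr (Or.inr ⟨h2, h1⟩)
      · rintro w rfl; exact hx
      · rintro w rfl h; exact h.2 rfl
      · intro w hw h; exact h.1 hw
      · rintro u rfl w rfl h; exact absurd rfl h
      · intro u hu w hw huw
        rcases hcl u hu w huw with h | h
        · exact hw.1 h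
        · exact hw.2 h
    exact clique_cut hcut hcn hdeg ha hb
  by_cases h2c : ∀ i j, G.Adj i j → Cn2 G i j
  swap
  · unfold Cn2 at h2c
    push Not at h2c
    obtain ⟨i, j, hij, T, hT, hi, hj, hcl, v, hv, hvi, hvj⟩ := h2c
    have hcut : CutData G {i, j} T {w | w ∉ T ∧ w ≠ i ∧ w ≠ j} := by
      refine ⟨?_, ?_, ?_, ?_, ?_, ?_, hT, ⟨v, hv, hvi, hvj⟩⟩
      · intro w
        by_cases h1 : w = i
        · exact Or.inl (Or.inl h1)
        by_cases h3 : w = j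
        · exact Or.inl (Or.inr h3)
        by_cases h2 : w ∈ T
        · exact Or.inr (Or.inl h2)
        · exact Or.inr (Or.inr ⟨h2, h1, h3⟩)
      · rintro w (rfl | rfl)
        · exact hi
        · exact hj
      · rintro w (rfl | rfl) h
        · exact h.2.1 rfl
        · exact h.2.2 rfl
      · intro w hw h; exact h.1 hw
      · rintro u (rfl | rfl) w (rfl | rfl) h
        · exact absurd rfl h
        · exact hij
        · exact hij.symm
        · exact absurd rfl h
      · intro u hu w hw huw
        rcases hcl u hu w huw with h | h | h
        · exact hw.1 h
        · exact hw.2.1 h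
        · exact hw.2.2 h
    exact clique_cut hcut hcn hdeg ha hb
  by_cases hcl : ∀ s : Finset V, (∀ u ∈ s, ∀ v ∈ s, u ≠ v → G.Adj u v) → s.card < k
  · exact step2 hk hreg hcn hnc h2c hnt hcl ha hb
  · push Not at hcl
    obtain ⟨S, hS, hSk⟩ := hcl
    obtain ⟨Q, hQS, hQk⟩ := Finset.exists_subset_card_eq hSk
    obtain ⟨u, hu⟩ := QD.mk' (by omega) hreg hQk (fun a ha b hb => hS a (hQS ha) b (hQS hb))
    exact hu.main hk hdeg h2c ha hb
end

/-- For every integer `k ≥ 4`, if `G` is a connected non-complete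
`k`-regular graph, then the set of `k`-colourings of `G` is a Kempe class. -/
theorem stmt0 {V : Type*} [Fintype V] (k : ℕ) (hk : 4 ≤ k) (G : SimpleGraph V)
    [DecidableRel G.Adj] (hreg : G.IsRegularOfDegree k) (hconn : G.Connected)
    (hnc : G ≠ ⊤) : KempeClass G k := by
  intro c c' hc hc'
  have := hconn.nonempty
  refine KE.kempe (main_ke hk ?_ (Cn.of_connected hconn) ?_ hc hc')
  · intro v
    rw [← hreg v, ← SimpleGraph.card_neighborFinset_eq_degree]
    congr 1
    ext u; simp
  · by_contra hno
    push Not at hno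
    apply hnc
    ext u v
    simp only [SimpleGraph.top_adj]
    exact ⟨fun h => h.ne, hno u v⟩
end

section
/- Let k be a positive integer and let G1, G2 be graphs whose intersection G1 ∩ G2 is a complete graph. If the set of proper k-colourings of G1 is a Kempe class and the set of proper k-colourings of G2 is a Kempe class, then the set of proper k-colourings of G1 ∪ G2 is a Kempe class. -/
open SimpleGraph
open scoped Classical

variable {V : Type*}

open scoped Classical in
/-- Swap `a` and `b` on `S`. -/
noncomputable def swapOn {W : Type*} {k : ℕ} (a b : Fin k) (S : Set W) (c : W → Fin k) : W → Fin k :=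
  fun v => if v ∈ S then Equiv.swap a b (c v) else c v

/-- `S` is a union of `a,b`-components. -/
def ABClosed {W : Type*} {k : ℕ} (G : SimpleGraph W) (c : W → Fin k) (a b : Fin k) (S : Set W) : Prop :=
  ∀ x y, G.Adj x y → (c x = a ∨ c x = b) → (c y = a ∨ c y = b) → x ∈ S → y ∈ S

lemma swap_mem_iff {k : ℕ} (a b x : Fin k) :
    (Equiv.swap a b x = a ∨ Equiv.swap a b x = b) ↔ (x = a ∨ x = b) := by
  rw [Equiv.swap_apply_def]; split_ifs <;> simp_all

lemma swapOn_mem_iff {W : Type*} {k : ℕ} (a b : Fin k) (S : Set W) (c : W → Fin k) (v : W) :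
    (swapOn a b S c v = a ∨ swapOn a b S c v = b) ↔ (c v = a ∨ c v = b) := by
  unfold swapOn
  split_ifs
  · exact swap_mem_iff _ _ _
  · rfl

/-- The `a,b`-component of `v0`. -/
def abComp {W : Type*} {k : ℕ} (G : SimpleGraph W) (c : W → Fin k) (a b : Fin k)
    (v0 : {x : W | c x = a ∨ c x = b}) : Set W :=
  {v | ∃ h : c v = a ∨ c v = b, (G.induce {x : W | c x = a ∨ c x = b}).Reachable v0 ⟨v, h⟩}

lemma abComp_closed {W : Type*} {k : ℕ} (G : SimpleGraph W) (c : W → Fin k) (a b : Fin k)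
    (v0 : {x : W | c x = a ∨ c x = b}) : ABClosed G c a b (abComp G c a b v0) := by
  rintro x y hxy hx hy ⟨h, hr⟩
  refine ⟨hy, hr.trans (SimpleGraph.Adj.reachable ?_)⟩
  simpa using hxy

lemma abComp_subset {W : Type*} {k : ℕ} (G : SimpleGraph W) (c : W → Fin k) (a b : Fin k)
    (v0 : {x : W | c x = a ∨ c x = b}) (S : Set W) (hS : ABClosed G c a b S)
    (h0 : (v0 : W) ∈ S) : abComp G c a b v0 ⊆ S := by
  rintro v ⟨h, ⟨p⟩⟩
  have key : ∀ (u w : {x : W | c x = a ∨ c x = b}),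
      (G.induce {x : W | c x = a ∨ c x = b}).Walk u w → (u : W) ∈ S → (w : W) ∈ S := by
    intro u w p
    induction p with
    | nil => exact id
    | @cons u v w hadj p ih =>
      intro hu
      exact ih (hS u v (by simpa using hadj) u.2 v.2 hu)
  exact key _ _ p h0

lemma step_eq {W : Type*} {k : ℕ} (G : SimpleGraph W) (c c' : W → Fin k) (a b : Fin k)
    (v0 : {x : W | c x = a ∨ c x = b}) :
    (∀ v : W, c' v =
      if h : c v = a ∨ c v = b then
        if (G.induce {x : W | c x = a ∨ c x = b}).Reachable v0 ⟨v, h⟩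
          then Equiv.swap a b (c v) else c v
      else c v) ↔ c' = swapOn a b (abComp G c a b v0) c := by
  rw [funext_iff]
  refine forall_congr' fun v => ?_
  by_cases h : c v = a ∨ c v = b
  · by_cases h2 : (G.induce {x : W | c x = a ∨ c x = b}).Reachable v0 ⟨v, h⟩
    · have : v ∈ abComp G c a b v0 := ⟨h, h2⟩
      rw [dif_pos h, if_pos h2, swapOn, if_pos this]
    · have : v ∉ abComp G c a b v0 := fun ⟨_, h'⟩ => h2 h'
      rw [dif_pos h, if_neg h2, swapOn, if_neg this]
  · have : v ∉ abComp G c a b v0 := fun ⟨h', _⟩ => h h'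
    rw [dif_neg h, swapOn, if_neg this]

lemma step_imp {W : Type*} {k : ℕ} (G : SimpleGraph W) (c c' : W → Fin k)
    (h : KempeStep G k c c') : ∃ a b, ∃ K : Set W, (∀ x ∈ K, c x = a ∨ c x = b) ∧
      ABClosed G c a b K ∧ c' = swapOn a b K c := by
  obtain ⟨a, b, v0, h⟩ := h
  exact ⟨a, b, abComp G c a b v0, fun x hx => hx.1, abComp_closed _ _ _ _ _,
    (step_eq _ _ _ _ _ _).1 h⟩

lemma swapOn_equiv {W : Type*} [Finite W] {k : ℕ} (G : SimpleGraph W) (a b : Fin k) (n : ℕ) :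
    ∀ (c : W → Fin k) (S : Set W), (S ∩ {x | c x = a ∨ c x = b}).ncard = n →
      ABClosed G c a b S → KempeEquiv G k c (swapOn a b S c) := by
  induction n using Nat.strong_induction_on with
  | _ n ih =>
  intro c S hn hS
  by_cases hne : ∃ v0 ∈ S, c v0 = a ∨ c v0 = b
  · obtain ⟨v0, hv0, hab⟩ := hne
    set K := abComp G c a b ⟨v0, hab⟩ with hK
    have hv0K : v0 ∈ K := ⟨hab, SimpleGraph.Reachable.refl _⟩
    have hKS : K ⊆ S := abComp_subset _ _ _ _ _ _ hS hv0
    have hKc : ABClosed G c a b K := abComp_closed _ _ _ _ _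
    have hst : KempeStep G k c (swapOn a b K c) := ⟨a, b, ⟨v0, hab⟩, (step_eq _ _ _ _ _ _).2 rfl⟩
    refine Relation.ReflTransGen.head hst ?_
    have heq : swapOn a b S c = swapOn a b (S \ K) (swapOn a b K c) := by
      funext v
      by_cases h1 : v ∈ K
      · simp [swapOn, h1, hKS h1]
      · simp [swapOn, h1]
    rw [heq]
    refine ih _ ?_ _ _ rfl ?_
    · rw [← hn]
      apply Set.ncard_lt_ncard _ (Set.toFinite _)
      constructor
      · rintro x ⟨⟨h1, _⟩, h2⟩
        exact ⟨h1, (swapOn_mem_iff _ _ _ _ _).1 h2⟩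
      · intro h
        exact (h ⟨hv0, hab⟩).1.2 hv0K
    · intro x y hxy hx hy hxS
      rw [swapOn_mem_iff] at hx hy
      exact ⟨hS x y hxy hx hy hxS.1, fun h => hxS.2 (hKc y x hxy.symm hy hx h)⟩
  · have : swapOn a b S c = c := by
      funext v
      unfold swapOn
      split_ifs with h
      · have := not_or.1 (fun h' => hne ⟨v, h, h'⟩)
        exact Equiv.swap_apply_of_ne_of_ne this.1 this.2
      · rfl
    rw [this]
    exact Relation.ReflTransGen.refl

/-- A Kempe step in an induced subgraph, after recolouring by `π`, with sets moved to `V`. -/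
lemma step_imp_induce {V : Type*} {k : ℕ} (G : SimpleGraph V) (V1 : Set V) (d d' : V1 → Fin k)
    (c : V → Fin k) (π : Equiv.Perm (Fin k)) (hc : ∀ v : V1, c v = π (d v))
    (h : KempeStep (G.induce V1) k d d') : ∃ a b, ∃ K : Set V, K ⊆ V1 ∧
      (∀ x ∈ K, c x = a ∨ c x = b) ∧
      (∀ x y, G.Adj x y → y ∈ V1 → (c y = a ∨ c y = b) → x ∈ K → y ∈ K) ∧
      ∀ v : V1, π (d' v) = swapOn a b K c v := by
  obtain ⟨a, b, K, hK, hcl, rfl⟩ := step_imp _ _ _ h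
  refine ⟨π a, π b, Subtype.val '' K, by simp, ?_, ?_, ?_⟩
  · rintro _ ⟨x, hx, rfl⟩
    simpa [hc] using hK x hx
  · rintro _ y hxy hy hy' ⟨x, hx, rfl⟩
    refine ⟨⟨y, hy⟩, hcl x ⟨y, hy⟩ (by simpa using hxy) (hK x hx) ?_ hx, rfl⟩
    simpa [hc ⟨y, hy⟩] using hy'
  · intro v
    have : ((v : V) ∈ Subtype.val '' K) ↔ v ∈ K := by simp
    unfold swapOn
    simp only [this, hc]
    split_ifs
    · simp [Equiv.swap_apply_def]; split_ifs <;> rfl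
    · rfl

lemma lift1 {V : Type*} [Finite V] {k : ℕ} (G : SimpleGraph V)
    (V1 V2 : Set V) (hcover : V1 ∪ V2 = Set.univ)
    (hedges : ∀ x y : V, G.Adj x y → (x ∈ V1 ∧ y ∈ V1) ∨ (x ∈ V2 ∧ y ∈ V2))
    (hcomplete : ∀ x ∈ V1 ∩ V2, ∀ y ∈ V1 ∩ V2, x ≠ y → G.Adj x y)
    (d d' : V1 → Fin k) (hd : KempeEquiv (G.induce V1) k d d')
    (c : V → Fin k) (hc : ∀ v : V1, c v = d v) :
    ∃ c', KempeEquiv G k c c' ∧ ∀ v : V1, c' v = d' v := by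
  unfold KempeEquiv at hd
  induction hd with
  | refl => exact ⟨c, Relation.ReflTransGen.refl, hc⟩
  | tail _ hst ih =>
    obtain ⟨e, hce, he⟩ := ih
    obtain ⟨a, b, K, hKV, hK, hcl, hd'⟩ := step_imp_induce G V1 _ _ e 1 he hst
    by_cases hm : ∃ z ∈ K, z ∈ V2
    · obtain ⟨z, hzK, hz2⟩ := hm
      have hclq : ∀ y ∈ V1, y ∈ V2 → (e y = a ∨ e y = b) → y ∈ K := by
        intro y h1 h2 hy
        by_cases hyz : z = y
        · exact hyz ▸ hzK
        · exact hcl z y (hcomplete z ⟨hKV hzK, hz2⟩ y ⟨h1, h2⟩ hyz) h1 hy hzK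
      refine ⟨swapOn a b (K ∪ V1ᶜ) e, hce.trans (swapOn_equiv G a b _ _ _ rfl ?_), ?_⟩
      · intro x y hxy hx hy hxS
        by_cases hy1 : y ∈ V1
        · left
          rcases hxS with h | h
          · exact hcl x y hxy hy1 hy h
          · rcases hedges x y hxy with h' | h'
            · exact absurd h'.1 h
            · exact hclq y hy1 h'.2 hy
        · exact Or.inr hy1
      · intro v
        have := hd' v
        simp only [Equiv.Perm.coe_one, id] at this
        rw [this]
        simp [swapOn]
    · refine ⟨swapOn a b K e, hce.trans (swapOn_equiv G a b _ _ _ rfl ?_), fun v => (hd' v).symm⟩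
      intro x y hxy hx hy hxS
      rcases hedges x y hxy with h' | h'
      · exact hcl x y hxy h'.2 hy hxS
      · exact absurd ⟨x, hxS, h'.1⟩ hm

lemma lift2 {V : Type*} [Finite V] {k : ℕ} (G : SimpleGraph V)
    (V1 V2 : Set V) (hcover : V1 ∪ V2 = Set.univ)
    (hedges : ∀ x y : V, G.Adj x y → (x ∈ V1 ∧ y ∈ V1) ∨ (x ∈ V2 ∧ y ∈ V2))
    (hcomplete : ∀ x ∈ V1 ∩ V2, ∀ y ∈ V1 ∩ V2, x ≠ y → G.Adj x y)
    (d d' : V2 → Fin k) (hd : KempeEquiv (G.induce V2) k d d')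
    (c : V → Fin k) (hc : ∀ v : V2, c v = d v) :
    ∃ c', ∃ π : Equiv.Perm (Fin k), KempeEquiv G k c c' ∧ (∀ v ∈ V1, c' v = c v) ∧
      ∀ v : V2, c' v = π (d' v) := by
  unfold KempeEquiv at hd
  induction hd with
  | refl => exact ⟨c, 1, Relation.ReflTransGen.refl, fun _ _ => rfl, hc⟩
  | tail _ hst ih =>
    obtain ⟨e, π, hce, he1, he⟩ := ih
    obtain ⟨a, b, K, hKV, hK, hcl, hd'⟩ := step_imp_induce G V2 _ _ e π he hst
    by_cases hm : ∃ z ∈ K, z ∈ V1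
    · obtain ⟨z, hzK, hz1⟩ := hm
      have hclq : ∀ y ∈ V1, y ∈ V2 → (e y = a ∨ e y = b) → y ∈ K := by
        intro y h1 h2 hy
        by_cases hyz : z = y
        · exact hyz ▸ hzK
        · exact hcl z y (hcomplete z ⟨hz1, hKV hzK⟩ y ⟨h1, h2⟩ hyz) h2 hy hzK
      refine ⟨swapOn a b (V1ᶜ \ K) e, Equiv.swap a b * π,
        hce.trans (swapOn_equiv G a b _ _ _ rfl ?_), ?_, ?_⟩
      · intro x y hxy hx hy hxS
        have h' := (hedges x y hxy).resolve_left (fun h => hxS.1 h.1)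
        have hyK : y ∉ K := fun h => hxS.2 (hcl y x hxy.symm h'.1 hx h)
        exact ⟨fun h => hyK (hclq y h h'.2 hy), hyK⟩
      · intro v hv
        simp [swapOn, hv, he1 v hv]
      · intro v
        rw [Equiv.Perm.mul_apply, hd' v]
        by_cases hvK : (v : V) ∈ K
        · simp [swapOn, hvK]
        · by_cases hv1 : (v : V) ∈ V1
          · have := not_or.1 (fun h => hvK (hclq v hv1 v.2 h))
            simp [swapOn, hvK, hv1, Equiv.swap_apply_of_ne_of_ne this.1 this.2]
          · simp [swapOn, hvK, hv1]
    · refine ⟨swapOn a b K e, π, hce.trans (swapOn_equiv G a b _ _ _ rfl ?_), ?_,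
        fun v => (hd' v).symm⟩
      · intro x y hxy hx hy hxS
        rcases hedges x y hxy with h' | h'
        · exact absurd ⟨x, hxS, h'.1⟩ hm
        · exact hcl x y hxy h'.2 hy hxS
      · intro v hv
        have : v ∉ K := fun h => hm ⟨v, h, hv⟩
        simp [swapOn, this, he1 v hv]

lemma perm_equiv {V : Type*} [Finite V] {k : ℕ} (G : SimpleGraph V)
    (V1 V2 : Set V)
    (hedges : ∀ x y : V, G.Adj x y → (x ∈ V1 ∧ y ∈ V1) ∨ (x ∈ V2 ∧ y ∈ V2))
    (c : V → Fin k) (n : ℕ) :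
    ∀ π : Equiv.Perm (Fin k), π.support.card = n → (∀ v ∈ V1, v ∈ V2 → π (c v) = c v) →
      KempeEquiv G k c (fun v => if v ∈ V1 then c v else π (c v)) := by
  induction n using Nat.strong_induction_on with
  | _ n ih =>
  intro π hn hπ
  by_cases h : ∃ a, π a ≠ a
  · obtain ⟨a, ha⟩ := h
    have hlt := Equiv.Perm.card_support_swap_mul ha
    have hne : ∀ v ∈ V1, v ∈ V2 → c v ≠ a ∧ c v ≠ π a := by
      intro v h1 h2
      have := hπ v h1 h2
      refine ⟨fun h => ha (h ▸ this), fun h => ha ?_⟩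
      rw [h] at this
      exact π.injective this
    have := ih _ (hn ▸ hlt) (Equiv.swap a (π a) * π) rfl (by
      intro v h1 h2
      rw [Equiv.Perm.mul_apply, hπ v h1 h2]
      exact Equiv.swap_apply_of_ne_of_ne (hne v h1 h2).1 (hne v h1 h2).2)
    have h2 := this.trans (swapOn_equiv G a (π a) _ _ V1ᶜ rfl (by
      intro x y hxy hx hy hxS hy1
      have h' := (hedges x y hxy).resolve_left (fun h => hxS h.1)
      have := hne y hy1 h'.2
      simp only [if_pos hy1] at hy
      tauto))
    unfold KempeEquiv
    convert h2 using 1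
    funext v
    by_cases hv : v ∈ V1 <;> simp [swapOn, hv]
  · push Not at h
    simp only [h, ite_self]
    exact Relation.ReflTransGen.refl

lemma step_proper {W : Type*} {k : ℕ} (G : SimpleGraph W) (c c' : W → Fin k)
    (h : KempeStep G k c c') (hc : IsProperColoring G k c) : IsProperColoring G k c' := by
  obtain ⟨a, b, K, hK, hcl, rfl⟩ := step_imp _ _ _ h
  have key : ∀ u v, G.Adj u v → u ∈ K → v ∉ K → Equiv.swap a b (c u) ≠ c v := by
    intro u v huv hu hv heq
    have h1 := (swap_mem_iff a b (c u)).2 (hK u hu)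
    rw [heq] at h1
    exact hv (hcl u v huv (hK u hu) h1 hu)
  intro u v huv
  unfold swapOn
  split_ifs with h1 h2 h2
  · exact fun h => hc huv ((Equiv.swap a b).injective h)
  · exact key u v huv h1 h2
  · exact (key v u huv.symm h2 h1).symm
  · exact hc huv

lemma equiv_proper {W : Type*} {k : ℕ} (G : SimpleGraph W) (c c' : W → Fin k)
    (h : KempeEquiv G k c c') (hc : IsProperColoring G k c) : IsProperColoring G k c' := by
  unfold KempeEquiv at h
  induction h with
  | refl => exact hc
  | tail _ hst ih => exact step_proper G _ _ hst ih

/-- if `G` is the union of two graphs (on vertex sets `V1`, `V2` covering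
all vertices, every edge lying inside `V1` or inside `V2`) whose intersection
`G[V1 ∩ V2]` is complete, and the proper `k`-colourings of `G[V1]` and of `G[V2]` are
each a Kempe class, then the proper `k`-colourings of `G` form a Kempe class. -/
theorem stmt4 {V : Type*} [Fintype V] (k : ℕ) (hk : 0 < k) (G : SimpleGraph V)
    (V1 V2 : Set V) (hcover : V1 ∪ V2 = Set.univ)
    (hedges : ∀ x y : V, G.Adj x y → (x ∈ V1 ∧ y ∈ V1) ∨ (x ∈ V2 ∧ y ∈ V2))
    (hcomplete : ∀ x ∈ V1 ∩ V2, ∀ y ∈ V1 ∩ V2, x ≠ y → G.Adj x y)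
    (h1 : KempeClass (G.induce V1) k) (h2 : KempeClass (G.induce V2) k) :
    KempeClass G k := by 
  intro α β hα hβ
  obtain ⟨c1, hc1, hc1'⟩ := lift1 G V1 V2 hcover hedges hcomplete (fun v => α v) (fun v => β v)
    (h1 _ _ (fun u v h => hα (by simpa using h)) (fun u v h => hβ (by simpa using h))) α
    (fun _ => rfl)
  have hp : ∀ u v : V2, (G.induce V2).Adj u v → c1 u ≠ c1 v := by
    exact fun u v h => equiv_proper G _ _ hc1 hα (by simpa using h)
  obtain ⟨c2, π, hc2, hc21, hc22⟩ := lift2 G V1 V2 hcover hedges hcomplete (fun v => c1 v)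
    (fun v => β v) (h2 _ _ hp (fun u v h => hβ (by simpa using h))) c1 (fun _ => rfl)
  have h3 := perm_equiv G V1 V2 hedges c2 _ π⁻¹ rfl (by
    intro v h1 h2
    have e1 := hc21 v h1
    have e2 := hc1' ⟨v, h1⟩
    have e3 := hc22 ⟨v, h2⟩
    simp only at e2 e3
    rw [Equiv.Perm.inv_eq_iff_eq, e1, e2, ← e3, e1, e2])
  have := (hc1.trans hc2).trans h3
  unfold KempeEquiv
  convert this using 1
  funext v
  by_cases hv : v ∈ V1
  · rw [if_pos hv, hc21 v hv]; exact (hc1' ⟨v, hv⟩).symm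
  · have hv2 : v ∈ V2 := by
      have : v ∈ V1 ∪ V2 := hcover ▸ Set.mem_univ v
      exact this.resolve_left hv
    rw [if_neg hv, hc22 ⟨v, hv2⟩]; simp
end
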